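/- arXiv:1710.08190 — 3 statements merged into one kernel-verified Lean document; each statement's English description precedes it below -/
import Mathlib

section
/- For every triple (u,v,w) ∈ {0,1}³ with (u,v,w) ≠ (1,1,1), the set of metrics d on the space 2^ℕ = (ℕ → {0,1}) that induce the product topology and for which the metric space (2^ℕ, d) has type (u,v,w), quotiented by the equivalence relation of quasi-symmetric equivalence, has cardinality exactly 2^ℵ₀. -/
open Metric Set
open scoped ENNReal NNReal

noncomputable section

/-- A metric space is doubling if there is `N` such that every closed ball of radius `r`
can be covered by at most `N` closed balls of radius `r / 2`. -/
def IsDoubling (X : Type*) [MetricSpace X] : Prop :=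
  ∃ N : ℕ, ∀ (x : X) (r : ℝ), ∃ c : Finset X, c.card ≤ N ∧
    Metric.closedBall x r ⊆ ⋃ y ∈ c, Metric.closedBall y (r / 2)

/-- Every `δ`-chain is trivial (constant). -/
def IsUniformlyDisconnectedWith (X : Type*) [MetricSpace X] (δ : ℝ) : Prop :=
  ∀ (N : ℕ) (x : ℕ → X),
    (∀ i : ℕ, 1 ≤ i → i ≤ N → dist (x (i - 1)) (x i) ≤ δ * dist (x 0) (x N)) →
    ∀ i ≤ N, x i = x 0

def IsUniformlyDisconnected (X : Type*) [MetricSpace X] : Prop :=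
  ∃ δ : ℝ, 0 < δ ∧ δ < 1 ∧ IsUniformlyDisconnectedWith X δ

/-- `ρ`-uniform perfectness. -/
def IsUniformlyPerfectWith (X : Type*) [MetricSpace X] (ρ : ℝ) : Prop :=
  ∀ (x : X) (r : ℝ), 0 < r → r < Metric.diam (Set.univ : Set X) →
    (Metric.closedBall x r \ Metric.ball x (ρ * r)).Nonempty

def IsUniformlyPerfect (X : Type*) [MetricSpace X] : Prop :=
  ∃ ρ : ℝ, 0 < ρ ∧ ρ ≤ 1 ∧ IsUniformlyPerfectWith X ρ

/-- A metric space has type `(u, v, w) ∈ {0,1}³` (here encoded by `Bool`s) if `u = 1` exactly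
when it is doubling, `v = 1` exactly when it is uniformly disconnected, and `w = 1` exactly
when it is uniformly perfect. -/
def HasType (X : Type*) [MetricSpace X] (u v w : Bool) : Prop :=
  (IsDoubling X ↔ u = true) ∧ (IsUniformlyDisconnected X ↔ v = true) ∧
    (IsUniformlyPerfect X ↔ w = true)

/-- `S_D`: points having no doubling neighborhood. -/
def SD (X : Type*) [MetricSpace X] : Set X :=
  {x : X | ∀ s ∈ nhds x, ¬ IsDoubling ↥s}

/-- `S_UD`: points having no uniformly disconnected neighborhood. -/
def SUD (X : Type*) [MetricSpace X] : Set X :=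
  {x : X | ∀ s ∈ nhds x, ¬ IsUniformlyDisconnected ↥s}

/-- `S_UP`: points having no uniformly perfect neighborhood. -/
def SUP (X : Type*) [MetricSpace X] : Set X :=
  {x : X | ∀ s ∈ nhds x, ¬ IsUniformlyPerfect ↥s}

/-- The ternary correspondence map `T(x) = Σ_{i≥1} 2 x_i / 3^i` (indices shifted to start
at `0`). -/
def cantorT (x : ℕ → Bool) : ℝ :=
  ∑' i : ℕ, 2 * (if x i then (1 : ℝ) else 0) / 3 ^ (i + 1)

/-- A Cantor space: a topological space homeomorphic to the middle-third Cantor set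
(`cantorSet` is Mathlib's middle-third Cantor set in `ℝ`). -/
def IsCantorSpace (X : Type*) [TopologicalSpace X] : Prop :=
  Nonempty (X ≃ₜ ↥cantorSet)

/-- The first index at which `x` and `y` differ. -/
def seqV (x y : ℕ → Bool) : ℕ := sInf {n | x n ≠ y n}

-- The standard ultrametric `e(x,y) = 3^{-(v(x,y)+1)}` on `2^ℕ` (indices starting at `0`,
-- corresponding to `3^{-min{n ≥ 1 : x_n ≠ y_n}}` with indices starting at `1`).
open Classical in
def cantorE (x y : ℕ → Bool) : ℝ :=
  if x = y then 0 else (3 : ℝ)⁻¹ ^ (seqV x y + 1)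

/-- A shrinking sequence: positive, non-increasing, converging to `0`. -/
def IsShrinking (α : ℕ → ℝ) : Prop :=
  (∀ n, 0 < α n) ∧ (∀ m n : ℕ, m ≤ n → α n ≤ α m) ∧
    Filter.Tendsto α Filter.atTop (nhds 0)

-- The distance `d_α(x,y) = α (v(x,y))` associated with a sequence `α`.
open Classical in
def seqDist (α : ℕ → ℝ) (x y : ℕ → Bool) : ℝ :=
  if x = y then 0 else α (seqV x y)

lemma seqV_comm (x y : ℕ → Bool) : seqV x y = seqV y x := by
  unfold seqV
  congr 1
  ext n
  exact ne_comm

lemma seqDist_self (α : ℕ → ℝ) (x : ℕ → Bool) : seqDist α x x = 0 := by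
  rw [seqDist, if_pos rfl]

lemma seqDist_of_ne (α : ℕ → ℝ) {x y : ℕ → Bool} (h : x ≠ y) :
    seqDist α x y = α (seqV x y) := by
  rw [seqDist, if_neg h]

lemma seqDist_nonneg {α : ℕ → ℝ} (hα : ∀ n, 0 < α n) (x y : ℕ → Bool) :
    0 ≤ seqDist α x y := by
  rcases eq_or_ne x y with h | h
  · rw [h, seqDist_self]
  · rw [seqDist_of_ne α h]
    exact (hα _).le

lemma min_seqV_le {x y z : ℕ → Bool} (hxz : x ≠ z) :
    min (seqV x y) (seqV y z) ≤ seqV x z := by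
  have hne : {n | x n ≠ z n}.Nonempty := by
    rcases Function.ne_iff.mp hxz with ⟨n, hn⟩
    exact ⟨n, hn⟩
  have hmem : x (seqV x z) ≠ z (seqV x z) := Nat.sInf_mem hne
  rcases ne_or_eq (x (seqV x z)) (y (seqV x z)) with h | h
  · exact le_trans (min_le_left _ _) (Nat.sInf_le h)
  · have h' : y (seqV x z) ≠ z (seqV x z) := by rw [← h]; exact hmem
    exact le_trans (min_le_right _ _) (Nat.sInf_le h')

/-- The sequentially metrized Cantor space `(2^ℕ, d_α)` for a shrinking sequence `α`. -/
def seqMetricSpace (α : ℕ → ℝ) (hα : IsShrinking α) : MetricSpace (ℕ → Bool) where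
  dist := seqDist α
  dist_self x := seqDist_self α x
  dist_comm x y := by
    show seqDist α x y = seqDist α y x
    rcases eq_or_ne x y with h | h
    · rw [h]
    · rw [seqDist_of_ne α h, seqDist_of_ne α h.symm, seqV_comm]
  dist_triangle x y z := by
    show seqDist α x z ≤ seqDist α x y + seqDist α y z
    rcases eq_or_ne x z with hxz | hxz
    · rw [hxz, seqDist_self]
      exact add_nonneg (seqDist_nonneg hα.1 _ _) (seqDist_nonneg hα.1 _ _)
    rcases eq_or_ne x y with hxy | hxy
    · subst hxy
      rw [seqDist_self, zero_add]
    rcases eq_or_ne y z with hyz | hyz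
    · subst hyz
      rw [seqDist_self, add_zero]
    rw [seqDist_of_ne α hxz, seqDist_of_ne α hxy, seqDist_of_ne α hyz]
    have h1 : α (seqV x z) ≤ α (min (seqV x y) (seqV y z)) :=
      hα.2.1 _ _ (min_seqV_le hxz)
    rcases min_cases (seqV x y) (seqV y z) with ⟨he, _⟩ | ⟨he, _⟩
    · rw [he] at h1
      exact h1.trans (le_add_of_nonneg_right (hα.1 _).le)
    · rw [he] at h1
      exact h1.trans (le_add_of_nonneg_left (hα.1 _).le)
  eq_of_dist_eq_zero := by
    intro x y h
    by_contra hne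
    have h' : seqDist α x y = 0 := h
    rw [seqDist_of_ne α hne] at h'
    exact absurd h' (ne_of_gt (hα.1 _))

/-- The Assouad dimension of a metric space. -/
def assouadDim (X : Type*) [MetricSpace X] : ℝ≥0∞ :=
  sInf {d : ℝ≥0∞ | ∃ s : ℝ, 0 < s ∧ d = ENNReal.ofReal s ∧ ∃ K : ℝ, 0 < K ∧
    ∀ ε : ℝ, 0 < ε → ε < 2 → ∀ r : ℝ, 0 < r → ∀ x : X,
      ∃ c : Finset X, (c.card : ℝ) ≤ K * ε ^ (-s) ∧
        Metric.closedBall x r ⊆ ⋃ y ∈ c, Metric.closedBall y (ε * r)}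

/-- The Hausdorff dimension of (the whole of) a metric space. -/
def hausdorffDim (X : Type*) [MetricSpace X] : ℝ≥0∞ := dimH (Set.univ : Set X)

/-- The topology induced by a metric. -/
def metricTopology {X : Type*} (m : MetricSpace X) : TopologicalSpace X :=
  m.toPseudoMetricSpace.toUniformSpace.toTopologicalSpace

/-- `f : X → Y` is quasi-symmetric: for some self-homeomorphism `η` of `[0,∞)`,
`d(f x, f y)/d(f x, f z) ≤ η (d(x,y)/d(x,z))` for all distinct `x, y, z`. -/
def IsQuasiSymmetric {X Y : Type*} [MetricSpace X] [MetricSpace Y] (f : X → Y) : Prop :=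
  ∃ η : Homeomorph (Set.Ici (0 : ℝ)) (Set.Ici (0 : ℝ)),
    ∀ x y z : X, x ≠ y → x ≠ z → y ≠ z →
      dist (f x) (f y) / dist (f x) (f z) ≤
        (η ⟨dist x y / dist x z, div_nonneg dist_nonneg dist_nonneg⟩ : ℝ)

/-- Two metric spaces (given by explicit metric structures) are quasi-symmetrically
equivalent if there is a quasi-symmetric homeomorphism between them. -/
def QSEquiv (X Y : Type*) (mX : MetricSpace X) (mY : MetricSpace Y) : Prop :=
  ∃ f : @Homeomorph X Y (metricTopology mX) (metricTopology mY),
    @IsQuasiSymmetric X Y mX mY f.toEquiv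


/-- The `ℓ^∞`-product metric (the sup metric) on `X × Y`. -/
def prodMetric {X Y : Type*} (mX : MetricSpace X) (mY : MetricSpace Y) :
    MetricSpace (X × Y) :=
  letI := mX; letI := mY; Prod.metricSpaceMax

/-!
Deform the standard ultrametric of `2^ℕ` on the piece of sequences with `n` leading zeros by three
parameters: `a n` digits look like those of an interval, below them `b n` levels collapse to a
single scale, and then `c n` scales are skipped. The space is not uniformly disconnected, doubling
or uniformly perfect once `a`, `b` or `c`, respectively, is unbounded; let the parameters of the
properties that are to fail be unbounded, but nonzero only at the factorials `(k + 1)!` with `k` in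
an infinite set `I`, and let the others vanish.

A quasi-symmetric bijection between two such spaces that fixes the zero sequence distorts the number
of leading zeros at most linearly, and factorials are so sparse that it sends the piece `(k + 1)!`,
for large `k ∉ J`, into the part of the second space where all parameters vanish; otherwise the
pieces land in a part where they are bounded. A bounded part has all three properties, uniformly,
hence so do these pieces of the first space, and the spaces for `I` and `J` are inequivalent as soon
as `I \ J` is infinite. An almost disjoint family of continuum many index sets concludes, the upper
bound being the number of metrics determined by their values on a countable dense set.
-/

/-! ### Quasi-symmetric embeddings -/

section QuasiSymmetric

variable {X Y Z : Type*} [MetricSpace X] [MetricSpace Y] [MetricSpace Z]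

/-- A quasi-symmetric embedding, described without a gauge function `η`: bounded ratios of
distances from a common point stay bounded, and small ratios stay small. In this form the notion
visibly passes to subspaces, compositions and inverses. -/
structure IsQSEmbedding (f : X → Y) : Prop where
  injective : Function.Injective f
  exists_bound : ∀ K > 0, ∃ K' > 0, ∀ x y z,
    dist x y ≤ K * dist x z → dist (f x) (f y) ≤ K' * dist (f x) (f z)
  exists_small : ∀ ε > 0, ∃ δ > 0, ∀ x y z,
    dist x y ≤ δ * dist x z → dist (f x) (f y) ≤ ε * dist (f x) (f z)

namespace IsQSEmbedding

theorem comp {g : Y → Z} {f : X → Y} (hg : IsQSEmbedding g) (hf : IsQSEmbedding f) :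
    IsQSEmbedding (g ∘ f) where
  injective := hg.injective.comp hf.injective
  exists_bound K hK := by
    obtain ⟨K₁, hK₁, h₁⟩ := hf.exists_bound K hK
    obtain ⟨K₂, hK₂, h₂⟩ := hg.exists_bound K₁ hK₁
    exact ⟨K₂, hK₂, fun x y z h ↦ h₂ _ _ _ (h₁ _ _ _ h)⟩
  exists_small ε hε := by
    obtain ⟨δ₁, hδ₁, h₁⟩ := hg.exists_small ε hε
    obtain ⟨δ₂, hδ₂, h₂⟩ := hf.exists_small δ₁ hδ₁
    exact ⟨δ₂, hδ₂, fun x y z h ↦ h₁ _ _ _ (h₂ _ _ _ h)⟩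

theorem restrictPreimage {f : X → Y} (hf : IsQSEmbedding f) (s : Set Y) :
    IsQSEmbedding (s.restrictPreimage f) where
  injective := s.restrictPreimage_injective hf.injective
  exists_bound K hK :=
    let ⟨K', hK', h⟩ := hf.exists_bound K hK
    ⟨K', hK', fun x y z ↦ h x y z⟩
  exists_small ε hε :=
    let ⟨δ, hδ, h⟩ := hf.exists_small ε hε
    ⟨δ, hδ, fun x y z ↦ h x y z⟩

theorem of_lipschitzWith {f : X → Y} {C C' : ℝ≥0} (hf : LipschitzWith C f)
    (hf' : AntilipschitzWith C' f) : IsQSEmbedding f := by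
  have key : ∀ K ≥ 0, ∀ x y z, dist x y ≤ K * dist x z →
      dist (f x) (f y) ≤ (C * C' * K) * dist (f x) (f z) := fun K hK x y z h ↦
    calc dist (f x) (f y) ≤ C * dist x y := hf.dist_le_mul x y
      _ ≤ C * (K * dist x z) := by gcongr
      _ ≤ C * (K * (C' * dist (f x) (f z))) := by gcongr; exact hf'.le_mul_dist x z
      _ = _ := by ring
  refine ⟨hf'.injective, fun K hK ↦ ⟨C * C' * K + 1, by positivity, fun x y z h ↦ ?_⟩,
    fun ε hε ↦ ⟨ε / (C * C' + 1), by positivity, fun x y z h ↦ ?_⟩⟩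
  · exact (key K hK.le x y z h).trans (by gcongr; linarith)
  · refine (key _ (by positivity) x y z h).trans ?_
    gcongr
    rw [← mul_div_assoc, div_le_iff₀ (by positivity)]
    linarith

theorem of_isometry {f : X → Y} (hf : Isometry f) : IsQSEmbedding f :=
  of_lipschitzWith hf.lipschitz hf.antilipschitz

theorem dist_symm_le {e : X ≃ Y} {a s t : ℝ} (ha : 0 < a) (hs : 0 < s) (hst : s * t < 1)
    (h : ∀ x y z, dist x y ≤ a * dist x z → dist (e x) (e y) ≤ s * dist (e x) (e z))
    (x y z : Y) (hxy : dist x y ≤ t * dist x z) :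
    dist (e.symm x) (e.symm y) ≤ a⁻¹ * dist (e.symm x) (e.symm z) := by
  by_contra! hlt
  have hzy : dist x z ≤ s * dist x y := by
    simpa using h (e.symm x) (e.symm z) (e.symm y) ((inv_mul_lt_iff₀ ha).1 hlt).le
  have hxz : dist x z ≤ s * t * dist x z :=
    calc dist x z ≤ s * (t * dist x z) := hzy.trans (by gcongr)
      _ = s * t * dist x z := by ring
  have hz : dist x z = 0 := by nlinarith [dist_nonneg (x := x) (y := z)]
  rw [hz, mul_zero] at hxy
  rw [dist_le_zero.1 hxy, dist_self] at hlt
  exact hlt.not_ge (by positivity)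

theorem symm {e : X ≃ Y} (he : IsQSEmbedding e) : IsQSEmbedding e.symm where
  injective := e.symm.injective
  exists_bound K hK := by
    obtain ⟨δ, hδ, h⟩ := he.exists_small (1 / (2 * K)) (by positivity)
    refine ⟨δ⁻¹, by positivity, dist_symm_le hδ (by positivity) ?_ h⟩
    field_simp
    norm_num
  exists_small ε hε := by
    obtain ⟨K, hK, h⟩ := he.exists_bound ε⁻¹ (by positivity)
    refine ⟨1 / (2 * K), by positivity, ?_⟩
    simpa only [inv_inv] using dist_symm_le (inv_pos.2 hε) hK (by field_simp; norm_num) h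

end IsQSEmbedding

theorem strictMono_homeomorph_nnreal (η : ℝ≥0 ≃ₜ ℝ≥0) : StrictMono η := by
  refine (η.continuous.strictMono_of_inj η.injective).resolve_right fun hanti ↦ ?_
  obtain ⟨t, ht⟩ := η.surjective (η 0 + 1)
  have := hanti.antitone (zero_le (a := t))
  rw [ht] at this
  exact this.not_gt (lt_add_one _)

theorem IsQuasiSymmetric.isQSEmbedding {f : X → Y} (hf : IsQuasiSymmetric f)
    (hinj : Function.Injective f) : IsQSEmbedding f := by
  obtain ⟨η : ℝ≥0 ≃ₜ ℝ≥0, hη⟩ := hf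
  have hmono := strictMono_homeomorph_nnreal η
  have hbound (t : ℝ≥0) {x y z : X} (hyz : y ≠ z) (h : dist x y ≤ t * dist x z) :
      dist (f x) (f y) ≤ η t * dist (f x) (f z) := by
    rcases eq_or_ne x y with rfl | hxy
    · rw [dist_self]; positivity
    have hxz : x ≠ z := by
      rintro rfl
      exact hxy (dist_le_zero.1 (by simpa using h))
    rw [← div_le_iff₀ (dist_pos.2 (hinj.ne hxz))]
    refine (hη x y z hxy hxz hyz).trans (NNReal.coe_le_coe.2 (hmono.monotone ?_))
    exact (div_le_iff₀ (dist_pos.2 hxz)).2 h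
  refine ⟨hinj, fun K hK ↦ ⟨max 1 (η ⟨K, hK.le⟩), by positivity, fun x y z h ↦ ?_⟩, fun ε hε ↦ ?_⟩
  · rcases eq_or_ne y z with rfl | hyz
    · exact le_mul_of_one_le_left dist_nonneg (le_max_left _ _)
    · exact (hbound ⟨K, hK.le⟩ hyz h).trans (by gcongr; exact le_max_right _ _)
  · obtain ⟨t, ht⟩ := η.surjective ⟨ε, hε.le⟩
    obtain ⟨t₀, ht₀⟩ := η.surjective 0
    have ht₀_lt : t₀ < t := hmono.lt_iff_lt.1 (by rw [ht, ht₀]; exact hε)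
    have ht_pos : 0 < t := (zero_le (a := t₀)).trans_lt ht₀_lt
    refine ⟨min t (1 / 2), by positivity, fun x y z h ↦ ?_⟩
    rcases eq_or_ne y z with rfl | hyz
    · have hxy : dist x y ≤ 1 / 2 * dist x y := h.trans (by gcongr; exact min_le_right _ _)
      have : x = y := dist_le_zero.1 (by linarith)
      rw [this, dist_self, mul_zero]
    · have := hbound t hyz (h.trans (by gcongr; exact min_le_left _ _))
      rwa [ht] at this

end QuasiSymmetric

/-! ### Doubling spaces -/

section Doubling

variable {X Y : Type*} [MetricSpace X] [MetricSpace Y]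

namespace IsDoubling

theorem exists_cover_pow (hX : IsDoubling X) (m : ℕ) : ∃ N : ℕ, ∀ (x : X) (r : ℝ),
    ∃ c : Finset X, c.card ≤ N ∧ closedBall x r ⊆ ⋃ y ∈ c, closedBall y (r / 2 ^ m) := by
  classical
  obtain ⟨N, hN⟩ := hX
  induction m with
  | zero => exact ⟨1, fun x r ↦ ⟨{x}, by simp, by simp⟩⟩
  | succ m ih =>
    obtain ⟨M, hM⟩ := ih
    refine ⟨M * N, fun x r ↦ ?_⟩
    obtain ⟨c, hc, hcover⟩ := hM x r
    choose d hd hdcover using fun y ↦ hN y (r / 2 ^ m)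
    refine ⟨c.biUnion d, (Finset.card_biUnion_le_card_mul c d N fun y _ ↦ hd y).trans
      (by gcongr), hcover.trans (iUnion₂_subset fun y hy ↦ (hdcover y).trans ?_)⟩
    rw [pow_succ, ← div_div]
    exact biUnion_mono (fun z hz ↦ Finset.mem_biUnion.2 ⟨y, hy, hz⟩) fun _ _ ↦ Subset.rfl

theorem exists_card_le (hX : IsDoubling X) (K : ℝ) : ∃ N : ℕ, ∀ (x : X) (r : ℝ), 0 < r →
    ∀ s : Finset X, (s : Set X) ⊆ closedBall x (K * r) →
      (s : Set X).Pairwise (fun y z ↦ r ≤ dist y z) → s.card ≤ N := by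
  obtain ⟨m, hm⟩ := pow_unbounded_of_one_lt (2 * K) one_lt_two
  obtain ⟨N, hN⟩ := hX.exists_cover_pow m
  refine ⟨N, fun x r hr s hs hsep ↦ ?_⟩
  obtain ⟨c, hc, hcover⟩ := hN x (K * r)
  have hsmall : 2 * (K * r / 2 ^ m) < r := by
    rw [← mul_div_assoc, div_lt_iff₀ (by positivity)]
    nlinarith
  refine (Finset.card_le_card_of_forall_subsingleton (fun y z ↦ y ∈ closedBall z (K * r / 2 ^ m))
    (fun y hy ↦ by simpa using hcover (hs hy)) fun z _ y hy y' hy' ↦ ?_).trans hc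
  by_contra hne
  exact hsmall.not_ge ((hsep hy.1 hy'.1 hne).trans
    ((dist_triangle_right y y' z).trans
      (by linarith [mem_closedBall.1 hy.2, mem_closedBall.1 hy'.2])))

end IsDoubling

theorem isDoubling_of_card_le {N : ℕ} (h : ∀ (x : X) (r : ℝ), 0 < r → ∀ s : Finset X,
    (s : Set X) ⊆ closedBall x r → (s : Set X).Pairwise (fun y z ↦ r / 2 < dist y z) →
      s.card ≤ N) : IsDoubling X := by
  classical
  refine ⟨max N 1, fun x r ↦ ?_⟩
  rcases le_or_gt r 0 with hr | hr
  · refine ⟨{x}, by simp, fun y hy ↦ ?_⟩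
    have hyx := mem_closedBall.1 hy
    simp only [Finset.mem_singleton, iUnion_iUnion_eq_left, mem_closedBall]
    linarith [dist_nonneg (x := y) (y := x)]
  let S : Set (Finset X) := {s | (s : Set X) ⊆ closedBall x r ∧
    (s : Set X).Pairwise fun y z ↦ r / 2 < dist y z}
  have hbdd : BddAbove (Finset.card '' S) :=
    ⟨N, by rintro _ ⟨s, hs, rfl⟩; exact h x r hr s hs.1 hs.2⟩
  obtain ⟨s, hs, hs_max⟩ := Nat.sSup_mem (s := Finset.card '' S)
    ⟨_, ∅, ⟨by simp, by simp⟩, rfl⟩ hbdd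
  refine ⟨s, (h x r hr s hs.1 hs.2).trans (le_max_left _ _), fun y hy ↦ ?_⟩
  by_contra hfar
  simp only [mem_iUnion, mem_closedBall, exists_prop, not_exists, not_and, not_le] at hfar
  have hys : y ∉ s := fun hys ↦ (hfar y hys).not_ge (by rw [dist_self]; positivity)
  have hinsert : insert y s ∈ S := by
    refine ⟨by simpa [insert_subset_iff] using ⟨hy, hs.1⟩, ?_⟩
    rw [Finset.coe_insert]
    exact hs.2.insert fun z hz _ ↦ ⟨hfar z hz, by rw [dist_comm]; exact hfar z hz⟩
  have := le_csSup hbdd (mem_image_of_mem Finset.card hinsert)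
  rw [← hs_max, Finset.card_insert_of_notMem hys] at this
  omega

theorem IsDoubling.of_isQSEmbedding {f : X → Y} (hY : IsDoubling Y) (hf : IsQSEmbedding f) :
    IsDoubling X := by
  classical
  obtain ⟨K, hK, hbound⟩ := hf.exists_bound 4 (by norm_num)
  obtain ⟨N, hN⟩ := hY.exists_card_le (2 * K ^ 2)
  refine isDoubling_of_card_le (N := max N 1) fun x r _ s hs hsep ↦ ?_
  rcases le_or_gt s.card 1 with hcard | hcard
  · exact hcard.trans (le_max_right _ _)
  have hcomparable {y z w : X} (hy : y ∈ s) (hz : z ∈ s) (hw : w ∈ s) (hyw : y ≠ w) :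
      dist (f y) (f z) ≤ K * dist (f y) (f w) := by
    refine hbound y z w ((dist_triangle_right y z x).trans ?_)
    linarith [mem_closedBall.1 (hs hy), mem_closedBall.1 (hs hz), hsep hy hw hyw]
  obtain ⟨p, hp, q, hq, hpq⟩ := Finset.one_lt_card.1 hcard
  have hsep' (y) (hy : y ∈ s) (z) (hz : z ∈ s) (hyz : y ≠ z) :
      dist (f p) (f q) / (2 * K) ≤ dist (f y) (f z) := by
    rw [div_le_iff₀ (by positivity)]
    linarith [dist_triangle_left (f p) (f q) (f y), hcomparable hy hp hz hyz,
      hcomparable hy hq hz hyz]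
  rw [← Finset.card_image_of_injective s hf.injective]
  refine (hN (f p) (dist (f p) (f q) / (2 * K)) ?_ _ ?_ ?_).trans (le_max_left _ _)
  · have := dist_pos.2 (hf.injective.ne hpq)
    positivity
  · rw [Finset.coe_image, image_subset_iff]
    intro y hy
    rw [mem_preimage, mem_closedBall']
    refine (hcomparable hp hy hq hpq).trans (le_of_eq ?_)
    field_simp
  · rw [Finset.coe_image]
    rintro _ ⟨y, hy, rfl⟩ _ ⟨z, hz, rfl⟩ hyz
    exact hsep' y hy z hz (ne_of_apply_ne f hyz)

end Doubling

/-! ### Uniform disconnectedness -/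

section UniformlyDisconnected

variable {X Y : Type*} [MetricSpace X] [MetricSpace Y]

theorem isUniformlyDisconnected_of_isUltrametricDist [IsUltrametricDist X] :
    IsUniformlyDisconnected X := by
  refine ⟨1 / 2, by norm_num, by norm_num, fun N x hx ↦ ?_⟩
  have hle : ∀ i ≤ N, dist (x i) (x 0) ≤ 1 / 2 * dist (x 0) (x N) := by
    intro i
    induction i with
    | zero => intro _; rw [dist_self]; positivity
    | succ i ih =>
      intro hi
      refine (IsUltrametricDist.dist_triangle_max (x (i + 1)) (x i) (x 0)).trans (max_le ?_ ?_)
      · rw [dist_comm]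
        exact hx (i + 1) (by omega) hi
      · exact ih (by omega)
  have hend : dist (x 0) (x N) ≤ 0 := by linarith [hle N le_rfl, dist_comm (x 0) (x N)]
  exact fun i hi ↦ dist_le_zero.1 (by linarith [hle i hi])

namespace IsUniformlyDisconnected

theorem of_isQSEmbedding {f : X → Y} (hY : IsUniformlyDisconnected Y) (hf : IsQSEmbedding f) :
    IsUniformlyDisconnected X := by
  obtain ⟨δ, hδ, -, hchain⟩ := hY
  obtain ⟨ε, hε, hsmall⟩ := hf.exists_small (δ / 2) (by positivity)
  refine ⟨min (1 / 2) (ε / 2), by positivity, (min_le_left _ _).trans_lt (by norm_num),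
    fun N x hx ↦ ?_⟩
  -- The chain need not end far from `f (x 0)` in `Y`, so stop at its farthest point.
  obtain ⟨m, hm, hm_max⟩ := Finset.exists_max_image (Finset.range (N + 1))
    (fun i ↦ dist (f (x 0)) (f (x i))) ⟨0, by simp⟩
  simp only [Finset.mem_range, Nat.lt_succ_iff] at hm hm_max
  have hspread (k : ℕ) (hk : k ≤ N) (w : X) (hw : w = x 0 ∨ w = x N) :
      dist (f (x k)) (f w) ≤ 2 * dist (f (x 0)) (f (x m)) := by
    refine (dist_triangle_left _ _ (f (x 0))).trans ?_
    have hk' := hm_max k hk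
    have hN := hm_max N le_rfl
    rcases hw with rfl | rfl
    · rw [dist_self]; linarith [dist_nonneg (x := f (x 0)) (y := f (x m))]
    · linarith
  have hstep : ∀ i, 1 ≤ i → i ≤ m →
      dist (f (x (i - 1))) (f (x i)) ≤ δ * dist (f (x 0)) (f (x m)) := fun i hi him ↦ by
    obtain ⟨w, hw, hfar⟩ : ∃ w, (w = x 0 ∨ w = x N) ∧
        dist (x 0) (x N) ≤ 2 * dist (x (i - 1)) w := by
      by_contra! hnear
      linarith [hnear (x 0) (.inl rfl), hnear (x N) (.inr rfl),
        dist_triangle_left (x 0) (x N) (x (i - 1))]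
    have := hsmall (x (i - 1)) (x i) w <|
      calc dist (x (i - 1)) (x i) ≤ min (1 / 2) (ε / 2) * dist (x 0) (x N) :=
            hx i hi (him.trans hm)
        _ ≤ ε / 2 * (2 * dist (x (i - 1)) w) := by
            gcongr
            exact min_le_right _ _
        _ = ε * dist (x (i - 1)) w := by ring
    nlinarith [hspread (i - 1) (by omega) w hw]
  have hend : f (x m) = f (x 0) := hchain m (f ∘ x) hstep m le_rfl
  intro i hi
  refine hf.injective (dist_le_zero.1 ?_)
  rw [dist_comm]
  simpa [hend] using hm_max i hi

theorem exists_chain_bound (hX : IsUniformlyDisconnected X) : ∃ B : ℕ, ∀ (N : ℕ) (x : ℕ → X)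
    (r : ℝ), 0 < r → (∀ i < N, dist (x i) (x (i + 1)) ≤ r) → N * r ≤ dist (x 0) (x N) →
      N ≤ B := by
  obtain ⟨δ, hδ, -, hchain⟩ := hX
  refine ⟨⌈δ⁻¹⌉₊, fun N x r hr hx hlong ↦ ?_⟩
  by_contra! hN
  have hN' : δ⁻¹ < N := (Nat.le_ceil _).trans_lt (by exact_mod_cast hN)
  have hr_le : r ≤ δ * dist (x 0) (x N) := by
    rw [inv_lt_iff_one_lt_mul₀ hδ] at hN'
    nlinarith
  have hend : x N = x 0 := hchain N x (fun i hi hiN ↦ by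
    simpa [Nat.sub_add_cancel hi] using (hx (i - 1) (by omega)).trans hr_le) N le_rfl
  rw [hend, dist_self, mul_zero] at hr_le
  exact hr.not_ge hr_le

end IsUniformlyDisconnected

end UniformlyDisconnected

/-! ### Uniform perfectness -/

section UniformlyPerfect

variable {X Y : Type*} [MetricSpace X] [MetricSpace Y]

/-- Uniform perfectness at a single point: `x` is the limit of points whose distances to `x` start
comparable to the largest one and never drop by more than the factor `ρ`. Unlike
`IsUniformlyPerfectWith` this localizes, and a quasi-symmetric bijection transports it pointwise. -/
def IsUniformlyPerfectAt (ρ : ℝ) (x : X) : Prop :=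
  ∃ y : ℕ → X, (∀ q, ρ * dist x q ≤ dist x (y 0)) ∧
    (∀ j, ρ * dist x (y j) ≤ dist x (y (j + 1))) ∧ ∀ ε > 0, ∃ j, dist x (y j) < ε

theorem IsUniformlyPerfectAt.exists_dist_lt {ρ R : ℝ} {x q : X} (hx : IsUniformlyPerfectAt ρ x)
    (hρ : 0 ≤ ρ) (hR : 0 < R) (hq : R ≤ dist x q) : ∃ y, dist x y < R ∧ ρ * R ≤ dist x y := by
  obtain ⟨y, hy₀, hy_succ, hy_lim⟩ := hx
  classical
  refine ⟨y (Nat.find (hy_lim R hR)), Nat.find_spec (hy_lim R hR), ?_⟩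
  rcases hj : Nat.find (hy_lim R hR) with _ | j
  · exact (mul_le_mul_of_nonneg_left hq hρ).trans (hy₀ q)
  · have : R ≤ dist x (y j) := not_lt.1 (Nat.find_min (hy_lim R hR) (by omega))
    exact (mul_le_mul_of_nonneg_left this hρ).trans (hy_succ j)

theorem isUniformlyPerfect_of_forall_at {ρ : ℝ} (hρ : 0 < ρ) (hρ₁ : ρ ≤ 1)
    (h : ∀ x : X, IsUniformlyPerfectAt ρ x) : IsUniformlyPerfect X := by
  refine ⟨ρ / 2, by positivity, by linarith, fun x r hr hdiam ↦ ?_⟩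
  obtain ⟨q, hq⟩ : ∃ q, r / 2 < dist x q := by
    by_contra! hnear
    refine hdiam.not_ge (diam_le_of_forall_dist_le hr.le fun y _ z _ ↦ ?_)
    linarith [dist_triangle_left y z x, hnear y, hnear z]
  obtain ⟨y, hlt, hge⟩ := (h x).exists_dist_lt hρ.le (half_pos hr) hq.le
  refine ⟨y, ?_, ?_⟩
  · rw [mem_closedBall']
    linarith
  · rw [mem_ball', not_lt]
    linarith

theorem IsUniformlyPerfectWith.le_of_gap [BoundedSpace X] {ρ R s : ℝ}
    (hX : IsUniformlyPerfectWith X ρ) {p q : X} (hR : 0 < R) (hq : R ≤ dist p q)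
    (hgap : ∀ y, dist p y < R → dist p y ≤ s) : ρ * R ≤ 2 * s := by
  have hdiam : dist p q ≤ diam (univ : Set X) :=
    dist_le_diam_of_mem BoundedSpace.bounded_univ (mem_univ p) (mem_univ q)
  obtain ⟨y, hy, hy'⟩ := hX p (R / 2) (by positivity) (by linarith)
  rw [mem_closedBall'] at hy
  rw [mem_ball', not_lt] at hy'
  linarith [hgap y (by linarith)]

theorem IsQSEmbedding.exists_isUniformlyPerfectAt {e : X ≃ Y} (he : IsQSEmbedding e) {ρ : ℝ}
    (hρ : 0 < ρ) : ∃ ρ' > 0, ∀ x, IsUniformlyPerfectAt ρ (e x) → IsUniformlyPerfectAt ρ' x := by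
  obtain ⟨K, hK, hbound⟩ := he.symm.exists_bound ρ⁻¹ (by positivity)
  have hinv {x y z : X} (h : ρ * dist (e x) (e y) ≤ dist (e x) (e z)) :
      K⁻¹ * dist x y ≤ dist x z := by
    rw [inv_mul_le_iff₀ hK]
    simpa using hbound (e x) (e y) (e z) ((le_inv_mul_iff₀ hρ).2 h)
  refine ⟨K⁻¹, by positivity, fun x ⟨y, hy₀, hy_succ, hy_lim⟩ ↦
    ⟨e.symm ∘ y, fun q ↦ hinv (by simpa using hy₀ (e q)),
      fun j ↦ hinv (by simpa using hy_succ j), fun ε hε ↦ ?_⟩⟩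
  rcases eq_or_ne (y 0) (e x) with h₀ | h₀
  · exact ⟨0, by simpa [h₀] using hε⟩
  have hpos : 0 < dist x (e.symm (y 0)) := dist_pos.2 fun h ↦ h₀ (by rw [h, e.apply_symm_apply])
  obtain ⟨δ, hδ, hsmall⟩ := he.symm.exists_small (ε / (2 * dist x (e.symm (y 0)))) (by positivity)
  obtain ⟨j, hj⟩ := hy_lim (δ * dist (e x) (y 0)) (mul_pos hδ (dist_pos.2 h₀.symm))
  refine ⟨j, ?_⟩
  have := hsmall (e x) (y j) (y 0) hj.le
  rw [e.symm_apply_apply] at this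
  calc dist x (e.symm (y j)) ≤ ε / (2 * dist x (e.symm (y 0))) * dist x (e.symm (y 0)) := this
    _ = ε / 2 := by field_simp
    _ < ε := by linarith

end UniformlyPerfect

/-! ### Counting metrics -/

section Counting

open Cardinal

variable {X : Type*} [t : TopologicalSpace X]

theorem continuous_dist_of_metricTopology_eq {m : MetricSpace X} (hm : metricTopology m = t) :
    Continuous fun p : X × X ↦ m.dist p.1 p.2 := by
  subst hm
  exact @continuous_dist X m.toPseudoMetricSpace

theorem mk_metricSpace_le_continuum [TopologicalSpace.SeparableSpace X] [Nonempty X] :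
    #{m : MetricSpace X // metricTopology m = t} ≤ 𝔠 := by
  let distOnDense : {m : MetricSpace X // metricTopology m = t} → ℕ × ℕ → ℝ := fun m p ↦
    m.1.dist (TopologicalSpace.denseSeq X p.1) (TopologicalSpace.denseSeq X p.2)
  have hinj : Function.Injective distOnDense := fun m₁ m₂ h ↦ by
    have hdense := (TopologicalSpace.denseRange_denseSeq X).prodMap
      (TopologicalSpace.denseRange_denseSeq X)
    have hdist := hdense.equalizer (continuous_dist_of_metricTopology_eq m₁.2)
      (continuous_dist_of_metricTopology_eq m₂.2) h
    exact Subtype.ext (MetricSpace.ext (Dist.ext (funext₂ fun x y ↦ congrFun hdist (x, y))))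
  simpa [mk_real] using lift_mk_le_lift_mk_of_injective hinj

end Counting

/-! ### Binary sequences -/

open PiNat

section Sequences

variable {x y : ℕ → Bool} {j n : ℕ}

/-- The zero sequence, around which all the models below are built. -/
def zeroSeq : ℕ → Bool := fun _ ↦ false

/-- The number of zeros at the beginning of a sequence, with junk value `0` at `zeroSeq`. -/
def leadingZeros (x : ℕ → Bool) : ℕ := firstDiff x zeroSeq

theorem ne_zeroSeq_of_notMem_cylinder (hx : x ∉ cylinder zeroSeq j) : x ≠ zeroSeq := by
  rintro rfl
  exact hx (self_mem_cylinder _ _)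

theorem mem_cylinder_zeroSeq_iff (hx : x ≠ zeroSeq) :
    x ∈ cylinder zeroSeq j ↔ j ≤ leadingZeros x :=
  mem_cylinder_iff_le_firstDiff hx j

theorem leadingZeros_lt_of_notMem_cylinder (hx : x ∉ cylinder zeroSeq j) : leadingZeros x < j := by
  rwa [mem_cylinder_zeroSeq_iff (ne_zeroSeq_of_notMem_cylinder hx), not_le] at hx

theorem notMem_cylinder_zeroSeq (hx : x ≠ zeroSeq) (hj : leadingZeros x < j) :
    x ∉ cylinder zeroSeq j := by
  rwa [mem_cylinder_zeroSeq_iff hx, not_le]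

theorem leadingZeros_spec (hx : x ≠ zeroSeq) :
    x ∈ cylinder zeroSeq (leadingZeros x) ∧ x (leadingZeros x) = true :=
  ⟨mem_cylinder_firstDiff _ _, Bool.eq_true_of_not_eq_false (apply_firstDiff_ne hx)⟩

theorem firstDiff_eq (hxy : y ∈ cylinder x n) (hn : y n ≠ x n) : firstDiff x y = n := by
  have hne : y ≠ x := ne_of_apply_ne (· n) hn
  rw [firstDiff_comm]
  refine le_antisymm ?_ ((mem_cylinder_iff_le_firstDiff hne n).1 hxy)
  by_contra! hlt
  exact hn (apply_eq_of_lt_firstDiff hlt)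

theorem mem_cylinder_zeroSeq_congr (hxy : y ∈ cylinder x j) :
    y ∈ cylinder zeroSeq j ↔ x ∈ cylinder zeroSeq j := by
  rw [mem_cylinder_iff_eq, mem_cylinder_iff_eq, mem_cylinder_iff_eq.1 hxy]

theorem leadingZeros_eq (hx : x ∈ cylinder zeroSeq n) (hn : x n = true) : leadingZeros x = n := by
  rw [leadingZeros, firstDiff_comm]
  exact firstDiff_eq hx (by simp [hn, zeroSeq])

theorem leadingZeros_congr (hxy : y ∈ cylinder x j) (hx : x ∉ cylinder zeroSeq j) :
    leadingZeros y = leadingZeros x := by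
  have hlt := leadingZeros_lt_of_notMem_cylinder hx
  obtain ⟨hzeros, htrue⟩ := leadingZeros_spec (ne_zeroSeq_of_notMem_cylinder hx)
  refine leadingZeros_eq ?_ ((hxy _ hlt).trans htrue)
  exact (mem_cylinder_zeroSeq_congr (cylinder_anti x hlt.le hxy)).2 hzeros

/-- The number with binary digits `x 0, …, x (n - 1)`. -/
def prefixValue (x : ℕ → Bool) : ℕ → ℕ
  | 0 => 0
  | n + 1 => 2 * prefixValue x n + (x n).toNat

theorem prefixValue_eq_iff : prefixValue y n = prefixValue x n ↔ y ∈ cylinder x n := by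
  induction n with
  | zero => simp [prefixValue]
  | succ n ih =>
    have hiff : y ∈ cylinder x (n + 1) ↔ y ∈ cylinder x n ∧ y n = x n := by
      simp only [mem_cylinder_iff, Nat.lt_succ_iff_lt_or_eq, or_imp, forall_and, forall_eq]
    rw [hiff, ← ih, prefixValue, prefixValue]
    cases x n <;> cases y n <;> simp <;> omega

theorem prefixValue_add_mem_Ico (x : ℕ → Bool) (n k : ℕ) :
    prefixValue x (n + k) ∈ Ico (2 ^ k * prefixValue x n) (2 ^ k * (prefixValue x n + 1)) := by
  induction k with
  | zero => simp
  | succ k ih =>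
    have := Bool.toNat_le (x (n + k))
    rw [mem_Ico] at ih ⊢
    rw [← add_assoc, prefixValue, pow_succ]
    constructor <;> linarith

theorem exists_prefixValue_eq {i : ℕ} (hi : i < 2 ^ n) : ∃ x, prefixValue x n = i := by
  induction n generalizing i with
  | zero => exact ⟨zeroSeq, by simp_all [prefixValue]⟩
  | succ n ih =>
    obtain ⟨x, hx⟩ := ih (i := i / 2) (by omega)
    refine ⟨Function.update x n (i.bodd), ?_⟩
    rw [prefixValue, prefixValue_eq_iff.2 (update_mem_cylinder x n _), hx, Function.update_self]
    have := Nat.bodd_add_div2 i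
    rw [Nat.div2_val] at this
    omega

theorem prefixValue_eq_zero_iff : prefixValue x n = 0 ↔ x ∈ cylinder zeroSeq n := by
  rw [← prefixValue_eq_iff]
  suffices prefixValue zeroSeq n = 0 by rw [this]
  induction n with
  | zero => rfl
  | succ n ih => simp [prefixValue, ih, zeroSeq]

end Sequences

section Coordinate

variable {a : ℕ → ℕ} {x y : ℕ → Bool} {j : ℕ}

/-- The number of digits of `x` that the real coordinate records. -/
def depth (a : ℕ → ℕ) (x : ℕ → Bool) : ℕ := leadingZeros x + 1 + a (leadingZeros x)

/-- The real coordinate of `x`: the binary fraction `0.x₀x₁…` cut off after `depth a x` digits. -/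
def coordinate (a : ℕ → ℕ) (x : ℕ → Bool) : ℝ := prefixValue x (depth a x) / 2 ^ depth a x

theorem depth_congr (hxy : y ∈ cylinder x j) (hx : x ∉ cylinder zeroSeq j) :
    depth a y = depth a x := by
  rw [depth, depth, leadingZeros_congr hxy hx]

theorem coordinate_mem_Icc (h : x ∈ cylinder zeroSeq j ∨ j ≤ depth a x) :
    coordinate a x ∈
      Icc (prefixValue x j / 2 ^ j : ℝ) (prefixValue x j / 2 ^ j + (1 / 2) ^ j) := by
  by_cases hj : j ≤ depth a x
  · obtain ⟨k, hk⟩ := Nat.exists_eq_add_of_le hj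
    obtain ⟨hlow, hupp⟩ := prefixValue_add_mem_Ico x j k
    have hlow' : (2 ^ k * prefixValue x j : ℝ) ≤ prefixValue x (j + k) := by exact_mod_cast hlow
    have hupp' : (prefixValue x (j + k) : ℝ) ≤ 2 ^ k * (prefixValue x j + 1) := by
      exact_mod_cast hupp.le
    rw [coordinate, hk, pow_add, one_div_pow, ← add_div]
    constructor
    · rw [div_le_div_iff₀ (by positivity) (by positivity)]
      nlinarith [pow_pos (two_pos (α := ℝ)) j]
    · rw [div_le_div_iff₀ (by positivity) (by positivity)]
      nlinarith [pow_pos (two_pos (α := ℝ)) j]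
  · have hx : x = zeroSeq := by
      by_contra hne
      have := (mem_cylinder_zeroSeq_iff hne).1 (h.resolve_right hj)
      rw [depth] at hj
      omega
    subst hx
    simp [coordinate, prefixValue_eq_zero_iff.2 (self_mem_cylinder zeroSeq _)]

theorem abs_coordinate_sub_le (hxy : y ∈ cylinder x j) :
    |coordinate a x - coordinate a y| ≤ (1 / 2) ^ j := by
  by_cases h : x ∈ cylinder zeroSeq j ∨ j ≤ depth a x
  · have h' : y ∈ cylinder zeroSeq j ∨ j ≤ depth a y := by
      by_cases hx : x ∈ cylinder zeroSeq j
      · exact .inl ((mem_cylinder_zeroSeq_congr hxy).2 hx)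
      · exact .inr (depth_congr (a := a) hxy hx ▸ h.resolve_left hx)
    have hIx := coordinate_mem_Icc h
    have hIy := coordinate_mem_Icc h'
    rw [prefixValue_eq_iff.2 hxy] at hIy
    rw [mem_Icc] at hIx hIy
    rw [abs_le]
    constructor <;> linarith
  · push Not at h
    rw [coordinate, coordinate, depth_congr hxy h.1,
      prefixValue_eq_iff.2 (cylinder_anti x h.2.le hxy), sub_self, abs_zero]
    positivity

theorem le_abs_coordinate_sub (hdepth : depth a y = depth a x)
    (hxy : y ∉ cylinder x (depth a x)) :
    (1 / 2) ^ depth a x ≤ |coordinate a x - coordinate a y| := by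
  have hne : (prefixValue x (depth a x) : ℤ) - prefixValue y (depth a x) ≠ 0 := by
    rw [sub_ne_zero, Ne, Nat.cast_inj, eq_comm]
    exact fun h ↦ hxy (prefixValue_eq_iff.1 h)
  have hone : (1 : ℝ) ≤ |(prefixValue x (depth a x) : ℝ) - prefixValue y (depth a x)| := by
    exact_mod_cast Int.one_le_abs hne
  rw [coordinate, coordinate, hdepth, ← sub_div, abs_div, one_div_pow,
    abs_of_nonneg (a := 2 ^ depth a x) (by positivity)]
  gcongr

end Coordinate

/-! ### The model metrics -/

section Scale

variable {a b c : ℕ → ℕ} {x y z : ℕ → Bool} {j : ℕ}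

open Classical in
/-- The exponent of the tree part of the model metric: sequences with longest common prefix
`x 0, …, x (j - 1)` get tree distance `2 ^ (-scale a b c x j)`. On the piece of sequences with `n`
leading zeros, `b n` levels below the depth are collapsed to a single scale, and then `c n` scales
are skipped. -/
def scale (a b c : ℕ → ℕ) (x : ℕ → Bool) (j : ℕ) : ℕ :=
  if x ∈ cylinder zeroSeq j then j
  else if j < depth a x + b (leadingZeros x) then depth a x
  else j - b (leadingZeros x) + c (leadingZeros x)

theorem scale_of_mem_cylinder (hx : x ∈ cylinder zeroSeq j) : scale a b c x j = j :=
  if_pos hx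

theorem scale_of_lt (hx : x ∉ cylinder zeroSeq j) (hj : j < depth a x + b (leadingZeros x)) :
    scale a b c x j = depth a x := by
  rw [scale, if_neg hx, if_pos hj]

theorem notMem_cylinder_of_depth_le (hx : x ≠ zeroSeq) (hj : depth a x ≤ j) :
    x ∉ cylinder zeroSeq j :=
  notMem_cylinder_zeroSeq hx (by rw [depth] at hj; omega)

theorem scale_of_le (hx : x ≠ zeroSeq) (hj : depth a x + b (leadingZeros x) ≤ j) :
    scale a b c x j = j - b (leadingZeros x) + c (leadingZeros x) := by
  rw [scale, if_neg (notMem_cylinder_of_depth_le (a := a) hx (by omega)), if_neg (by omega)]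

theorem scale_congr (hxy : y ∈ cylinder x j) : scale a b c y j = scale a b c x j := by
  by_cases hx : x ∈ cylinder zeroSeq j
  · rw [scale_of_mem_cylinder hx,
      scale_of_mem_cylinder ((mem_cylinder_zeroSeq_congr hxy).2 hx)]
  · have hy := (mem_cylinder_zeroSeq_congr hxy).not.2 hx
    simp only [scale, if_neg hx, if_neg hy, depth_congr hxy hx, leadingZeros_congr hxy hx]

theorem scale_mono : Monotone (scale a b c x) := by
  intro j k hjk
  rcases eq_or_ne x zeroSeq with rfl | hx
  · simpa only [scale_of_mem_cylinder (self_mem_cylinder zeroSeq _)]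
  · simp only [scale, mem_cylinder_zeroSeq_iff hx, depth]
    grind

theorem le_scale_add (x : ℕ → Bool) (j : ℕ) : j ≤ scale a b c x j + b (leadingZeros x) := by
  rw [scale]
  split_ifs <;> omega

end Scale

section Dist

variable {a b c : ℕ → ℕ} {x y z : ℕ → Bool}

open Classical in
/-- The ultrametric part of the model metric. -/
def treeDist (a b c : ℕ → ℕ) (x y : ℕ → Bool) : ℝ :=
  if x = y then 0 else (1 / 2) ^ scale a b c x (firstDiff x y)

/-- The model metric: the tree part makes it compatible with the product topology, and the
coordinate makes the first `depth` digits look like an interval. -/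
def modelDist (a b c : ℕ → ℕ) (x y : ℕ → Bool) : ℝ :=
  max |coordinate a x - coordinate a y| (treeDist a b c x y)

theorem treeDist_self (x : ℕ → Bool) : treeDist a b c x x = 0 :=
  if_pos rfl

theorem treeDist_of_ne (hxy : x ≠ y) :
    treeDist a b c x y = (1 / 2) ^ scale a b c x (firstDiff x y) :=
  if_neg hxy

theorem treeDist_nonneg (x y : ℕ → Bool) : 0 ≤ treeDist a b c x y := by
  unfold treeDist
  positivity

theorem treeDist_comm (x y : ℕ → Bool) : treeDist a b c x y = treeDist a b c y x := by
  rcases eq_or_ne x y with rfl | hxy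
  · rfl
  · rw [treeDist_of_ne hxy, treeDist_of_ne hxy.symm, firstDiff_comm y,
      scale_congr (mem_cylinder_firstDiff x y)]

theorem half_pow_le_half_pow {m n : ℕ} : (1 / 2 : ℝ) ^ n ≤ (1 / 2) ^ m ↔ m ≤ n :=
  pow_le_pow_iff_right_of_lt_one₀ (by norm_num) (by norm_num)

theorem treeDist_le_max (x y z : ℕ → Bool) :
    treeDist a b c x z ≤ max (treeDist a b c x y) (treeDist a b c y z) := by
  rcases eq_or_ne x z with rfl | hxz
  · rw [treeDist_self]
    exact le_max_of_le_left (treeDist_nonneg x y)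
  rcases eq_or_ne x y with rfl | hxy
  · exact le_max_right _ _
  rcases eq_or_ne y z with rfl | hyz
  · exact le_max_left _ _
  rw [treeDist_of_ne hxz, treeDist_of_ne hxy, treeDist_of_ne hyz, le_max_iff,
    half_pow_le_half_pow, half_pow_le_half_pow]
  rcases min_le_iff.1 (min_firstDiff_le x y z hxz) with h | h
  · exact .inl (scale_mono h)
  · have hyx : y ∈ cylinder x (firstDiff y z) := fun i hi ↦
      (mem_cylinder_firstDiff y z i hi).trans (mem_cylinder_firstDiff x z i (hi.trans_le h)).symm
    exact .inr ((scale_congr hyx).trans_le (scale_mono h))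

theorem modelDist_self (x : ℕ → Bool) : modelDist a b c x x = 0 := by
  rw [modelDist, treeDist_self, sub_self, abs_zero, max_self]

theorem modelDist_comm (x y : ℕ → Bool) : modelDist a b c x y = modelDist a b c y x := by
  rw [modelDist, modelDist, treeDist_comm, abs_sub_comm]

theorem modelDist_of_mem_cylinder (hxy : x ≠ y) (hx : x ∈ cylinder zeroSeq (firstDiff x y)) :
    modelDist a b c x y = (1 / 2) ^ firstDiff x y := by
  rw [modelDist, treeDist_of_ne hxy, scale_of_mem_cylinder hx, max_eq_right]
  exact abs_coordinate_sub_le ((mem_cylinder_comm _ _ _).1 (mem_cylinder_firstDiff x y))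

theorem modelDist_of_lt_depth (hx : x ∉ cylinder zeroSeq (firstDiff x y))
    (hlt : firstDiff x y < depth a x) :
    modelDist a b c x y = |coordinate a x - coordinate a y| := by
  have hxy : x ≠ y := by
    rintro rfl
    simp [firstDiff_def] at hx
  rw [modelDist, treeDist_of_ne hxy, scale_of_lt hx (by omega), max_eq_left]
  refine le_abs_coordinate_sub (depth_congr ((mem_cylinder_comm _ _ _).1
    (mem_cylinder_firstDiff x y)) hx) fun hy ↦ ?_
  exact hlt.not_ge (firstDiff_comm x y ▸ (mem_cylinder_iff_le_firstDiff hxy.symm _).1 hy)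

theorem modelDist_of_depth_le (hxy : x ≠ y) (hx : x ≠ zeroSeq) (hle : depth a x ≤ firstDiff x y) :
    modelDist a b c x y = (1 / 2) ^ scale a b c x (firstDiff x y) := by
  have hy : y ∈ cylinder x (firstDiff x y) :=
    (mem_cylinder_comm _ _ _).1 (mem_cylinder_firstDiff x y)
  rw [modelDist, treeDist_of_ne hxy, max_eq_right]
  rw [coordinate, coordinate, depth_congr hy (notMem_cylinder_of_depth_le hx hle),
    prefixValue_eq_iff.2 (cylinder_anti x hle hy), sub_self, abs_zero]
  positivity

theorem half_pow_scale_le_modelDist (hxy : x ≠ y) :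
    (1 / 2) ^ scale a b c x (firstDiff x y) ≤ modelDist a b c x y :=
  (treeDist_of_ne hxy).symm.trans_le (le_max_right _ _)

theorem modelDist_le_of_mem_cylinder {j : ℕ} (hxy : y ∈ cylinder x j) :
    modelDist a b c x y ≤ max ((1 / 2) ^ j) ((1 / 2) ^ scale a b c x j) := by
  refine max_le_max (abs_coordinate_sub_le hxy) ?_
  rcases eq_or_ne x y with rfl | hne
  · rw [treeDist_self]
    positivity
  · rw [treeDist_of_ne hne, half_pow_le_half_pow]
    refine scale_mono ?_
    rw [firstDiff_comm]
    exact (mem_cylinder_iff_le_firstDiff hne.symm j).1 hxy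

theorem modelDist_le_one (x y : ℕ → Bool) : modelDist a b c x y ≤ 1 :=
  (modelDist_le_of_mem_cylinder (j := 0) (by simp)).trans
    (max_le (by simp) (pow_le_one₀ (by norm_num) (by norm_num)))

end Dist

section Model

variable {a b c : ℕ → ℕ}

/-- The space of binary sequences with the metric `modelDist a b c`. -/
def Model (_a _b _c : ℕ → ℕ) : Type := ℕ → Bool

namespace Model

instance : MetricSpace (Model a b c) where
  dist := modelDist a b c
  dist_self := modelDist_self
  dist_comm := modelDist_comm
  dist_triangle x y z := by
    refine max_le ((abs_sub_le _ (coordinate a y) _).trans ?_) ((treeDist_le_max x y z).trans ?_)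
    · exact add_le_add (le_max_left _ _) (le_max_left _ _)
    · exact (max_le_add_of_nonneg (treeDist_nonneg x y) (treeDist_nonneg y z)).trans
        (add_le_add (le_max_right _ _) (le_max_right _ _))
  eq_of_dist_eq_zero {x y} h := by
    by_contra hne
    exact (half_pow_scale_le_modelDist hne).not_gt (h.trans_lt (by positivity))

theorem dist_eq (x y : Model a b c) : dist x y = modelDist a b c x y := rfl

instance : BoundedSpace (Model a b c) :=
  Metric.boundedSpace_iff.2 ⟨1, modelDist_le_one⟩

theorem metricTopology_eq :
    metricTopology (inferInstance : MetricSpace (Model a b c)) = Pi.topologicalSpace := by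
  let f : (ℕ → Bool) → Model a b c := id
  have hcont : Continuous f := by
    refine continuous_iff_continuousAt.2 fun x ↦ Metric.tendsto_nhds.2 fun ε hε ↦ ?_
    obtain ⟨j, hj⟩ := exists_pow_lt_of_lt_one hε (by norm_num : (1 / 2 : ℝ) < 1)
    filter_upwards [(isOpen_cylinder _ x (j + b (leadingZeros x))).mem_nhds
      (self_mem_cylinder _ _)] with y hy
    rw [dist_comm]
    refine (modelDist_le_of_mem_cylinder hy).trans_lt (lt_of_le_of_lt (max_le ?_ ?_) hj)
    · exact half_pow_le_half_pow.2 (by omega)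
    · have := le_scale_add (a := a) (b := b) (c := c) x (j + b (leadingZeros x))
      exact half_pow_le_half_pow.2 (by omega)
  have hind := (hcont.isClosedEmbedding (f := f) fun _ _ h ↦ h).isInducing.eq_induced
  exact (hind.trans (@induced_id (Model a b c) _)).symm

end Model

end Model

/-! ### Positive results for the models -/

section Doubling

variable {a c : ℕ → ℕ} {x y z : ℕ → Bool} {j : ℕ} {r : ℝ}

theorem exists_minimal_scale_le (a b c : ℕ → ℕ) (x : ℕ → Bool) (hr : 0 < r) :
    ∃ j, (1 / 2) ^ scale a b c x j ≤ r ∧ ∀ i < j, r < (1 / 2) ^ scale a b c x i := by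
  have hex : ∃ j, (1 / 2) ^ scale a b c x j ≤ r := by
    obtain ⟨m, hm⟩ := exists_pow_lt_of_lt_one hr (by norm_num : (1 / 2 : ℝ) < 1)
    refine ⟨m + b (leadingZeros x), (half_pow_le_half_pow.2 ?_).trans hm.le⟩
    have := le_scale_add (a := a) (b := b) (c := c) x (m + b (leadingZeros x))
    omega
  classical
  exact ⟨Nat.find hex, Nat.find_spec hex, fun i hi ↦ not_le.1 (Nat.find_min hex hi)⟩

theorem mem_cylinder_of_modelDist_le {b : ℕ → ℕ} (hj : ∀ i < j, r < (1 / 2) ^ scale a b c x i)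
    (hxy : modelDist a b c x y ≤ r) : y ∈ cylinder x j := by
  rcases eq_or_ne y x with rfl | hne
  · exact self_mem_cylinder _ _
  · rw [mem_cylinder_iff_le_firstDiff hne, firstDiff_comm]
    by_contra! hlt
    exact (half_pow_scale_le_modelDist hne.symm).not_gt (hxy.trans_lt (hj _ hlt))

theorem modelDist_le_of_eq_digits (hy : y ∈ cylinder x j) (hz : z ∈ cylinder x j)
    (hj : y j = z j) (hdepth : y (max j (depth a x)) = z (max j (depth a x))) :
    modelDist a 0 c y z ≤
      max |coordinate a y - coordinate a z| ((1 / 2) ^ (scale a 0 c x j + 1)) := by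
  rcases eq_or_ne y z with heq | hne
  · rw [heq, modelDist_self]
    positivity
  have hv : j < firstDiff y z := by
    have hle : j ≤ firstDiff y z := (mem_cylinder_iff_le_firstDiff hne j).1 <| by
      rwa [mem_cylinder_iff_eq, mem_cylinder_iff_eq.1 hy, eq_comm, ← mem_cylinder_iff_eq]
    exact hle.lt_of_ne fun h ↦ apply_firstDiff_ne hne (h ▸ hj)
  rw [← scale_congr hy]
  by_cases hy₀ : y ∈ cylinder zeroSeq (firstDiff y z)
  · rw [modelDist_of_mem_cylinder hne hy₀,
      scale_of_mem_cylinder (cylinder_anti zeroSeq hv.le hy₀)]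
    exact le_max_of_le_right (half_pow_le_half_pow.2 hv)
  have hy_ne := ne_zeroSeq_of_notMem_cylinder hy₀
  rcases lt_or_ge (firstDiff y z) (depth a y) with hlt | hge
  · exact (modelDist_of_lt_depth hy₀ hlt).trans_le (le_max_left _ _)
  · rw [modelDist_of_depth_le hne hy_ne hge, scale_of_le hy_ne (by simpa)]
    refine le_max_of_le_right (half_pow_le_half_pow.2 ?_)
    by_cases hyj : y ∈ cylinder zeroSeq j
    · rw [scale_of_mem_cylinder hyj]
      simp only [Pi.zero_apply]
      omega
    have hvmax : firstDiff y z ≠ max j (depth a y) := by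
      rw [depth_congr hy ((mem_cylinder_zeroSeq_congr hy).not.1 hyj)]
      exact fun h ↦ apply_firstDiff_ne hne (h ▸ hdepth)
    rcases lt_or_ge j (depth a y) with hj' | hj'
    · rw [scale_of_lt hyj (by simpa)]
      simp only [Pi.zero_apply]
      omega
    · rw [scale_of_le hy_ne (by simpa)]
      simp only [Pi.zero_apply]
      omega

theorem Model.isDoubling : IsDoubling (Model a 0 c) := by
  refine isDoubling_of_card_le (N := 20) fun x r hr s hs hsep ↦ ?_
  obtain ⟨j, hj, hlt⟩ := exists_minimal_scale_le a 0 c x hr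
  have hdist {y : Model a 0 c} (hy : y ∈ s) : modelDist a 0 c x y ≤ r := mem_closedBall'.1 (hs hy)
  let code : Model a 0 c → ℤ × Bool × Bool := fun y ↦
    (⌊(coordinate a y - coordinate a x) * (2 / r)⌋, y j, y (max j (depth a x)))
  refine Finset.card_le_card_of_injOn (t := Finset.Icc (-2) 2 ×ˢ Finset.univ) code
    (fun y hy ↦ ?_) fun y hy z hz hyz ↦ ?_
  · have hcoord : |coordinate a y - coordinate a x| * (2 / r) ≤ 2 := by
      rw [abs_sub_comm]
      calc |coordinate a x - coordinate a y| * (2 / r) ≤ r * (2 / r) := by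
            gcongr
            exact (le_max_left _ _).trans (hdist hy)
        _ = 2 := by field_simp
    rw [← abs_of_pos (show 0 < 2 / r by positivity), ← abs_mul, abs_le] at hcoord
    simp only [code, Finset.coe_product, mem_prod, Finset.mem_coe, Finset.mem_Icc, Finset.mem_univ,
      and_true, Int.le_floor, Int.floor_le_iff]
    push_cast
    constructor <;> linarith
  · obtain ⟨hfloor, hyzj, hyzdepth⟩ : _ ∧ _ ∧ _ := by simpa only [code, Prod.mk.injEq] using hyz
    by_contra hne
    refine (hsep hy hz hne).not_ge ((modelDist_le_of_eq_digits
      (mem_cylinder_of_modelDist_le hlt (hdist hy)) (mem_cylinder_of_modelDist_le hlt (hdist hz))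
      hyzj hyzdepth).trans (max_le ?_ ?_))
    · have := (Int.abs_sub_lt_one_of_floor_eq_floor hfloor).le
      rw [← sub_mul, sub_sub_sub_cancel_right, abs_mul,
        abs_of_pos (show 0 < 2 / r by positivity)] at this
      calc |coordinate a y - coordinate a z| ≤ 1 / (2 / r) := (le_div_iff₀ (by positivity)).2 this
        _ = r / 2 := by field_simp
    · rw [pow_succ]
      linarith

end Doubling

section Ultrametric

variable {b c : ℕ → ℕ}

theorem modelDist_eq_treeDist (x y : ℕ → Bool) : modelDist 0 b c x y = treeDist 0 b c x y := by
  rcases eq_or_ne x y with rfl | hne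
  · rw [modelDist_self, treeDist_self]
  rw [treeDist_of_ne hne]
  by_cases hx : x ∈ cylinder zeroSeq (firstDiff x y)
  · rw [modelDist_of_mem_cylinder hne hx, scale_of_mem_cylinder hx]
  · exact modelDist_of_depth_le hne (ne_zeroSeq_of_notMem_cylinder hx)
      (leadingZeros_lt_of_notMem_cylinder hx)

instance : IsUltrametricDist (Model 0 b c) where
  dist_triangle_max x y z := by
    rw [Model.dist_eq, Model.dist_eq, Model.dist_eq]
    convert treeDist_le_max x y z using 2 <;> exact modelDist_eq_treeDist _ _

end Ultrametric

section Flip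

variable {a b c : ℕ → ℕ}

theorem abs_prefixValue_sub_flip (x : ℕ → Bool) (j k : ℕ) :
    |(prefixValue x (j + 1 + k) : ℝ) - prefixValue (Function.update x j !x j) (j + 1 + k)|
      = 2 ^ k := by
  induction k with
  | zero =>
    have h := prefixValue_eq_iff.2 (update_mem_cylinder x j !x j)
    cases hx : x j <;> simp_all [prefixValue]
  | succ k ih =>
    have hne : j + 1 + k ≠ j := by omega
    rw [← add_assoc, prefixValue, prefixValue, Function.update_of_ne hne]
    push_cast
    rw [add_sub_add_right_eq_sub, ← mul_sub, abs_mul, ih, pow_succ', abs_two]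

theorem firstDiff_flip (x : ℕ → Bool) (j : ℕ) : firstDiff x (Function.update x j !x j) = j :=
  firstDiff_eq (update_mem_cylinder x j _) (by simp)

open Classical in
/-- Flipping the digit `x j` moves `x` by about `2 ^ (-flipExponent a b c x j)`. -/
def flipExponent (a b c : ℕ → ℕ) (x : ℕ → Bool) (j : ℕ) : ℕ :=
  if j < depth a x then j else scale a b c x j

theorem abs_coordinate_sub_flip {x : ℕ → Bool} {j : ℕ} (hx : x ∉ cylinder zeroSeq j)
    (hj : j < depth a x) :
    |coordinate a x - coordinate a (Function.update x j !x j)| = (1 / 2) ^ (j + 1) := by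
  obtain ⟨k, hk⟩ := Nat.exists_eq_add_of_le (Nat.succ_le_of_lt hj)
  rw [coordinate, coordinate, depth_congr (update_mem_cylinder x j _) hx, hk, ← sub_div, abs_div,
    Nat.succ_eq_add_one, abs_prefixValue_sub_flip, abs_of_pos (by positivity), pow_add,
    one_div_pow]
  field_simp

theorem modelDist_flip_mem_Icc (x : ℕ → Bool) (j : ℕ) :
    modelDist a b c x (Function.update x j !x j) ∈
      Icc ((1 / 2) ^ (flipExponent a b c x j + 1)) ((1 / 2) ^ flipExponent a b c x j) := by
  have hne : x ≠ Function.update x j !x j := ne_of_apply_ne (· j) (by simp)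
  have heq {m : ℕ} (hm : flipExponent a b c x j = m)
      (hdist : modelDist a b c x (Function.update x j !x j) = (1 / 2) ^ m) :
      modelDist a b c x (Function.update x j !x j) ∈
        Icc ((1 / 2) ^ (flipExponent a b c x j + 1)) ((1 / 2) ^ flipExponent a b c x j) := by
    rw [hm, hdist]
    exact ⟨half_pow_le_half_pow.2 m.le_succ, le_rfl⟩
  by_cases hx : x ∈ cylinder zeroSeq j
  · refine heq (m := j) ?_ ?_
    · rw [flipExponent, scale_of_mem_cylinder hx, ite_self]
    · rw [modelDist_of_mem_cylinder hne (by rwa [firstDiff_flip]), firstDiff_flip]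
  have hx₀ := ne_zeroSeq_of_notMem_cylinder hx
  by_cases hj : j < depth a x
  · rw [modelDist_of_lt_depth (by rwa [firstDiff_flip]) (by rwa [firstDiff_flip]),
      abs_coordinate_sub_flip hx hj, flipExponent, if_pos hj]
    exact ⟨le_rfl, half_pow_le_half_pow.2 j.le_succ⟩
  · refine heq (if_neg hj) ?_
    rw [modelDist_of_depth_le hne hx₀ (by rwa [firstDiff_flip, ← not_lt]), firstDiff_flip]

theorem flipExponent_succ_le (x : ℕ → Bool) (j : ℕ) :
    flipExponent a b c x (j + 1) ≤ flipExponent a b c x j + c (leadingZeros x) + 1 := by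
  rcases eq_or_ne x zeroSeq with rfl | hx
  · simp only [flipExponent, scale_of_mem_cylinder (self_mem_cylinder zeroSeq _)]
    grind
  · simp only [flipExponent, scale, mem_cylinder_zeroSeq_iff hx, depth]
    grind

theorem le_flipExponent_add (x : ℕ → Bool) (j : ℕ) :
    j ≤ flipExponent a b c x j + b (leadingZeros x) := by
  rw [flipExponent]
  split_ifs
  · omega
  · exact le_scale_add x j

theorem Model.isUniformlyPerfectAt {x : Model a b c} {M : ℕ} (hM : c (leadingZeros x) ≤ M) :
    IsUniformlyPerfectAt ((1 / 2) ^ (M + 2)) x := by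
  have hflip (j : ℕ) := modelDist_flip_mem_Icc (a := a) (b := b) (c := c) x j
  refine ⟨fun j ↦ Function.update x j !x j, fun q ↦ ?_, fun j ↦ ?_, fun ε hε ↦ ?_⟩
  · have hzero : flipExponent a b c x 0 = 0 := if_pos (by simp [depth])
    refine le_trans ?_ (hflip 0).1
    calc (1 / 2) ^ (M + 2) * dist x q ≤ (1 / 2) ^ (M + 2) :=
          mul_le_of_le_one_right (by positivity) (modelDist_le_one x q)
      _ ≤ (1 / 2) ^ (flipExponent a b c x 0 + 1) := half_pow_le_half_pow.2 (by omega)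
  · calc (1 / 2) ^ (M + 2) * modelDist a b c x (Function.update x j !x j)
        ≤ (1 / 2) ^ (M + 2) * (1 / 2) ^ flipExponent a b c x j := by
          gcongr
          exact (hflip j).2
      _ ≤ (1 / 2) ^ (flipExponent a b c x (j + 1) + 1) := by
          rw [← pow_add, half_pow_le_half_pow]
          have := flipExponent_succ_le (a := a) (b := b) (c := c) x j
          omega
      _ ≤ _ := (hflip (j + 1)).1
  · obtain ⟨m, hm⟩ := exists_pow_lt_of_lt_one hε (by norm_num : (1 / 2 : ℝ) < 1)
    refine ⟨m + b (leadingZeros x), (hflip _).2.trans_lt (lt_of_le_of_lt ?_ hm)⟩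
    have := le_flipExponent_add (a := a) (b := b) (c := c) x (m + b (leadingZeros x))
    exact half_pow_le_half_pow.2 (by omega)

theorem Model.isUniformlyPerfect : IsUniformlyPerfect (Model a b 0) :=
  isUniformlyPerfect_of_forall_at (by positivity) (by norm_num)
    fun _ ↦ Model.isUniformlyPerfectAt (M := 0) le_rfl

end Flip

/-! ### Negative results for the models -/

section Piece

variable {x y : ℕ → Bool} {n : ℕ}

/-- The sequences with exactly `n` leading zeros. Each of the parameters `a n`, `b n`, `c n` of a
model only affects this piece of it. -/
def piece (n : ℕ) : Set (ℕ → Bool) := {x | x ≠ zeroSeq ∧ leadingZeros x = n}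

theorem mem_piece_iff : x ∈ piece n ↔ x ∈ cylinder zeroSeq n ∧ x n = true := by
  constructor
  · rintro ⟨hx, rfl⟩
    exact leadingZeros_spec hx
  · rintro ⟨hzeros, htrue⟩
    exact ⟨ne_of_apply_ne (· n) (by simp [htrue, zeroSeq]), leadingZeros_eq hzeros htrue⟩

theorem update_zeroSeq_mem_piece (n : ℕ) : Function.update zeroSeq n true ∈ piece n :=
  mem_piece_iff.2 ⟨update_mem_cylinder zeroSeq n true, Function.update_self ..⟩

theorem mem_piece_of_mem_cylinder {j : ℕ} (hx : x ∈ piece n) (hxy : y ∈ cylinder x j)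
    (hj : n < j) : y ∈ piece n := by
  rw [mem_piece_iff] at hx ⊢
  exact ⟨(mem_cylinder_zeroSeq_congr (cylinder_anti x hj.le hxy)).2 hx.1, (hxy n hj).trans hx.2⟩

theorem lt_firstDiff_of_mem_piece (hx : x ∈ piece n) (hy : y ∈ piece n) (hxy : x ≠ y) :
    n < firstDiff x y := by
  rw [mem_piece_iff] at hx hy
  by_contra! hle
  have hne := apply_firstDiff_ne hxy
  rcases hle.lt_or_eq with hlt | heq
  · exact hne ((hx.1 _ hlt).trans (hy.1 _ hlt).symm)
  · exact hne (heq ▸ hx.2.trans hy.2.symm)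

theorem depth_of_mem_piece {a : ℕ → ℕ} (hx : x ∈ piece n) : depth a x = n + 1 + a n := by
  rw [depth, hx.2]

end Piece

section Bounds

variable {a b c : ℕ → ℕ} {x y : ℕ → Bool} {n : ℕ}

theorem modelDist_eq_of_mem_piece (hx : x ∈ piece n) (hxy : x ≠ y)
    (hle : n + 1 + a n ≤ firstDiff x y) (hlt : firstDiff x y < n + 1 + a n + b n) :
    modelDist a b c x y = (1 / 2) ^ (n + 1 + a n) := by
  rw [← depth_of_mem_piece hx] at hle hlt ⊢
  rw [modelDist_of_depth_le hxy hx.1 hle,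
    scale_of_lt (notMem_cylinder_of_depth_le hx.1 hle) (by rwa [hx.2])]

theorem firstDiff_flip_flip {j k : ℕ} (x : ℕ → Bool) (hjk : j < k) :
    firstDiff (Function.update x j !x j) (Function.update x k !x k) = j := by
  refine firstDiff_eq (fun i hi ↦ ?_) ?_
  · rw [Function.update_of_ne (hi.trans hjk).ne, Function.update_of_ne hi.ne]
  · rw [Function.update_of_ne hjk.ne, Function.update_self]
    simp

theorem exists_equidistant_points (a b c : ℕ → ℕ) (n : ℕ) :
    ∃ point : ℕ → ℕ → Bool, (∀ k, point k ∈ piece n) ∧ ∀ k < b n, ∀ l < b n, k ≠ l →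
      modelDist a b c (point k) (point l) = (1 / 2) ^ (n + 1 + a n) := by
  let x : ℕ → Bool := Function.update zeroSeq n true
  let point (k : ℕ) : ℕ → Bool := Function.update x (n + 1 + a n + k) !x (n + 1 + a n + k)
  have hpoint (k : ℕ) : point k ∈ piece n :=
    mem_piece_of_mem_cylinder (update_zeroSeq_mem_piece n) (update_mem_cylinder x _ _) (by omega)
  have hdist {k l : ℕ} (hk : k < b n) (hkl : k < l) :
      modelDist a b c (point k) (point l) = (1 / 2) ^ (n + 1 + a n) := by
    have hv : firstDiff (point k) (point l) = n + 1 + a n + k := firstDiff_flip_flip x (by omega)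
    refine modelDist_eq_of_mem_piece (hpoint k) (ne_of_apply_ne (· (n + 1 + a n + k)) ?_)
      (by omega) (by omega)
    simp [point, hkl.ne]
  refine ⟨point, hpoint, fun k hk l hl hkl ↦ ?_⟩
  rcases hkl.lt_or_gt with h | h
  · exact hdist hk h
  · rw [modelDist_comm, hdist hl h]

theorem IsDoubling.exists_le_of_piece_subset {S : Set (Model a b c)} (hS : IsDoubling S) :
    ∃ N, ∀ n, piece n ⊆ S → b n ≤ N := by
  obtain ⟨N, hN⟩ := hS.exists_card_le 1
  refine ⟨N, fun n hn ↦ ?_⟩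
  obtain ⟨point, hpiece, hdist⟩ := exists_equidistant_points a b c n
  let pointS (k : ℕ) : S := ⟨point k, hn (hpiece k)⟩
  have hinj : InjOn pointS (Finset.range (b n)) := fun k hk l hl h ↦ by
    by_contra hkl
    have := hdist k (Finset.mem_range.1 hk) l (Finset.mem_range.1 hl) hkl
    rw [show point k = point l from congrArg Subtype.val h, modelDist_self] at this
    exact (pow_pos one_half_pos _).ne this
  classical
  have hcard := hN (pointS 0) ((1 / 2) ^ (n + 1 + a n)) (by positivity)
    ((Finset.range (b n)).image pointS) ?_ ?_
  · rwa [Finset.card_image_of_injOn hinj, Finset.card_range] at hcard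
  · rw [Finset.coe_image, image_subset_iff]
    intro k hk
    have hk' := Finset.mem_range.1 hk
    rw [mem_preimage, mem_closedBall, one_mul]
    rcases eq_or_ne k 0 with rfl | h0
    · rw [dist_self]
      positivity
    · exact (hdist k hk' 0 (by omega) h0).le
  · rw [Finset.coe_image, hinj.pairwise_image]
    exact fun k hk l hl hkl ↦ (hdist k (Finset.mem_range.1 hk) l (Finset.mem_range.1 hl) hkl).ge

theorem abs_coordinate_sub_of_mem_piece (hx : x ∈ piece n) (hy : y ∈ piece n) :
    |coordinate a x - coordinate a y| =
      |(prefixValue x (n + 1 + a n) : ℝ) - prefixValue y (n + 1 + a n)| *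
        (1 / 2) ^ (n + 1 + a n) := by
  rw [coordinate, coordinate, depth_of_mem_piece hx, depth_of_mem_piece hy, ← sub_div, abs_div,
    abs_of_pos (by positivity : (0 : ℝ) < 2 ^ (n + 1 + a n)), one_div_pow, mul_one_div]

theorem modelDist_eq_of_prefixValue_ne (hx : x ∈ piece n) (hy : y ∈ piece n)
    (hne : prefixValue y (n + 1 + a n) ≠ prefixValue x (n + 1 + a n)) :
    modelDist a b c x y =
      |(prefixValue x (n + 1 + a n) : ℝ) - prefixValue y (n + 1 + a n)| *
        (1 / 2) ^ (n + 1 + a n) := by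
  have hxy : x ≠ y := fun h ↦ hne (h ▸ rfl)
  have hlt := lt_firstDiff_of_mem_piece hx hy hxy
  rw [Ne, prefixValue_eq_iff, mem_cylinder_iff_le_firstDiff hxy.symm, firstDiff_comm, not_le] at hne
  rw [← abs_coordinate_sub_of_mem_piece hx hy]
  exact modelDist_of_lt_depth (notMem_cylinder_zeroSeq hx.1 (hx.2 ▸ hlt))
    (by rwa [depth_of_mem_piece hx])

theorem mem_piece_of_prefixValue_eq {k i : ℕ} (hi : i < 2 ^ k)
    (hx : prefixValue x (n + 1 + k) = 2 ^ k + i) : x ∈ piece n := by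
  have hmem := prefixValue_add_mem_Ico x (n + 1) k
  rw [hx, mem_Ico] at hmem
  have hone : prefixValue x (n + 1) = 1 := by
    have h1 : 0 < prefixValue x (n + 1) := by
      by_contra! h0
      simp only [nonpos_iff_eq_zero.1 h0] at hmem
      omega
    have h2 : prefixValue x (n + 1) < 2 := lt_of_mul_lt_mul_left (a := 2 ^ k) (by omega) (by omega)
    omega
  rw [prefixValue] at hone
  rw [mem_piece_iff, ← prefixValue_eq_zero_iff, ← Bool.toNat_eq_one]
  have := Bool.toNat_le (x n)
  omega

theorem IsUniformlyDisconnected.exists_le_of_piece_subset {S : Set (Model a b c)}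
    (hS : IsUniformlyDisconnected S) : ∃ N, ∀ n, piece n ⊆ S → a n ≤ N := by
  obtain ⟨N, hN⟩ := hS.exists_chain_bound
  refine ⟨N, fun n hn ↦ ?_⟩
  let T := n + 1 + a n
  let m := 2 ^ a n - 1
  have hm : m < 2 ^ a n := Nat.sub_lt (by positivity) one_pos
  have hex (i : ℕ) : ∃ x, prefixValue x T = 2 ^ a n + min i m := by
    refine exists_prefixValue_eq (lt_of_lt_of_le (b := 2 ^ (a n + 1)) ?_ ?_)
    · rw [pow_succ]
      omega
    · exact Nat.pow_le_pow_right two_pos (by omega)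
  choose point hvalue using hex
  have hpiece (i : ℕ) : point i ∈ piece n :=
    mem_piece_of_prefixValue_eq (lt_of_le_of_lt (min_le_right i m) hm) (hvalue i)
  have hdist {i j : ℕ} (hij : i < j) (hj : j ≤ m) :
      modelDist a b c (point i) (point j) = (j - i : ℝ) * (1 / 2) ^ T := by
    rw [modelDist_eq_of_prefixValue_ne (hpiece i) (hpiece j), hvalue, hvalue, min_eq_left hj,
      min_eq_left (hij.le.trans hj), abs_sub_comm]
    · push_cast
      rw [add_sub_add_left_eq_sub, abs_of_pos (by simpa)]
    · rw [hvalue, hvalue]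
      omega
  have hmN : m ≤ N := by
    refine hN m (fun i ↦ ⟨point i, hn (hpiece i)⟩) ((1 / 2) ^ T) (by positivity)
      (fun i hi ↦ ?_) ?_
    · refine (hdist i.lt_succ_self hi).le.trans_eq ?_
      push_cast
      ring
    · rcases m.eq_zero_or_pos with h0 | h0
      · rw [h0, Nat.cast_zero, zero_mul]
        exact dist_nonneg
      · exact (hdist h0 le_rfl).symm.le.trans_eq' (by simp)
  have := (a n).lt_two_pow_self
  omega

theorem modelDist_le_of_lt_half_pow (hx : x ∈ piece n)
    (hlt : modelDist a b c x y < (1 / 2) ^ (n + 1 + a n)) :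
    modelDist a b c x y ≤ (1 / 2) ^ (n + 1 + a n + c n) := by
  rcases eq_or_ne x y with rfl | hxy
  · rw [modelDist_self]
    positivity
  have hscale : n + 1 + a n < scale a b c x (firstDiff x y) := by
    by_contra! hle
    exact ((half_pow_le_half_pow.2 hle).trans (half_pow_scale_le_modelDist hxy)).not_gt hlt
  have hle : n + 1 + a n + b n ≤ firstDiff x y := by
    by_contra! h
    by_cases hx₀ : x ∈ cylinder zeroSeq (firstDiff x y)
    · rw [scale_of_mem_cylinder hx₀] at hscale
      have := (mem_cylinder_zeroSeq_iff hx.1).1 hx₀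
      rw [hx.2] at this
      omega
    · rw [scale_of_lt hx₀ (by rwa [depth_of_mem_piece hx, hx.2]), depth_of_mem_piece hx] at hscale
      exact hscale.ne rfl
  have hdepth := depth_of_mem_piece (a := a) hx
  rw [modelDist_of_depth_le hxy hx.1 (by omega), half_pow_le_half_pow,
    scale_of_le hx.1 (by rwa [hdepth, hx.2]), hx.2]
  omega

theorem modelDist_zeroSeq_of_mem_piece (hx : x ∈ piece n) :
    modelDist a b c x zeroSeq = (1 / 2) ^ n := by
  rw [← hx.2]
  exact modelDist_of_mem_cylinder hx.1 (leadingZeros_spec hx.1).1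

theorem exists_forall_le_of_le_half_pow {ρ : ℝ} (hρ : 0 < ρ) :
    ∃ N : ℕ, ∀ k : ℕ, ρ ≤ (1 / 2) ^ k → k ≤ N := by
  obtain ⟨N, hN⟩ := exists_pow_lt_of_lt_one hρ (by norm_num : (1 / 2 : ℝ) < 1)
  exact ⟨N, fun k hk ↦ half_pow_le_half_pow.1 (hN.le.trans hk)⟩

theorem IsUniformlyPerfectAt.le_half_pow {x : Model a b c} {ρ : ℝ} (hx : IsUniformlyPerfectAt ρ x)
    (hρ : 0 ≤ ρ) (hxn : x ∈ piece n) : ρ ≤ (1 / 2) ^ c n := by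
  have hq : (1 / 2) ^ (n + 1 + a n) ≤ dist x (zeroSeq : Model a b c) :=
    (half_pow_le_half_pow.2 (by omega)).trans_eq (modelDist_zeroSeq_of_mem_piece hxn).symm
  obtain ⟨y, hlt, hle⟩ := hx.exists_dist_lt hρ (by positivity) hq
  have := hle.trans (modelDist_le_of_lt_half_pow hxn hlt)
  rwa [pow_add _ (n + 1 + a n), mul_comm, mul_le_mul_iff_right₀ (by positivity)] at this

theorem IsUniformlyPerfect.exists_le (h : IsUniformlyPerfect (Model a b c)) :
    ∃ N, ∀ n, c n ≤ N := by
  obtain ⟨ρ, hρ, -, h⟩ := h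
  obtain ⟨N, hN⟩ := exists_forall_le_of_le_half_pow (half_pos hρ)
  refine ⟨N, fun n ↦ hN _ ?_⟩
  have hpiece := update_zeroSeq_mem_piece n
  have hgap := h.le_of_gap (p := (Function.update zeroSeq n true : Model a b c))
    (q := (zeroSeq : Model a b c)) (R := (1 / 2) ^ (n + 1 + a n))
    (s := (1 / 2) ^ (n + 1 + a n + c n)) (by positivity)
    ((half_pow_le_half_pow.2 (by omega)).trans_eq (modelDist_zeroSeq_of_mem_piece hpiece).symm)
    fun y hy ↦ modelDist_le_of_lt_half_pow hpiece hy
  rw [pow_add _ (n + 1 + a n), mul_left_comm, mul_comm,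
    mul_le_mul_iff_right₀ (by positivity)] at hgap
  linarith

end Bounds

/-! ### Tame subsets and quasi-symmetric maps -/

section Tame

variable {a b c a' b' c' : ℕ → ℕ} {M : ℕ}

/-- The points of a model lying in pieces on which all the parameters are at most `M`. -/
def tame (a b c : ℕ → ℕ) (M : ℕ) : Set (Model a b c) :=
  {x | a (leadingZeros x) ≤ M ∧ b (leadingZeros x) ≤ M ∧ c (leadingZeros x) ≤ M}

theorem half_pow_eq_two_pow_mul (n M : ℕ) : (1 / 2 : ℝ) ^ n = 2 ^ M * (1 / 2) ^ (n + M) := by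
  rw [pow_add, mul_left_comm, ← mul_pow, mul_one_div_cancel two_ne_zero, one_pow, mul_one]

theorem modelDist_mem_Icc_of_mem_tame {x y : ℕ → Bool} (hx : x ∈ tame a b c M) (hxy : x ≠ y) :
    modelDist a b c x y ∈
      Icc ((1 / 2) ^ (firstDiff x y + M)) (2 ^ M * (1 / 2) ^ firstDiff x y) := by
  obtain ⟨ha, hb, hc⟩ := hx
  constructor
  · refine (half_pow_le_half_pow.2 ?_).trans (half_pow_scale_le_modelDist hxy)
    rw [scale]
    split_ifs with hzeros hlt
    · omega
    · have := leadingZeros_lt_of_notMem_cylinder hzeros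
      rw [depth]
      omega
    · omega
  · have hscale := le_scale_add (a := a) (b := b) (c := c) x (firstDiff x y)
    refine (modelDist_le_of_mem_cylinder ((mem_cylinder_comm _ _ _).1
      (mem_cylinder_firstDiff x y))).trans (max_le ?_ ?_)
    · exact le_mul_of_one_le_left (by positivity) (one_le_pow₀ one_le_two)
    · rw [half_pow_eq_two_pow_mul _ M]
      gcongr ?_ * ?_
      exact half_pow_le_half_pow.2 (by omega)

theorem modelDist_zero_eq {x y : ℕ → Bool} (hxy : x ≠ y) :
    modelDist 0 0 0 x y = (1 / 2) ^ firstDiff x y := by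
  have h := modelDist_mem_Icc_of_mem_tame (a := 0) (b := 0) (c := 0) (M := 0) (x := x)
    ⟨le_rfl, le_rfl, le_rfl⟩ hxy
  simpa only [add_zero, pow_zero, one_mul, Icc_self, mem_singleton_iff] using h

theorem modelDist_zero_le_mul_modelDist {x : ℕ → Bool} (hx : x ∈ tame a b c M) (y : ℕ → Bool) :
    modelDist 0 0 0 x y ≤ 2 ^ M * modelDist a b c x y := by
  rcases eq_or_ne x y with rfl | hxy
  · simp only [modelDist_self, mul_zero, le_refl]
  · rw [modelDist_zero_eq hxy, half_pow_eq_two_pow_mul _ M]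
    gcongr
    exact (modelDist_mem_Icc_of_mem_tame hx hxy).1

theorem modelDist_le_mul_modelDist_zero {x : ℕ → Bool} (hx : x ∈ tame a b c M) (y : ℕ → Bool) :
    modelDist a b c x y ≤ 2 ^ M * modelDist 0 0 0 x y := by
  rcases eq_or_ne x y with rfl | hxy
  · simp only [modelDist_self, mul_zero, le_refl]
  · rw [modelDist_zero_eq hxy]
    exact (modelDist_mem_Icc_of_mem_tame hx hxy).2

theorem isQSEmbedding_tame (a b c : ℕ → ℕ) (M : ℕ) :
    IsQSEmbedding (Y := Model 0 0 0) fun x : tame a b c M ↦ x.1 :=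
  .of_lipschitzWith (C := 2 ^ M) (C' := 2 ^ M)
    (.of_dist_le_mul fun x y ↦ mod_cast modelDist_zero_le_mul_modelDist x.2 y.1)
    (.of_le_mul_dist fun x y ↦ mod_cast modelDist_le_mul_modelDist_zero x.2 y.1)

theorem IsQSEmbedding.exists_le_of_piece_subset {f : Model a b c ≃ Model a' b' c'}
    (hf : IsQSEmbedding f) (M : ℕ) :
    ∃ N, ∀ n, piece n ⊆ f ⁻¹' tame a' b' c' M → a n ≤ N ∧ b n ≤ N ∧ c n ≤ N := by
  have hS := (isQSEmbedding_tame a' b' c' M).comp (hf.restrictPreimage _)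
  obtain ⟨A, hA⟩ := (isUniformlyDisconnected_of_isUltrametricDist.of_isQSEmbedding
    hS).exists_le_of_piece_subset
  obtain ⟨B, hB⟩ := (Model.isDoubling.of_isQSEmbedding hS).exists_le_of_piece_subset
  obtain ⟨ρ, hρ, hperfect⟩ :=
    hf.exists_isUniformlyPerfectAt (by positivity : (0 : ℝ) < (1 / 2) ^ (M + 2))
  obtain ⟨C, hC⟩ := exists_forall_le_of_le_half_pow hρ
  refine ⟨max A (max B C), fun n hn ↦ ?_⟩
  have hpiece := update_zeroSeq_mem_piece n
  have hcn := hC _ ((hperfect _ (Model.isUniformlyPerfectAt (hn hpiece).2.2)).le_half_pow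
    hρ.le hpiece)
  have han := hA n hn
  have hbn := hB n hn
  omega

end Tame

/-! ### Factorially sparse parameters -/

section Sparse

variable {J : Set ℕ} {a b c a' b' c' : ℕ → ℕ} {k m n : ℕ}

open scoped Nat

/-- The parameter sequence of the models used below: it takes the value `k` at `(k + 1)!` for
`k ∈ I`, and vanishes elsewhere. -/
def sparse (I : Set ℕ) : ℕ → ℕ := Function.extend (fun k ↦ (k + 1)!) (I.indicator id) 0

theorem factorial_succ_injective : Function.Injective fun k : ℕ ↦ (k + 1)! :=
  (strictMono_nat_of_lt_succ fun k ↦ (Nat.factorial_lt k.succ_pos).2 (k + 1).lt_succ_self).injective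

theorem sparse_factorial_succ (hk : k ∈ J) : sparse J (k + 1)! = k := by
  rw [sparse, factorial_succ_injective.extend_apply, indicator_of_mem hk, id]

theorem exists_of_sparse_ne_zero (hn : sparse J n ≠ 0) : ∃ k ∈ J, n = (k + 1)! := by
  by_cases hex : ∃ k, (k + 1)! = n
  · obtain ⟨k, rfl⟩ := hex
    rw [sparse, factorial_succ_injective.extend_apply] at hn
    exact ⟨k, mem_of_indicator_ne_zero hn, rfl⟩
  · exact absurd (Function.extend_apply' _ _ _ hex) hn

theorem le_of_factorial_le_mul {C : ℕ} (h : m ! ≤ C * (n ! + 1)) (hm : 2 * C < m) : m ≤ n := by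
  by_contra! hlt
  obtain ⟨m, rfl⟩ := Nat.exists_eq_succ_of_ne_zero (Nat.ne_zero_of_lt hlt)
  have hle : n ! ≤ m ! := Nat.factorial_le (Nat.le_of_lt_succ hlt)
  refine h.not_gt ?_
  calc C * (n ! + 1) ≤ C * (m ! + m !) := by gcongr; exact m.factorial_pos
    _ = 2 * C * m ! := by ring
    _ < (m + 1) * m ! := by gcongr
    _ = (m + 1)! := (m.factorial_succ).symm

theorem IsQSEmbedding.exists_leadingZeros_le_add {f : Model a b c → Model a' b' c'}
    (hf : IsQSEmbedding f) (h0 : f zeroSeq = zeroSeq) :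
    ∃ m, ∀ x ≠ zeroSeq, ∀ y ≠ zeroSeq, leadingZeros y ≤ leadingZeros x + 1 →
      leadingZeros (f y) ≤ leadingZeros (f x) + m := by
  obtain ⟨K, -, h⟩ := hf.exists_bound 2 two_pos
  obtain ⟨m, hm⟩ := pow_unbounded_of_one_lt K one_lt_two
  have hdist {a b c : ℕ → ℕ} {x : ℕ → Bool} (hx : x ≠ zeroSeq) :
      modelDist a b c zeroSeq x = (1 / 2) ^ leadingZeros x :=
    (modelDist_comm _ _).trans (modelDist_zeroSeq_of_mem_piece ⟨hx, rfl⟩)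
  have hne {x : Model a b c} (hx : x ≠ zeroSeq) : f x ≠ zeroSeq := h0 ▸ hf.injective.ne hx
  refine ⟨m, fun x hx y hy hle ↦ ?_⟩
  have hxy : modelDist a b c zeroSeq x ≤ 2 * modelDist a b c zeroSeq y := by
    rw [hdist hx, hdist hy, half_pow_eq_two_pow_mul _ 1, pow_one]
    gcongr 2 * ?_
    exact half_pow_le_half_pow.2 hle
  have hfxy := h _ _ _ hxy
  rw [Model.dist_eq, Model.dist_eq, h0, hdist (hne hx), hdist (hne hy)] at hfxy
  rw [← half_pow_le_half_pow, ← mul_le_mul_iff_right₀ (pow_pos two_pos m),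
    ← half_pow_eq_two_pow_mul]
  exact hfxy.trans (by gcongr)

theorem IsQSEmbedding.exists_leadingZeros_le_mul {f : Model a b c → Model a' b' c'}
    (hf : IsQSEmbedding f) (h0 : f zeroSeq = zeroSeq) :
    ∃ C, ∀ x ≠ zeroSeq, leadingZeros (f x) ≤ C * (leadingZeros x + 1) := by
  obtain ⟨m, hm⟩ := hf.exists_leadingZeros_le_add h0
  let y (n : ℕ) : ℕ → Bool := Function.update zeroSeq n true
  have hy (n : ℕ) : y n ≠ zeroSeq ∧ leadingZeros (y n) = n := update_zeroSeq_mem_piece n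
  have hind (n : ℕ) : leadingZeros (f (y n)) ≤ leadingZeros (f (y 0)) + m * n := by
    induction n with
    | zero => simp
    | succ n ih =>
      have := hm (y n) (hy n).1 (y (n + 1)) (hy _).1 (by rw [(hy _).2, (hy _).2])
      rw [mul_add_one]
      omega
  refine ⟨leadingZeros (f (y 0)) + m, fun x hx ↦ ?_⟩
  have := hm (y (leadingZeros x)) (hy _).1 x hx (by rw [(hy _).2]; omega)
  have := hind (leadingZeros x)
  nlinarith

theorem IsQSEmbedding.exists_leadingZeros_ne_factorial {f : Model a b c ≃ Model a' b' c'}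
    (hf : IsQSEmbedding f) (h0 : f zeroSeq = zeroSeq) :
    ∃ K, ∀ k ≥ K, ∀ x ∈ piece (k + 1)!, ∀ j ≠ k, leadingZeros (f x) ≠ (j + 1)! := by
  obtain ⟨C, hC⟩ := hf.exists_leadingZeros_le_mul h0
  obtain ⟨C', hC'⟩ := hf.symm.exists_leadingZeros_le_mul (f.symm_apply_eq.2 h0.symm)
  refine ⟨2 * C + 2 * C', fun k hk x hx j hj hlz ↦ hj ?_⟩
  have hfx : f x ≠ zeroSeq := h0 ▸ f.injective.ne hx.1
  have hupp : (j + 1)! ≤ C * ((k + 1)! + 1) := by simpa only [hlz, hx.2] using hC x hx.1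
  have hlow : (k + 1)! ≤ C' * ((j + 1)! + 1) := by
    have := hC' (f x) hfx
    rwa [f.symm_apply_apply x, hlz, hx.2] at this
  have hkj : k + 1 ≤ j + 1 := le_of_factorial_le_mul hlow (by omega)
  have hjk : j + 1 ≤ k + 1 := le_of_factorial_le_mul hupp (by omega)
  omega

theorem IsQSEmbedding.exists_apply_mem_piece {f : Model a b c → Model a' b' c'}
    (hf : IsQSEmbedding f) (h0 : f zeroSeq ≠ zeroSeq) :
    ∃ K, ∀ n ≥ K, ∀ x ∈ piece n, f x ∈ piece (leadingZeros (f zeroSeq)) := by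
  let T := leadingZeros (f zeroSeq) + 1
  let s := scale a' b' c' (f zeroSeq) T
  obtain ⟨δ, hδ, h⟩ := hf.exists_small ((1 / 2) ^ (s + 1)) (by positivity)
  obtain ⟨K, hK⟩ := exists_pow_lt_of_lt_one hδ (by norm_num : (1 / 2 : ℝ) < 1)
  refine ⟨K, fun n hn x hx ↦ mem_piece_of_mem_cylinder (j := T) ⟨h0, rfl⟩ ?_ (Nat.lt_succ_self _)⟩
  let y : ℕ → Bool := Function.update zeroSeq 0 true
  have hxy : modelDist a b c zeroSeq x ≤ δ * modelDist a b c zeroSeq y := by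
    rw [modelDist_comm, modelDist_zeroSeq_of_mem_piece hx, modelDist_comm _ y,
      modelDist_zeroSeq_of_mem_piece (update_zeroSeq_mem_piece 0), pow_zero, mul_one]
    exact (half_pow_le_half_pow.2 hn).trans hK.le
  refine mem_cylinder_of_modelDist_le (a := a') (b := b') (c := c') (r := (1 / 2) ^ (s + 1))
    (fun i hi ↦ ?_) ?_
  · have : scale a' b' c' (f zeroSeq) i ≤ s := scale_mono hi.le
    exact pow_lt_pow_right_of_lt_one₀ (by norm_num) (by norm_num) (by omega)
  · exact (h _ _ _ hxy).trans (mul_le_of_le_one_right (by positivity) (modelDist_le_one _ _))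

theorem IsQSEmbedding.exists_piece_subset_tame {f : Model a b c ≃ Model a' b' c'}
    (hf : IsQSEmbedding f) (ha : a' ≤ sparse J) (hb : b' ≤ sparse J) (hc : c' ≤ sparse J) :
    ∃ M K, ∀ k ≥ K, k ∉ J → piece (k + 1)! ⊆ f ⁻¹' tame a' b' c' M := by
  by_cases h0 : f zeroSeq = zeroSeq
  · obtain ⟨K, hK⟩ := hf.exists_leadingZeros_ne_factorial h0
    refine ⟨0, K, fun k hk hkJ x hx ↦ ?_⟩
    have hzero : sparse J (leadingZeros (f x)) = 0 := by
      by_contra hne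
      obtain ⟨j, hj, hlz⟩ := exists_of_sparse_ne_zero hne
      exact hK k hk x hx j (fun h ↦ hkJ (h ▸ hj)) hlz
    exact ⟨hzero ▸ ha _, hzero ▸ hb _, hzero ▸ hc _⟩
  · obtain ⟨K, hK⟩ := hf.exists_apply_mem_piece h0
    refine ⟨sparse J (leadingZeros (f zeroSeq)), K, fun k hk _ x hx ↦ ?_⟩
    have hlz : leadingZeros (f x) = leadingZeros (f zeroSeq) :=
      (hK _ (hk.trans (k.le_succ.trans (Nat.self_le_factorial _))) x hx).2
    exact ⟨hlz ▸ ha _, hlz ▸ hb _, hlz ▸ hc _⟩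

end Sparse

/-! ### The family of pairwise inequivalent models -/

section TypeModel

open scoped Nat

variable {u v w : Bool} {I J : Set ℕ}

/-- The model of type `(u, v, w)` associated with an infinite index set `I`: each property that
is to fail is destroyed on the pieces `(k + 1)!` with `k ∈ I`. -/
abbrev TypeModel (u v w : Bool) (I : Set ℕ) : Type :=
  Model (cond v 0 (sparse I)) (cond u 0 (sparse I)) (cond w 0 (sparse I))

theorem not_exists_forall_sparse_le (hI : I.Infinite) : ¬∃ N, ∀ n, sparse I n ≤ N := by
  rintro ⟨N, hN⟩
  obtain ⟨k, hk, hlt⟩ := hI.exists_gt N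
  exact hlt.not_ge ((sparse_factorial_succ hk).symm.trans_le (hN _))

theorem TypeModel.hasType (hI : I.Infinite) : HasType (TypeModel u v w I) u v w := by
  have hval {a b c : ℕ → ℕ} : IsQSEmbedding ((↑) : ↥(univ : Set (Model a b c)) → Model a b c) :=
    .of_isometry isometry_subtype_coe
  have hunbounded := not_exists_forall_sparse_le hI
  refine ⟨⟨fun h ↦ ?_, ?_⟩, ⟨fun h ↦ ?_, ?_⟩, ⟨fun h ↦ ?_, ?_⟩⟩
  · obtain ⟨N, hN⟩ := (h.of_isQSEmbedding hval).exists_le_of_piece_subset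
    cases u
    · exact absurd ⟨N, fun n ↦ hN n (subset_univ _)⟩ hunbounded
    · rfl
  · rintro rfl
    exact Model.isDoubling
  · obtain ⟨N, hN⟩ := (h.of_isQSEmbedding hval).exists_le_of_piece_subset
    cases v
    · exact absurd ⟨N, fun n ↦ hN n (subset_univ _)⟩ hunbounded
    · rfl
  · rintro rfl
    exact isUniformlyDisconnected_of_isUltrametricDist (X := Model 0 _ _)
  · cases w
    · exact absurd h.exists_le hunbounded
    · rfl
  · rintro rfl
    exact Model.isUniformlyPerfect

theorem TypeModel.not_isQSEmbedding (h : (u, v, w) ≠ (true, true, true))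
    (hIJ : (I \ J).Infinite) (f : TypeModel u v w I ≃ TypeModel u v w J) : ¬IsQSEmbedding f := by
  intro hf
  have hcond (t : Bool) : cond t 0 (sparse J) ≤ sparse J := by cases t <;> simp
  obtain ⟨M, K, htame⟩ := hf.exists_piece_subset_tame (hcond v) (hcond u) (hcond w)
  obtain ⟨N, hN⟩ := hf.exists_le_of_piece_subset M
  obtain ⟨k, ⟨hkI, hkJ⟩, hk⟩ := hIJ.exists_gt (max K N)
  obtain ⟨hv, hu, hw⟩ := hN _ (htame k ((le_max_left K N).trans hk.le) hkJ)
  have hlt : N < sparse I (k + 1)! :=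
    ((le_max_right K N).trans_lt hk).trans_eq (sparse_factorial_succ hkI).symm
  cases v
  · exact hlt.not_ge hv
  cases u
  · exact hlt.not_ge hu
  cases w
  · exact hlt.not_ge hw
  · exact h rfl

end TypeModel

section PrefixSet

variable {x y : ℕ → Bool}

/-- The prefixes of `x`, encoded as natural numbers. Distinct sequences have only finitely many
prefixes in common, so these form an almost disjoint family of continuum many sets. -/
def prefixSet (x : ℕ → Bool) : Set ℕ := range fun n ↦ Nat.pair n (prefixValue x n)

theorem infinite_prefixSet (x : ℕ → Bool) : (prefixSet x).Infinite :=
  infinite_range_of_injective fun _ _ h ↦ (Nat.pair_eq_pair.1 h).1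

theorem infinite_prefixSet_diff (hxy : x ≠ y) : (prefixSet x \ prefixSet y).Infinite := by
  refine infinite_of_forall_exists_gt fun k ↦ ?_
  have hlt : firstDiff x y < max (firstDiff x y) k + 1 := Nat.lt_succ_of_le (le_max_left _ _)
  refine ⟨_, ⟨⟨max (firstDiff x y) k + 1, rfl⟩, ?_⟩,
    (Nat.lt_succ_of_le (le_max_right _ _)).trans_le (Nat.left_le_pair _ _)⟩
  rintro ⟨n, hn⟩
  obtain ⟨rfl, hvalue⟩ := Nat.pair_eq_pair.1 hn
  exact apply_firstDiff_ne hxy (prefixValue_eq_iff.1 hvalue _ hlt).symm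

end PrefixSet

theorem exists_isQSEmbedding_of_eqvGen {X ι : Type*} {m : ι → MetricSpace X} {i j : ι}
    (h : Relation.EqvGen (fun i j ↦ QSEquiv X X (m i) (m j)) i j) :
    ∃ f : X ≃ X, @IsQSEmbedding X X (m i) (m j) f := by
  induction h with
  | rel i j h =>
    obtain ⟨f, hf⟩ := h
    exact ⟨_, @IsQuasiSymmetric.isQSEmbedding X X (m i) (m j) _ hf (Equiv.injective _)⟩
  | refl i =>
    let := m i
    exact ⟨.refl X, .of_isometry isometry_id⟩
  | symm i j _ ih =>
    obtain ⟨f, hf⟩ := ih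
    exact ⟨f.symm, @IsQSEmbedding.symm X X (m i) (m j) f hf⟩
  | trans i j k _ _ ih₁ ih₂ =>
    obtain ⟨f, hf⟩ := ih₁
    obtain ⟨g, hg⟩ := ih₂
    exact ⟨f.trans g, @IsQSEmbedding.comp X X X (m i) (m j) (m k) g f hg hf⟩

theorem statement_0 (u v w : Bool) (h : (u, v, w) ≠ (true, true, true)) :
    Cardinal.mk (Quot fun (m₁ m₂ : {m : MetricSpace (ℕ → Bool) //
        metricTopology m = Pi.topologicalSpace ∧ @HasType (ℕ → Bool) m u v w}) =>
        QSEquiv (ℕ → Bool) (ℕ → Bool) m₁.1 m₂.1) = Cardinal.continuum := by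
  refine le_antisymm (Cardinal.mk_quot_le.trans
    ((Cardinal.mk_subtype_mono fun _ hm ↦ hm.1).trans mk_metricSpace_le_continuum)) ?_
  let metric (x : ℕ → Bool) : {m : MetricSpace (ℕ → Bool) //
      metricTopology m = Pi.topologicalSpace ∧ @HasType (ℕ → Bool) m u v w} :=
    ⟨(inferInstance : MetricSpace (TypeModel u v w (prefixSet x))),
      Model.metricTopology_eq, TypeModel.hasType (infinite_prefixSet x)⟩
  have hinj : Function.Injective fun x ↦
      Quot.mk (fun m₁ m₂ ↦ QSEquiv _ _ m₁.1 m₂.1) (metric x) := by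
    intro x y hxy
    by_contra hne
    obtain ⟨f, hf⟩ := exists_isQSEmbedding_of_eqvGen (m := Subtype.val) (Quot.eqvGen_exact hxy)
    exact TypeModel.not_isQSEmbedding h (infinite_prefixSet_diff hne) f hf
  simpa using Cardinal.mk_le_of_injective hinj

end
end

section
/- For every triple (u,v,w) ∈ {0,1}³ with (u,v,w) ≠ (1,1,1), there exists a metric d on 2^ℕ = (ℕ → {0,1}) inducing the product topology such that (2^ℕ, d) has type (u,v,w) and, for each of the three properties P ∈ {doubling, uniform disconnectedness, uniform perfectness} that (2^ℕ, d) fails, no point of 2^ℕ has a neighborhood that, as a metric subspace, satisfies P (i.e., S_P(2^ℕ,d) = 2^ℕ). -/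
open Metric Set
open scoped ENNReal NNReal

noncomputable section

/-!
The Cantor space is homeomorphic to the space of sequences whose `k`-th entry lies in a finite
block `E k`, here a grid with the supremum metric. Let two sequences be at the distance of their
entries at the first index `k` where they differ, scaled by `t k`, with scales decreasing so fast
that different blocks do not interfere. Bounds that hold uniformly for all blocks then pass to the
whole space, while every neighbourhood of every point contains similar copies of all but finitely
many blocks, so that a property whose constants deteriorate along the blocks fails in every
neighbourhood. Bounded dimensions of the grids make the space doubling, bounded side lengths make it
uniformly disconnected, and bounded gaps between consecutive scales make it uniformly perfect. These
three parameters can be chosen independently: each is either kept bounded or sent to infinity.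
-/

open Filter Topology PiNat

/-- The doubling property with an explicit constant: every closed ball of radius `r` is covered by
at most `N` closed balls of radius `r / 2`. Uniformity of `N` over a family of spaces can be
expressed with it. -/
def IsDoublingWith (X : Type*) [MetricSpace X] (N : ℕ) : Prop :=
  ∀ (x : X) (r : ℝ), ∃ c : Finset X, c.card ≤ N ∧ closedBall x r ⊆ ⋃ y ∈ c, closedBall y (r / 2)

section Properties

variable {X Y : Type*} [MetricSpace X] [MetricSpace Y]

namespace IsDoublingWith

variable {N : ℕ}

theorem mono {M : ℕ} (h : IsDoublingWith X N) (hNM : N ≤ M) : IsDoublingWith X M := fun x r ↦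
  (h x r).imp fun _ hc ↦ ⟨hc.1.trans hNM, hc.2⟩

theorem exists_cover_div_four (h : IsDoublingWith X N) (x : X) (r : ℝ) :
    ∃ c : Finset X, c.card ≤ N ^ 2 ∧ closedBall x r ⊆ ⋃ y ∈ c, closedBall y (r / 4) := by
  classical
  obtain ⟨c, hc, hcov⟩ := h x r
  choose d hd hdcov using fun y ↦ h y (r / 2)
  refine ⟨c.biUnion d, ?_, hcov.trans (iUnion₂_subset fun y hy ↦ ?_)⟩
  · calc (c.biUnion d).card ≤ c.card * N := Finset.card_biUnion_le_card_mul _ _ _ fun y _ ↦ hd y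
      _ ≤ N ^ 2 := by rw [sq]; gcongr
  · rw [show r / 4 = r / 2 / 2 by ring]
    exact (hdcov y).trans
      (biUnion_subset_biUnion_left fun z hz ↦ Finset.mem_biUnion.mpr ⟨y, hy, hz⟩)

theorem of_similarity (h : IsDoublingWith X N) {g : Y → X} {a : ℝ} (ha : 0 < a)
    (hg : ∀ p q, dist (g p) (g q) = a * dist p q) : IsDoublingWith Y (N ^ 2) := by
  classical
  intro p r
  obtain ⟨c, hc, hcov⟩ := h.exists_cover_div_four (g p) (a * r)
  -- Each ball of the cover is replaced by the ball of twice the radius around a point of `Y` in it.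
  have hcenter (z : X) :
      ∃ w, ∀ q, g q ∈ closedBall z (a * r / 4) → g w ∈ closedBall z (a * r / 4) := by
    by_cases hz : ∃ q, g q ∈ closedBall z (a * r / 4)
    · exact hz.imp fun _ hw _ _ ↦ hw
    · exact ⟨p, fun q hq ↦ (hz ⟨q, hq⟩).elim⟩
  choose w hw using hcenter
  refine ⟨c.image w, Finset.card_image_le.trans hc, fun q hq ↦ ?_⟩
  have hgq : g q ∈ closedBall (g p) (a * r) := by
    rw [mem_closedBall, hg]
    exact mul_le_mul_of_nonneg_left hq ha.le
  obtain ⟨z, hz, hqz⟩ := mem_iUnion₂.mp (hcov hgq)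
  refine mem_iUnion₂.mpr ⟨w z, Finset.mem_image_of_mem w hz, ?_⟩
  have hdist : a * dist q (w z) ≤ a * (r / 2) := by
    rw [← hg]
    linarith [dist_triangle_right (g q) (g (w z)) z, mem_closedBall.mp hqz,
      mem_closedBall.mp (hw z q hqz)]
  exact le_of_mul_le_mul_left hdist ha

theorem card_le_sq_of_separated (h : IsDoublingWith X N) {ι : Type*} [Fintype ι] {z : ι → X} {x : X}
    {r : ℝ} (hball : ∀ i, z i ∈ closedBall x r) (hsep : ∀ i j, i ≠ j → r / 2 < dist (z i) (z j)) :
    Fintype.card ι ≤ N ^ 2 := by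
  obtain ⟨c, hc, hcov⟩ := h.exists_cover_div_four x r
  choose y hyc hy using fun i ↦ mem_iUnion₂.mp (hcov (hball i))
  refine le_trans (Finset.card_le_card_of_injOn y (fun i _ ↦ hyc i) fun i _ j _ hij ↦ ?_) hc
  by_contra hne
  linarith [hsep i j hne, dist_triangle_right (z i) (z j) (y i), mem_closedBall.mp (hy i),
    mem_closedBall.mp (hij ▸ hy j)]

theorem pi {ι : Type*} [Fintype ι] (h : IsDoublingWith X N) :
    IsDoublingWith (ι → X) (N ^ Fintype.card ι) := by
  classical
  intro x r
  rcases lt_or_ge r 0 with hr | hr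
  · exact ⟨∅, by simp, by simp [closedBall_eq_empty.mpr hr]⟩
  choose c hc hcov using fun i ↦ h (x i) r
  refine ⟨Fintype.piFinset c, ?_, fun y hy ↦ ?_⟩
  · rw [Fintype.card_piFinset]
    exact Finset.prod_le_pow_card _ _ _ fun i _ ↦ hc i
  · rw [closedBall_pi x hr] at hy
    choose z hzc hz using fun i ↦ mem_iUnion₂.mp (hcov i (hy i (mem_univ i)))
    refine mem_iUnion₂.mpr ⟨z, Fintype.mem_piFinset.mpr hzc, ?_⟩
    exact (dist_pi_le_iff (by positivity)).mpr hz

end IsDoublingWith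

theorem isDoublingWith_real : IsDoublingWith ℝ 2 := by
  refine fun x r ↦ ⟨{x - r / 2, x + r / 2}, Finset.card_le_two, fun y hy ↦ ?_⟩
  rw [Real.closedBall_eq_Icc] at hy
  rcases le_total y x with hyx | hyx
  · refine mem_iUnion₂.mpr ⟨x - r / 2, by simp, ?_⟩
    rw [Real.closedBall_eq_Icc]
    constructor <;> linarith [hy.1]
  · refine mem_iUnion₂.mpr ⟨x + r / 2, by simp, ?_⟩
    rw [Real.closedBall_eq_Icc]
    constructor <;> linarith [hy.2]

theorem apply_eq_apply_zero_of_step {α : Type*} {N : ℕ} {x : ℕ → α}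
    (h : ∀ i, i + 1 ≤ N → x i = x (i + 1)) :
    ∀ i ≤ N, x i = x 0 := by
  intro i
  induction i with
  | zero => exact fun _ ↦ rfl
  | succ i ih => exact fun hi ↦ (h i hi).symm.trans (ih (by omega))

namespace IsUniformlyDisconnectedWith

theorem of_similarity {δ : ℝ} (h : IsUniformlyDisconnectedWith X δ) {g : Y → X} {a : ℝ}
    (ha : 0 < a) (hg : ∀ p q, dist (g p) (g q) = a * dist p q) :
    IsUniformlyDisconnectedWith Y δ := by
  intro N x hx i hi
  have htriv := h N (g ∘ x) (fun j hj hjN ↦ ?_) i hi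
  · have : a * dist (x i) (x 0) = 0 := by rw [← hg]; exact dist_eq_zero.mpr htriv
    simpa [ha.ne'] using this
  · calc dist (g (x (j - 1))) (g (x j)) = a * dist (x (j - 1)) (x j) := hg _ _
      _ ≤ a * (δ * dist (x 0) (x N)) := by gcongr; exact hx j hj hjN
      _ = δ * dist (g (x 0)) (g (x N)) := by rw [hg]; ring

theorem of_one_le_dist {δ D : ℝ} (hδ : 0 ≤ δ) (hδD : δ * D < 1)
    (hsep : ∀ p q : X, p ≠ q → 1 ≤ dist p q) (hD : ∀ p q : X, dist p q ≤ D) :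
    IsUniformlyDisconnectedWith X δ := by
  refine fun N x hx ↦ apply_eq_apply_zero_of_step fun i hi ↦ ?_
  by_contra hne
  have hstep : dist (x i) (x (i + 1)) ≤ δ * dist (x 0) (x N) := hx (i + 1) (by omega) hi
  linarith [hsep _ _ hne, mul_le_mul_of_nonneg_left (hD (x 0) (x N)) hδ]

end IsUniformlyDisconnectedWith

theorem isUniformlyPerfect_univ (h : IsUniformlyPerfect X) : IsUniformlyPerfect (univ : Set X) := by
  obtain ⟨ρ, hρ, hρ1, h⟩ := h
  have hdiam : diam (univ : Set (univ : Set X)) = diam (univ : Set X) := by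
    rw [← isometry_subtype_coe.diam_range, Subtype.range_coe]
  refine ⟨ρ, hρ, hρ1, fun x r hr hrd ↦ ?_⟩
  obtain ⟨y, hy⟩ := h x r hr (hdiam ▸ hrd)
  exact ⟨⟨y, mem_univ y⟩, hy⟩

theorem not_isDoubling_of_mem_SD {x : X} (hx : x ∈ SD X) : ¬ IsDoubling X := by
  rintro ⟨N, hN⟩
  refine hx univ univ_mem ⟨N ^ 2, ?_⟩
  exact IsDoublingWith.of_similarity (N := N) hN (g := Subtype.val) one_pos fun _ _ ↦
    (one_mul _).symm

theorem not_isUniformlyDisconnected_of_mem_SUD {x : X} (hx : x ∈ SUD X) :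
    ¬ IsUniformlyDisconnected X := by
  rintro ⟨δ, hδ, hδ1, h⟩
  exact hx univ univ_mem ⟨δ, hδ, hδ1,
    h.of_similarity (g := Subtype.val) one_pos fun _ _ ↦ (one_mul _).symm⟩

theorem not_isUniformlyPerfect_of_mem_SUP {x : X} (hx : x ∈ SUP X) : ¬ IsUniformlyPerfect X :=
  fun h ↦ hx univ univ_mem (isUniformlyPerfect_univ h)

theorem hasType_of_eq_univ [Nonempty X] {u v w : Bool}
    (hu : u = true → IsDoubling X) (hu' : u = false → SD X = univ)
    (hv : v = true → IsUniformlyDisconnected X) (hv' : v = false → SUD X = univ)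
    (hw : w = true → IsUniformlyPerfect X) (hw' : w = false → SUP X = univ) :
    HasType X u v w := by
  obtain ⟨x⟩ := ‹Nonempty X›
  have iff_of {b : Bool} {P : Prop} (h : b = true → P) (h' : b = false → ¬ P) :
      P ↔ b = true := by
    cases b <;> simp_all
  exact ⟨iff_of hu fun h ↦ not_isDoubling_of_mem_SD (hu' h ▸ mem_univ x),
    iff_of hv fun h ↦ not_isUniformlyDisconnected_of_mem_SUD (hv' h ▸ mem_univ x),
    iff_of hw fun h ↦ not_isUniformlyPerfect_of_mem_SUP (hw' h ▸ mem_univ x)⟩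

end Properties

section BlockDist

variable {E : ℕ → Type*} [∀ k, MetricSpace (E k)] {t D : ℕ → ℝ}

/-- The distance between two sequences whose `k`-th entries lie in the metric space `E k`: the
distance of their entries at the first index `k` where they differ, rescaled by `t k`. Since
`firstDiff x x = 0`, it vanishes on the diagonal. -/
def blockDist (t : ℕ → ℝ) (x y : ∀ k, E k) : ℝ :=
  t (firstDiff x y) * dist (x (firstDiff x y)) (y (firstDiff x y))

/-- The conditions under which `blockDist t` is a metric on `∀ k, E k`: the points of `E k` are at
mutual distances between `1` and `D k`, and the rescaled copy of `E (k + 1)` is smaller than half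
the minimal distance `t k` of the rescaled copy of `E k`. -/
structure IsBlockSequence (E : ℕ → Type*) [∀ k, MetricSpace (E k)] (t D : ℕ → ℝ) : Prop where
  scale_pos : ∀ k, 0 < t k
  one_le_dist : ∀ k (p q : E k), p ≠ q → 1 ≤ dist p q
  dist_le : ∀ k (p q : E k), dist p q ≤ D k
  one_le_diam : ∀ k, 1 ≤ D k
  decay : ∀ k, t (k + 1) * D (k + 1) ≤ t k / 2

theorem blockDist_self (t : ℕ → ℝ) (x : ∀ k, E k) : blockDist t x x = 0 := by
  rw [blockDist, dist_self, mul_zero]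

theorem blockDist_comm (t : ℕ → ℝ) (x y : ∀ k, E k) : blockDist t x y = blockDist t y x := by
  rw [blockDist, blockDist, firstDiff_comm, dist_comm]

theorem blockDist_eq {x y : ∀ k, E k} {k : ℕ} (h : y ∈ cylinder x k) (hne : x k ≠ y k) :
    blockDist t x y = t k * dist (x k) (y k) := by
  have hxy : x ≠ y := fun hxy ↦ hne (congrFun hxy k)
  have hk : firstDiff x y = k :=
    le_antisymm (not_lt.mp fun hlt ↦ hne (apply_eq_of_lt_firstDiff hlt))
      ((mem_cylinder_iff_le_firstDiff hxy k).mp ((mem_cylinder_comm x y k).mp h))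
  rw [blockDist, hk]

theorem blockDist_update (t : ℕ → ℝ) (x : ∀ k, E k) (k : ℕ) (p q : E k) :
    blockDist t (Function.update x k p) (Function.update x k q) = t k * dist p q := by
  rcases eq_or_ne p q with rfl | hpq
  · rw [blockDist_self, dist_self, mul_zero]
  · rw [blockDist_eq (k := k) _ (by simpa using hpq), Function.update_self, Function.update_self]
    exact mem_cylinder_iff.mpr fun i hi ↦ by simp [hi.ne]

namespace IsBlockSequence

variable (h : IsBlockSequence E t D)
include h

theorem blockDist_nonneg (x y : ∀ k, E k) : 0 ≤ blockDist t x y :=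
  mul_nonneg (h.scale_pos _).le dist_nonneg

theorem scale_le (k : ℕ) : t k ≤ t k * D k :=
  le_mul_of_one_le_right (h.scale_pos k).le (h.one_le_diam k)

theorem antitone_scale : Antitone t :=
  antitone_nat_of_succ_le fun k ↦ by
    linarith [h.scale_pos k, h.scale_le (k + 1), h.decay k]

theorem antitone_scale_mul_diam : Antitone fun k ↦ t k * D k :=
  antitone_nat_of_succ_le fun k ↦ by linarith [h.scale_pos k, h.scale_le k, h.decay k]

theorem le_one_of_mul_scale_le {c : ℝ} {k : ℕ} (hc : c * t k ≤ t (k + 1) * D (k + 1)) : c ≤ 1 :=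
  le_of_mul_le_mul_right (by linarith [h.decay k, h.scale_pos k]) (h.scale_pos k)

theorem scale_mul_diam_le (k : ℕ) : t k * D k ≤ t 0 * D 0 * (1 / 2) ^ k := by
  induction k with
  | zero => simp
  | succ k ih => rw [pow_succ]; linarith [h.scale_le k, h.decay k]

theorem exists_scale_mul_diam_lt {r : ℝ} (hr : 0 < r) : ∃ k, t k * D k < r := by
  have htend : Tendsto (fun k : ℕ ↦ t 0 * D 0 * (1 / 2 : ℝ) ^ k) atTop (𝓝 0) := by
    simpa using (tendsto_pow_atTop_nhds_zero_of_lt_one (r := (1 / 2 : ℝ))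
      (by norm_num) (by norm_num)).const_mul (t 0 * D 0)
  obtain ⟨k, hk⟩ := (htend.eventually_lt_const hr).exists
  exact ⟨k, (h.scale_mul_diam_le k).trans_lt hk⟩

theorem scale_mul_dist_le {x y : ∀ k, E k} {k : ℕ} (hy : y ∈ cylinder x k) :
    t k * dist (x k) (y k) ≤ blockDist t x y := by
  rcases eq_or_ne (x k) (y k) with hxy | hxy
  · rw [hxy, dist_self, mul_zero]
    exact h.blockDist_nonneg x y
  · exact (blockDist_eq hy hxy).ge

theorem blockDist_le_of_mem_cylinder {x y : ∀ k, E k} {k : ℕ} (hy : y ∈ cylinder x k) :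
    blockDist t x y ≤ t k * D k := by
  rcases eq_or_ne x y with rfl | hxy
  · rw [blockDist_self]
    exact (h.scale_pos k).le.trans (h.scale_le k)
  · calc blockDist t x y ≤ t (firstDiff x y) * D (firstDiff x y) :=
          mul_le_mul_of_nonneg_left (h.dist_le _ _ _) (h.scale_pos _).le
      _ ≤ t k * D k := h.antitone_scale_mul_diam <|
          (mem_cylinder_iff_le_firstDiff hxy k).mp ((mem_cylinder_comm x y k).mp hy)

theorem blockDist_le_max {x y : ∀ k, E k} {k : ℕ} (hy : y ∈ cylinder x k) :
    blockDist t x y ≤ max (t k * dist (x k) (y k)) (t (k + 1) * D (k + 1)) := by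
  rcases eq_or_ne (x k) (y k) with hxy | hxy
  · refine le_max_of_le_right (h.blockDist_le_of_mem_cylinder (mem_cylinder_iff.mpr fun i hi ↦ ?_))
    rcases Nat.lt_succ_iff_lt_or_eq.mp hi with hi | rfl
    exacts [hy i hi, hxy.symm]
  · exact le_max_of_le_left (blockDist_eq hy hxy).le

theorem mem_cylinder_succ_of_lt {x y : ∀ k, E k} {k : ℕ} (hxy : blockDist t x y < t k) :
    y ∈ cylinder x (k + 1) := by
  rcases eq_or_ne x y with rfl | hne
  · exact self_mem_cylinder x _
  rw [mem_cylinder_comm, mem_cylinder_iff_le_firstDiff hne, Nat.succ_le_iff]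
  by_contra! hk
  have hdist := h.one_le_dist _ _ _ (apply_firstDiff_ne hne)
  exact hxy.not_ge <| (h.antitone_scale hk).trans <|
    le_mul_of_one_le_right (h.scale_pos _).le hdist

theorem mem_cylinder_of_lt_two_mul {x y : ∀ k, E k} {k : ℕ}
    (hxy : blockDist t x y < 2 * (t k * D k)) : y ∈ cylinder x k := by
  cases k with
  | zero => exact mem_cylinder_iff.mpr fun i hi ↦ absurd hi i.not_lt_zero
  | succ k => exact h.mem_cylinder_succ_of_lt (by linarith [h.decay k])

theorem blockDist_triangle (x y z : ∀ k, E k) :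
    blockDist t x z ≤ blockDist t x y + blockDist t y z := by
  set k := firstDiff x z
  have hz : z ∈ cylinder x k := by rw [mem_cylinder_comm]; exact mem_cylinder_firstDiff x z
  by_cases hy : y ∈ cylinder x k
  · have hyz : z ∈ cylinder y k := by rwa [mem_cylinder_iff_eq.mp hy]
    calc blockDist t x z = t k * dist (x k) (z k) := rfl
      _ ≤ t k * (dist (x k) (y k) + dist (y k) (z k)) :=
          mul_le_mul_of_nonneg_left (dist_triangle _ _ _) (h.scale_pos k).le
      _ ≤ blockDist t x y + blockDist t y z := by
          rw [mul_add]
          exact add_le_add (h.scale_mul_dist_le hy) (h.scale_mul_dist_le hyz)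
  · have hxy := not_lt.mp (mt h.mem_cylinder_of_lt_two_mul hy)
    linarith [h.blockDist_le_of_mem_cylinder hz, h.blockDist_nonneg y z, h.scale_pos k,
      h.scale_le k]

theorem eq_of_blockDist_eq_zero {x y : ∀ k, E k} (hxy : blockDist t x y = 0) : x = y :=
  funext fun k ↦
    (h.mem_cylinder_succ_of_lt (hxy.trans_lt (h.scale_pos k)) k k.lt_succ_self).symm

end IsBlockSequence

/-- The metric on `X` pulled back from `blockDist t` along an injective coding of the points of `X`
by sequences. -/
abbrev blockMetricSpace {X : Type*} {f : X → ∀ k, E k} (hf : Function.Injective f)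
    (h : IsBlockSequence E t D) : MetricSpace X where
  dist x y := blockDist t (f x) (f y)
  dist_self x := blockDist_self t (f x)
  dist_comm x y := blockDist_comm t (f x) (f y)
  dist_triangle x y z := h.blockDist_triangle (f x) (f y) (f z)
  eq_of_dist_eq_zero hxy := hf (h.eq_of_blockDist_eq_zero hxy)

end BlockDist

/-- A metric space is coded by `f` if `f` identifies it with the space of all sequences with
`k`-th entry in `E k`, equipped with `blockDist t`. -/
structure IsBlockCoding {X : Type*} [MetricSpace X] {E : ℕ → Type*} [∀ k, MetricSpace (E k)]
    (f : X → ∀ k, E k) (t D : ℕ → ℝ) : Prop extends IsBlockSequence E t D where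
  surjective : Function.Surjective f
  dist_eq : ∀ x y, dist x y = blockDist t (f x) (f y)

namespace IsBlockCoding

variable {X : Type*} [M : MetricSpace X] {E : ℕ → Type*} [∀ k, MetricSpace (E k)]
  {f : X → ∀ k, E k} {t D : ℕ → ℝ}

theorem nhds_hasBasis (hf : IsBlockCoding f t D) (x : X) :
    (𝓝 x).HasBasis (fun _ : ℕ ↦ True) fun k ↦ f ⁻¹' cylinder (f x) k := by
  refine nhds_basis_ball.to_hasBasis (fun r hr ↦ ?_) fun k _ ↦ ⟨t k, hf.scale_pos k, fun y hy ↦ ?_⟩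
  · obtain ⟨k, hk⟩ := hf.exists_scale_mul_diam_lt hr
    refine ⟨k, trivial, fun y hy ↦ ?_⟩
    rw [mem_ball', hf.dist_eq]
    exact (hf.blockDist_le_of_mem_cylinder hy).trans_lt hk
  · rw [mem_ball', hf.dist_eq] at hy
    exact cylinder_anti _ k.le_succ (hf.mem_cylinder_succ_of_lt hy)

theorem metricTopology_eq_induced (hf : IsBlockCoding f t D) :
    metricTopology M = .induced f Pi.topologicalSpace := by
  have (k : ℕ) : DiscreteTopology (E k) := .of_forall_le_dist one_pos (hf.one_le_dist k)
  refine (isInducing_iff_nhds.mpr fun x ↦ (hf.nhds_hasBasis x).ext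
    (((isTopologicalBasis_cylinders E).nhds_hasBasis).comap f) (fun k _ ↦ ?_) ?_).eq_induced
  · exact ⟨_, ⟨⟨f x, k, rfl⟩, self_mem_cylinder _ k⟩, subset_rfl⟩
  · rintro _ ⟨⟨y, k, rfl⟩, hx⟩
    exact ⟨k, trivial, by rw [mem_cylinder_iff_eq.mp hx]⟩

theorem exists_apply_eq_update (hf : IsBlockCoding f t D) (x : X) (k : ℕ) :
    ∃ g : E k → X, ∀ p, f (g p) = Function.update (f x) k p :=
  ⟨fun p ↦ (hf.surjective (Function.update (f x) k p)).choose,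
    fun p ↦ (hf.surjective (Function.update (f x) k p)).choose_spec⟩

theorem eventually_exists_similar_copy (hf : IsBlockCoding f t D) {x : X} {s : Set X}
    (hs : s ∈ 𝓝 x) :
    ∀ᶠ k in atTop, ∃ g : E k → s, ∀ p q, dist (g p) (g q) = t k * dist p q := by
  obtain ⟨K, -, hK⟩ := (hf.nhds_hasBasis x).mem_iff.mp hs
  filter_upwards [eventually_ge_atTop K] with k hk
  obtain ⟨g, hg⟩ := hf.exists_apply_eq_update x k
  refine ⟨fun p ↦ ⟨g p, hK ?_⟩, fun p q ↦ ?_⟩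
  · rw [mem_preimage, hg]
    exact cylinder_anti _ hk (update_mem_cylinder _ k p)
  · rw [Subtype.dist_eq, hf.dist_eq, hg, hg, blockDist_update]

theorem exists_mem_cylinder_of_dist_le (hf : IsBlockCoding f t D) {r : ℝ} (hr : 0 < r) :
    ∃ k, t (k + 1) * D (k + 1) ≤ r ∧ ∀ x y, dist x y ≤ 2 * r → f y ∈ cylinder (f x) k := by
  classical
  have hex : ∃ k, t (k + 1) * D (k + 1) ≤ r := by
    obtain ⟨k, hk⟩ := hf.exists_scale_mul_diam_lt hr
    exact ⟨k, (hf.antitone_scale_mul_diam k.le_succ).trans hk.le⟩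
  refine ⟨Nat.find hex, Nat.find_spec hex, fun x y hxy ↦ ?_⟩
  rw [hf.dist_eq] at hxy
  cases hk : Nat.find hex with
  | zero => rw [cylinder_zero]; exact mem_univ _
  | succ k =>
    have hlt := not_le.mp (Nat.find_min hex (by omega : k < _))
    exact hf.mem_cylinder_of_lt_two_mul (by linarith)

theorem isDoubling (hf : IsBlockCoding f t D) {N : ℕ} (h : ∀ k, IsDoublingWith (E k) N) :
    IsDoubling X := by
  classical
  refine ⟨N + 1, fun x r ↦ ?_⟩
  rcases le_or_gt r 0 with hr | hr
  · exact ⟨{x}, by simp, by simpa using closedBall_subset_closedBall (by linarith)⟩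
  obtain ⟨k, hk, hcyl⟩ := hf.exists_mem_cylinder_of_dist_le (half_pos hr)
  obtain ⟨g, hg⟩ := hf.exists_apply_eq_update x k
  obtain ⟨c, hcard, hcov⟩ := h k (f x k) (r / t k)
  refine ⟨c.image g, Finset.card_image_le.trans (by omega), fun y hy ↦ ?_⟩
  rw [mem_closedBall'] at hy
  have hy_cyl : f y ∈ cylinder (f x) k := hcyl x y (by linarith)
  have hy_coord : f y k ∈ closedBall (f x k) (r / t k) := by
    rw [mem_closedBall', le_div_iff₀' (hf.scale_pos k)]
    exact (hf.scale_mul_dist_le hy_cyl).trans (hf.dist_eq x y ▸ hy)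
  obtain ⟨p, hp, hyp⟩ := mem_iUnion₂.mp (hcov hy_coord)
  refine mem_iUnion₂.mpr ⟨g p, Finset.mem_image_of_mem g hp, ?_⟩
  have hgp_cyl : f (g p) ∈ cylinder (f y) k := by
    rw [hg, mem_cylinder_iff_eq.mp hy_cyl]
    exact update_mem_cylinder _ k p
  rw [mem_closedBall, div_right_comm, le_div_iff₀' (hf.scale_pos k)] at hyp
  rw [mem_closedBall, hf.dist_eq]
  refine (hf.blockDist_le_max hgp_cyl).trans (max_le ?_ hk)
  rwa [hg, Function.update_self]

theorem SD_eq_univ (hf : IsBlockCoding f t D)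
    (h : ∀ N, ∃ᶠ k in atTop, ¬ IsDoublingWith (E k) N) : SD X = univ := by
  rw [eq_univ_iff_forall]
  rintro x s hs ⟨N, hN⟩
  obtain ⟨k, hk, g, hg⟩ :=
    ((h (N ^ 2)).and_eventually (hf.eventually_exists_similar_copy hs)).exists
  exact hk (IsDoublingWith.of_similarity hN (hf.scale_pos k) hg)

theorem isUniformlyDisconnected (hf : IsBlockCoding f t D) {δ : ℝ} (hδ : 0 < δ) (hδ1 : δ < 1)
    (h : ∀ k, IsUniformlyDisconnectedWith (E k) δ) : IsUniformlyDisconnected X := by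
  refine ⟨δ, hδ, hδ1, fun N x hx ↦ ?_⟩
  have hstep (i : ℕ) (hi : i + 1 ≤ N) : dist (x i) (x (i + 1)) ≤ δ * dist (x 0) (x N) :=
    hx (i + 1) (by omega) hi
  suffices hends : x 0 = x N from
    apply_eq_apply_zero_of_step fun i hi ↦ dist_le_zero.mp (by simpa [← hends] using hstep i hi)
  by_contra hne
  have hdist_pos : 0 < dist (x 0) (x N) := dist_pos.mpr hne
  -- The whole chain agrees before the first index `k` separating its ends, so that its `k`-th
  -- entries form a `δ`-chain in `E k`.
  set k := firstDiff (f (x 0)) (f (x N)) with hk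
  have hends : dist (x 0) (x N) = t k * dist (f (x 0) k) (f (x N) k) := hf.dist_eq _ _
  have hcyl (i : ℕ) (hi : i + 1 ≤ N) : f (x (i + 1)) ∈ cylinder (f (x i)) k := by
    have hle : dist (x 0) (x N) ≤ t k * D k :=
      hends ▸ mul_le_mul_of_nonneg_left (hf.dist_le _ _ _) (hf.scale_pos k).le
    refine hf.mem_cylinder_of_lt_two_mul ?_
    rw [← hf.dist_eq]
    nlinarith [hstep i hi]
  have hchain := h k N (fun i ↦ f (x i) k) fun i hi hiN ↦ ?_
  · have := hchain N le_rfl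
    rw [hends, this, dist_self, mul_zero] at hdist_pos
    exact hdist_pos.false
  · obtain ⟨i, rfl⟩ := Nat.exists_eq_add_of_le' hi
    refine le_of_mul_le_mul_left ?_ (hf.scale_pos k)
    calc t k * dist (f (x i) k) (f (x (i + 1)) k) ≤ dist (x i) (x (i + 1)) :=
          (hf.scale_mul_dist_le (hcyl i hiN)).trans (hf.dist_eq _ _).ge
      _ ≤ δ * dist (x 0) (x N) := hstep i hiN
      _ = t k * (δ * dist (f (x 0) k) (f (x N) k)) := by rw [hends]; ring

theorem SUD_eq_univ (hf : IsBlockCoding f t D)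
    (h : ∀ δ, 0 < δ → δ < 1 → ∃ᶠ k in atTop, ¬ IsUniformlyDisconnectedWith (E k) δ) :
    SUD X = univ := by
  rw [eq_univ_iff_forall]
  rintro x s hs ⟨δ, hδ, hδ1, hs_ud⟩
  obtain ⟨k, hk, g, hg⟩ :=
    ((h δ hδ hδ1).and_eventually (hf.eventually_exists_similar_copy hs)).exists
  exact hk (hs_ud.of_similarity (hf.scale_pos k) hg)

theorem dist_le_scale_mul_diam (hf : IsBlockCoding f t D) (x y : X) : dist x y ≤ t 0 * D 0 := by
  rw [hf.dist_eq]
  exact hf.blockDist_le_of_mem_cylinder (by rw [cylinder_zero]; exact mem_univ _)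

theorem exists_scale_le (hf : IsBlockCoding f t D) {c r : ℝ} (hc : 0 ≤ c)
    (hstep : ∀ k, c * t k ≤ t (k + 1) * D (k + 1)) (hr : 0 < r) (hrX : r < diam (univ : Set X)) :
    ∃ k, t k ≤ r ∧ c * r ≤ t k * D k := by
  classical
  have hr0 : r < t 0 * D 0 := hrX.trans_le <| diam_le_of_forall_dist_le
    ((hf.scale_pos 0).le.trans (hf.scale_le 0)) fun x _ y _ ↦ hf.dist_le_scale_mul_diam x y
  have hex : ∃ k, t k ≤ r :=
    (hf.exists_scale_mul_diam_lt hr).imp fun k hk ↦ (hf.scale_le k).trans hk.le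
  refine ⟨Nat.find hex, Nat.find_spec hex, ?_⟩
  cases hk : Nat.find hex with
  | zero => nlinarith [hf.le_one_of_mul_scale_le (hstep 0)]
  | succ k =>
    have hlt := not_le.mp (Nat.find_min hex (by omega : k < _))
    exact (mul_le_mul_of_nonneg_left hlt.le hc).trans (hstep k)

theorem isUniformlyPerfect (hf : IsBlockCoding f t D) {ρ c : ℝ} (hρ : 0 < ρ) (hρ1 : ρ ≤ 1)
    (hc : 0 < c) (hstep : ∀ k, c * t k ≤ t (k + 1) * D (k + 1))
    (hE : ∀ k (p : E k) (R : ℝ), 1 ≤ R → R ≤ D k → ∃ q, ρ * R ≤ dist p q ∧ dist p q ≤ R) :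
    IsUniformlyPerfect X := by
  have hc1 : c ≤ 1 := hf.le_one_of_mul_scale_le (hstep 0)
  refine ⟨ρ * c, mul_pos hρ hc, mul_le_one₀ hρ1 hc.le hc1, fun x r hr hrX ↦ ?_⟩
  obtain ⟨k, hkr, hrk⟩ := hf.exists_scale_le hc.le hstep hr hrX
  have ht := hf.scale_pos k
  obtain ⟨q, hq, hq'⟩ := hE k (f x k) (min (r / t k) (D k))
    (le_min ((one_le_div ht).mpr hkr) (hf.one_le_diam k)) (min_le_right _ _)
  obtain ⟨g, hg⟩ := hf.exists_apply_eq_update x k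
  have hdist : dist x (g q) = t k * dist (f x k) q := by
    rw [hf.dist_eq, hg]
    simpa using blockDist_update t (f x) k (f x k) q
  refine ⟨g q, ?_, ?_⟩
  · rw [mem_closedBall', hdist, ← le_div_iff₀' ht]
    exact hq'.trans (min_le_left _ _)
  · rw [mem_ball', not_lt, hdist]
    calc ρ * c * r ≤ ρ * min r (t k * D k) := by
          rw [mul_assoc]
          exact mul_le_mul_of_nonneg_left (le_min (by nlinarith) hrk) hρ.le
      _ = t k * (ρ * min (r / t k) (D k)) := by
          rw [mul_left_comm, mul_min_of_nonneg _ _ ht.le, mul_div_cancel₀ _ ht.ne']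
      _ ≤ t k * dist (f x k) q := mul_le_mul_of_nonneg_left hq ht.le

theorem dist_le_of_lt_scale (hf : IsBlockCoding f t D) {x y : X} {k : ℕ} (h : dist x y < t k) :
    dist x y ≤ t (k + 1) * D (k + 1) := by
  rw [hf.dist_eq] at h ⊢
  exact hf.blockDist_le_of_mem_cylinder (hf.mem_cylinder_succ_of_lt h)

theorem SUP_eq_univ [∀ k, Nontrivial (E k)] (hf : IsBlockCoding f t D)
    (h : ∀ c > 0, ∃ᶠ k in atTop, t (k + 1) * D (k + 1) ≤ c * t k) : SUP X = univ := by
  rw [eq_univ_iff_forall]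
  rintro x s hs ⟨ρ, hρ, -, hs_perfect⟩
  obtain ⟨k, hk, g, hg⟩ :=
    ((h (ρ / 4) (by positivity)).and_eventually (hf.eventually_exists_similar_copy hs)).exists
  have ht := hf.scale_pos k
  obtain ⟨p, q, hpq⟩ := exists_pair_ne (E k)
  have hdiam : t k / 2 < diam (univ : Set s) := by
    have hbdd : Bornology.IsBounded (univ : Set s) :=
      isBounded_iff.mpr ⟨t 0 * D 0, fun y _ z _ ↦ hf.dist_le_scale_mul_diam y z⟩
    calc t k / 2 < t k * dist p q := by nlinarith [hf.one_le_dist k p q hpq]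
      _ = dist (g p) (g q) := (hg p q).symm
      _ ≤ diam univ := dist_le_diam_of_mem hbdd (mem_univ _) (mem_univ _)
  obtain ⟨y, hy_le, hy_ge⟩ := hs_perfect (g p) (t k / 2) (by positivity) hdiam
  rw [mem_closedBall, Subtype.dist_eq] at hy_le
  rw [mem_ball, Subtype.dist_eq, not_lt] at hy_ge
  nlinarith [hf.dist_le_of_lt_scale (k := k) (x := y) (y := g p) (by linarith)]

end IsBlockCoding

section Grid

/-- The grid of side `ℓ` in the coordinates `ι`, that is the cube `{0, …, ℓ - 1} ^ ι` with the
supremum metric. -/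
abbrev Grid (ι : Type*) (ℓ : ℕ) : Type _ := ι → Iio ℓ

variable {ι : Type*} [Fintype ι] {ℓ : ℕ}

theorem Grid.one_le_dist (p q : Grid ι ℓ) (hpq : p ≠ q) : 1 ≤ dist p q := by
  obtain ⟨i, hi⟩ := Function.ne_iff.mp hpq
  exact (Nat.pairwise_one_le_dist (Subtype.coe_injective.ne hi)).trans (dist_le_pi_dist p q i)

theorem Grid.dist_le (hℓ : 1 ≤ ℓ) (p q : Grid ι ℓ) : dist p q ≤ ℓ - 1 := by
  have hℓ' : (1 : ℝ) ≤ ℓ := mod_cast hℓ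
  refine (dist_pi_le_iff (by linarith)).mpr fun i ↦ ?_
  have hp : ((p i : ℕ) : ℝ) + 1 ≤ ℓ := mod_cast (p i).2
  have hq : ((q i : ℕ) : ℝ) + 1 ≤ ℓ := mod_cast (q i).2
  rw [Subtype.dist_eq, Nat.dist_eq, abs_le]
  constructor <;> linarith [(p i : ℕ).cast_nonneg (α := ℝ), (q i : ℕ).cast_nonneg (α := ℝ)]

theorem isDoublingWith_grid (ι : Type*) [Fintype ι] (ℓ : ℕ) :
    IsDoublingWith (Grid ι ℓ) (4 ^ Fintype.card ι) := by
  have hIio : IsDoublingWith (Iio ℓ) (2 ^ 2) :=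
    isDoublingWith_real.of_similarity (g := fun i ↦ ((i : ℕ) : ℝ)) one_pos fun i j ↦
      (one_mul (dist i j)).symm
  exact hIio.pi

theorem two_pow_card_le_of_isDoublingWith_grid (hℓ : 2 ≤ ℓ) {N : ℕ}
    (h : IsDoublingWith (Grid ι ℓ) N) : 2 ^ Fintype.card ι ≤ N ^ 2 := by
  classical
  have toNat_injective : Function.Injective Bool.toNat := by decide
  let corner (b : ι → Bool) : Grid ι ℓ := fun i ↦ ⟨(b i).toNat, (b i).toNat_lt.trans_le hℓ⟩
  have hinj : Function.Injective corner := fun b b' hbb' ↦ funext fun i ↦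
    toNat_injective (congrArg Subtype.val (congrFun hbb' i))
  rw [← Fintype.card_bool, ← Fintype.card_fun]
  refine h.card_le_sq_of_separated (z := corner) (x := corner fun _ ↦ false) (r := 1)
    (fun b ↦ (dist_pi_le_iff zero_le_one).mpr fun i ↦ ?_) fun b b' hbb' ↦ ?_
  · rw [Subtype.dist_eq, Nat.dist_eq]
    cases hb : b i <;> simp [corner, hb]
  · linarith [Grid.one_le_dist _ _ (hinj.ne hbb')]

theorem isUniformlyDisconnectedWith_grid (ι : Type*) [Fintype ι] (hℓ : 1 ≤ ℓ) {δ : ℝ} (hδ : 0 ≤ δ)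
    (hδℓ : δ * (ℓ - 1) < 1) : IsUniformlyDisconnectedWith (Grid ι ℓ) δ :=
  .of_one_le_dist hδ hδℓ Grid.one_le_dist (Grid.dist_le hℓ)

theorem not_isUniformlyDisconnectedWith_grid [Nonempty ι] (hℓ : 2 ≤ ℓ) {δ : ℝ}
    (hδ : 1 ≤ δ * (ℓ - 1)) : ¬ IsUniformlyDisconnectedWith (Grid ι ℓ) δ := by
  let diagonal (i : ℕ) : Grid ι ℓ := fun _ ↦ ⟨min i (ℓ - 1), mem_Iio.mpr (by omega)⟩
  have hdist {i j : ℕ} (hi : i ≤ ℓ - 1) (hj : j ≤ ℓ - 1) :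
      dist (diagonal i) (diagonal j) = |(i : ℝ) - j| := by
    simp only [diagonal, dist_pi_const, Subtype.dist_eq, Nat.dist_eq, min_eq_left hi,
      min_eq_left hj]
  have hends : dist (diagonal 0) (diagonal (ℓ - 1)) = ℓ - 1 := by
    rw [hdist (Nat.zero_le _) le_rfl, ← Nat.cast_pred (by omega)]
    simp
  intro h
  have hconst : diagonal (ℓ - 1) = diagonal 0 := by
    refine h (ℓ - 1) diagonal (fun i hi hiℓ ↦ ?_) (ℓ - 1) le_rfl
    obtain ⟨i, rfl⟩ := Nat.exists_eq_add_of_le' hi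
    rw [hends, Nat.add_sub_cancel, hdist (by omega) hiℓ]
    simpa using hδ
  rw [hconst, dist_self] at hends
  have : (2 : ℝ) ≤ ℓ := mod_cast hℓ
  linarith

theorem exists_dist_mem_Icc_Iio (i : Iio ℓ) {R : ℝ} (hR : 1 ≤ R) (hRℓ : R ≤ ℓ - 1) :
    ∃ j : Iio ℓ, R / 4 ≤ dist i j ∧ dist i j ≤ R := by
  obtain ⟨i, hi : i < ℓ⟩ := i
  set m := (⌊R⌋₊ + 1) / 2
  have hfloor_pos : 1 ≤ ⌊R⌋₊ := Nat.one_le_floor_iff _ |>.mpr hR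
  have hfloor_le : (⌊R⌋₊ : ℝ) ≤ R := Nat.floor_le (by linarith)
  have hfloor_lt : ⌊R⌋₊ + 1 ≤ ℓ := by
    have : (⌊R⌋₊ : ℝ) + 1 ≤ ℓ := by linarith
    exact_mod_cast this
  have hm_le : (m : ℝ) ≤ R := le_trans (mod_cast (by omega : m ≤ ⌊R⌋₊)) hfloor_le
  have hm_ge : R / 4 ≤ m := by
    have h1 : ((⌊R⌋₊ : ℕ) : ℝ) ≤ 2 * m := mod_cast (by omega : ⌊R⌋₊ ≤ 2 * m)
    have h2 : (1 : ℝ) ≤ m := mod_cast (by omega : 1 ≤ m)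
    linarith [Nat.lt_floor_add_one R]
  obtain ⟨j, hj, hij⟩ : ∃ j < ℓ, dist i j = m := by
    rcases lt_or_ge (i + m) ℓ with him | him
    · exact ⟨i + m, him, by rw [Nat.dist_eq]; simp⟩
    · have hmi : m ≤ i := by omega
      exact ⟨i - m, by omega, by rw [Nat.dist_eq, Nat.cast_sub hmi]; simp⟩
  exact ⟨⟨j, hj⟩, hij ▸ hm_ge, hij ▸ hm_le⟩

theorem Grid.exists_dist_mem_Icc [Nonempty ι] (p : Grid ι ℓ) {R : ℝ} (hR : 1 ≤ R)
    (hRℓ : R ≤ ℓ - 1) : ∃ q : Grid ι ℓ, R / 4 ≤ dist p q ∧ dist p q ≤ R := by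
  choose q hq_ge hq_le using fun i ↦ exists_dist_mem_Icc_Iio (p i) hR hRℓ
  obtain ⟨i⟩ := ‹Nonempty ι›
  exact ⟨q, (hq_ge i).trans (dist_le_pi_dist p q i),
    (dist_pi_le_iff (by linarith)).mpr hq_le⟩

end Grid

section CantorSpace

theorem exists_homeomorph_pi_of_card {E : ℕ → Type*} [∀ k, TopologicalSpace (E k)]
    [∀ k, DiscreteTopology (E k)] [∀ k, Finite (E k)] {n : ℕ → ℕ} (hn : ∀ k, n k ≠ 0)
    (hcard : ∀ k, Nat.card (E k) = 2 ^ n k) : Nonempty ((ℕ → Bool) ≃ₜ ∀ k, E k) := by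
  have (k : ℕ) : NeZero (n k) := ⟨hn k⟩
  have hblock (k : ℕ) : Nonempty ((Fin (n k) → Bool) ≃ E k) :=
    Finite.card_eq.mp (by simp [hcard])
  obtain ⟨code⟩ : Nonempty (ℕ ≃ Σ k, Fin (n k)) := nonempty_equiv_of_countable
  let curry : ((Σ k, Fin (n k)) → Bool) ≃ₜ ∀ k, Fin (n k) → Bool :=
    { toEquiv := Equiv.piCurry fun _ _ ↦ Bool
      continuous_toFun := continuous_pi fun k ↦ continuous_pi fun i ↦
        continuous_apply (⟨k, i⟩ : Σ k, Fin (n k))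
      continuous_invFun := continuous_pi fun i ↦
        (continuous_apply i.2).comp (continuous_apply i.1) }
  exact ⟨(Homeomorph.piCongrLeft (Y := fun _ ↦ Bool) code).trans <| curry.trans <|
    Homeomorph.piCongrRight fun k ↦ (hblock k).some.toHomeomorphOfDiscrete⟩

theorem exists_metricSpace_isBlockCoding {X : Type*} [τ : TopologicalSpace X] {E : ℕ → Type*}
    [∀ k, MetricSpace (E k)] {t D : ℕ → ℝ} (hE : IsBlockSequence E t D) (e : X ≃ₜ ∀ k, E k) :
    ∃ M : MetricSpace X, metricTopology M = τ ∧ IsBlockCoding e t D := by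
  have hcoding : @IsBlockCoding X (blockMetricSpace e.injective hE) E _ e t D :=
    @IsBlockCoding.mk X (_) E _ _ _ _ hE e.surjective fun _ _ ↦ rfl
  exact ⟨_, (hcoding.metricTopology_eq_induced (M := _)).trans e.isInducing.eq_induced.symm,
    hcoding⟩

end CantorSpace

section BlockScale

/-- The scales for which the copy of the block `k + 1`, of diameter `D (k + 1)`, has diameter
`ε k` times the scale of the block `k`. -/
def blockScale (ε D : ℕ → ℝ) : ℕ → ℝ
  | 0 => 1
  | k + 1 => ε k * blockScale ε D k / D (k + 1)

variable {ε D : ℕ → ℝ}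

theorem blockScale_succ_mul (hD : ∀ k, 1 ≤ D k) (k : ℕ) :
    blockScale ε D (k + 1) * D (k + 1) = ε k * blockScale ε D k :=
  div_mul_cancel₀ _ (by linarith [hD (k + 1)])

theorem blockScale_pos (hD : ∀ k, 1 ≤ D k) (hε : ∀ k, 0 < ε k) (k : ℕ) : 0 < blockScale ε D k := by
  induction k with
  | zero => exact one_pos
  | succ k ih => exact div_pos (mul_pos (hε k) ih) (by linarith [hD (k + 1)])

end BlockScale

theorem isBlockSequence_grid (ι : ℕ → Type*) [∀ k, Fintype (ι k)] {ℓ : ℕ → ℕ} (hℓ : ∀ k, 2 ≤ ℓ k)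
    {ε : ℕ → ℝ} (hε : ∀ k, 0 < ε k) (hε' : ∀ k, ε k ≤ 1 / 2) :
    IsBlockSequence (fun k ↦ Grid (ι k) (ℓ k)) (blockScale ε fun k ↦ ℓ k - 1) fun k ↦ ℓ k - 1 := by
  have hD (k : ℕ) : (1 : ℝ) ≤ ℓ k - 1 := by
    have : (2 : ℝ) ≤ ℓ k := mod_cast hℓ k
    linarith
  refine ⟨blockScale_pos hD hε, fun k ↦ Grid.one_le_dist,
    fun k ↦ Grid.dist_le (one_le_two.trans (hℓ k)), hD, fun k ↦ ?_⟩
  rw [blockScale_succ_mul hD]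
  nlinarith [hε' k, blockScale_pos hD hε k]

theorem exists_metricSpace_isBlockCoding_grid (ι : ℕ → Type*) [∀ k, Fintype (ι k)]
    [∀ k, Nonempty (ι k)] (m : ℕ → ℕ) {ε : ℕ → ℝ} (hε : ∀ k, 0 < ε k) (hε' : ∀ k, ε k ≤ 1 / 2) :
    ∃ (M : MetricSpace (ℕ → Bool)) (f : (ℕ → Bool) → ∀ k, Grid (ι k) (2 ^ (m k + 1))),
      metricTopology M = Pi.topologicalSpace ∧
      IsBlockCoding f (blockScale ε fun k ↦ (2 ^ (m k + 1) : ℕ) - 1)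
        fun k ↦ (2 ^ (m k + 1) : ℕ) - 1 := by
  obtain ⟨e⟩ := exists_homeomorph_pi_of_card (E := fun k ↦ Grid (ι k) (2 ^ (m k + 1)))
    (n := fun k ↦ (m k + 1) * Nat.card (ι k)) (by simp) fun k ↦ by
      rw [Nat.card_fun, pow_mul]
      simp
  obtain ⟨M, hM⟩ := exists_metricSpace_isBlockCoding
    (isBlockSequence_grid ι (fun k ↦ le_self_pow₀ one_le_two (m k).succ_ne_zero) hε hε') e
  exact ⟨M, e, hM⟩

section GridCoding

variable {X : Type*} [MetricSpace X] {ι : ℕ → Type*} [∀ k, Fintype (ι k)] {ℓ : ℕ → ℕ}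
  {f : X → ∀ k, Grid (ι k) (ℓ k)} {t D : ℕ → ℝ}

namespace IsBlockCoding

theorem isDoubling_of_card_le (hf : IsBlockCoding f t D) {d : ℕ}
    (hd : ∀ k, Fintype.card (ι k) ≤ d) : IsDoubling X :=
  hf.isDoubling fun k ↦
    (isDoublingWith_grid (ι k) (ℓ k)).mono (Nat.pow_le_pow_right (by norm_num) (hd k))

theorem SD_eq_univ_of_tendsto_card (hf : IsBlockCoding f t D) (hℓ : ∀ k, 2 ≤ ℓ k)
    (hcard : Tendsto (fun k ↦ Fintype.card (ι k)) atTop atTop) : SD X = univ := by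
  refine hf.SD_eq_univ fun N ↦ Eventually.frequently ?_
  filter_upwards [hcard.eventually_ge_atTop (N ^ 2)] with k hk hN
  exact (hk.trans_lt (Nat.lt_two_pow_self.trans_le
    (two_pow_card_le_of_isDoublingWith_grid (hℓ k) hN))).false

theorem isUniformlyDisconnected_of_side_le (hf : IsBlockCoding f t D) (hℓ : ∀ k, 1 ≤ ℓ k) {L : ℕ}
    (hL : 2 ≤ L) (hℓL : ∀ k, ℓ k ≤ L) : IsUniformlyDisconnected X := by
  have hL' : (2 : ℝ) ≤ L := mod_cast hL
  refine hf.isUniformlyDisconnected (δ := 1 / L) (by positivity)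
    ((div_lt_one (by linarith)).mpr (by linarith)) fun k ↦
      isUniformlyDisconnectedWith_grid (ι k) (hℓ k) (by positivity) ?_
  have hk : (ℓ k : ℝ) ≤ L := mod_cast hℓL k
  rw [one_div_mul_eq_div, div_lt_one (by linarith)]
  linarith

theorem SUD_eq_univ_of_tendsto_side [∀ k, Nonempty (ι k)] (hf : IsBlockCoding f t D)
    (hℓ : Tendsto ℓ atTop atTop) : SUD X = univ := by
  refine hf.SUD_eq_univ fun δ hδ _ ↦ Eventually.frequently ?_
  have hlarge := (tendsto_natCast_atTop_atTop.comp hℓ).eventually_ge_atTop (1 / δ + 1)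
  filter_upwards [hlarge, hℓ.eventually_ge_atTop 2] with k hk hk2
  refine not_isUniformlyDisconnectedWith_grid hk2 ?_
  rw [← div_le_iff₀' hδ]
  exact le_sub_iff_add_le.mpr hk

theorem isUniformlyPerfect_of_le [∀ k, Nonempty (ι k)] {ε : ℕ → ℝ}
    (hf : IsBlockCoding f (blockScale ε fun k ↦ ℓ k - 1) fun k ↦ ℓ k - 1) {c : ℝ} (hc : 0 < c)
    (hcε : ∀ k, c ≤ ε k) : IsUniformlyPerfect X := by
  refine hf.isUniformlyPerfect (ρ := 1 / 4) (by norm_num) (by norm_num) hc (fun k ↦ ?_)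
    fun k p R hR hRD ↦ ?_
  · rw [blockScale_succ_mul hf.one_le_diam]
    exact mul_le_mul_of_nonneg_right (hcε k) (hf.scale_pos k).le
  · rw [one_div_mul_eq_div]
    exact Grid.exists_dist_mem_Icc p hR hRD

theorem SUP_eq_univ_of_tendsto [∀ k, Nonempty (ι k)] {ε : ℕ → ℝ}
    (hf : IsBlockCoding f (blockScale ε D) D) (hℓ : ∀ k, 2 ≤ ℓ k) (hε : Tendsto ε atTop (𝓝 0)) :
    SUP X = univ := by
  have (k : ℕ) : Nontrivial (Iio (ℓ k)) :=
    ⟨⟨0, two_pos.trans_le (hℓ k)⟩, ⟨1, one_lt_two.trans_le (hℓ k)⟩,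
      Subtype.coe_ne_coe.mp zero_ne_one⟩
  refine hf.SUP_eq_univ fun c hc ↦ Eventually.frequently ?_
  filter_upwards [hε.eventually_le_const hc] with k hk
  rw [blockScale_succ_mul hf.one_le_diam]
  exact mul_le_mul_of_nonneg_right hk (hf.scale_pos k).le

end IsBlockCoding

end GridCoding

theorem statement_1_general (u v w : Bool) :
    ∃ m : MetricSpace (ℕ → Bool),
      metricTopology m = Pi.topologicalSpace ∧
      @HasType (ℕ → Bool) m u v w ∧
      (u = false → @SD (ℕ → Bool) m = Set.univ) ∧
      (v = false → @SUD (ℕ → Bool) m = Set.univ) ∧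
      (w = false → @SUP (ℕ → Bool) m = Set.univ) := by
  let d (k : ℕ) := cond u 0 k
  let m (k : ℕ) := cond v 0 k
  let ε (k : ℕ) : ℝ := cond w (1 / 2) (1 / (k + 2))
  have hε (k : ℕ) : 0 < ε k ∧ ε k ≤ 1 / 2 := by
    cases w
    · exact ⟨one_div_pos.mpr (by positivity), one_div_le_one_div_of_le two_pos (by simp)⟩
    · exact ⟨one_half_pos, le_rfl⟩
  obtain ⟨M, f, htop, hf⟩ := exists_metricSpace_isBlockCoding_grid (fun k ↦ Fin (d k + 1)) m
    (fun k ↦ (hε k).1) fun k ↦ (hε k).2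
  have hside (k : ℕ) : 2 ≤ 2 ^ (m k + 1) := le_self_pow₀ one_le_two (m k).succ_ne_zero
  have hSD (hu : u = false) : SD (ℕ → Bool) = univ := hf.SD_eq_univ_of_tendsto_card hside <| by
    simpa [d, hu] using tendsto_add_atTop_nat 1
  have hSUD (hv : v = false) : SUD (ℕ → Bool) = univ := hf.SUD_eq_univ_of_tendsto_side <| by
    simpa [m, hv, Function.comp_def] using
      (tendsto_pow_atTop_atTop_of_one_lt one_lt_two).comp (tendsto_add_atTop_nat 1)
  have hSUP (hw : w = false) : SUP (ℕ → Bool) = univ := hf.SUP_eq_univ_of_tendsto hside <| by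
    simpa [ε, hw, add_assoc, one_add_one_eq_two] using
      (tendsto_add_atTop_iff_nat 1).mpr (tendsto_one_div_add_atTop_nhds_zero_nat (𝕜 := ℝ))
  have hD (hu : u = true) := hf.isDoubling_of_card_le (d := 1) fun k ↦ by simp [d, hu]
  have hUD (hv : v = true) := hf.isUniformlyDisconnected_of_side_le
    (fun k ↦ one_le_two.trans (hside k)) le_rfl fun k ↦ by simp [m, hv]
  have hUP (hw : w = true) := hf.isUniformlyPerfect_of_le one_half_pos fun k ↦ by simp [ε, hw]
  exact ⟨M, htop, hasType_of_eq_univ hD hSD hUD hSUD hUP hSUP, hSD, hSUD, hSUP⟩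

theorem statement_1 (u v w : Bool) (h : (u, v, w) ≠ (true, true, true)) :
    ∃ m : MetricSpace (ℕ → Bool),
      metricTopology m = Pi.topologicalSpace ∧
      @HasType (ℕ → Bool) m u v w ∧
      (u = false → @SD (ℕ → Bool) m = Set.univ) ∧
      (v = false → @SUD (ℕ → Bool) m = Set.univ) ∧
      (w = false → @SUP (ℕ → Bool) m = Set.univ) :=
  statement_1_general u v w

end
end

section
/- For every pair (a,b) ∈ [0,∞]² with a ≤ b, there exists a metric space (X,d) whose underlying topological space is a Cantor space (homeomorphic to the middle-third Cantor set) such that the Hausdorff dimension of (X,d) equals a and the Assouad dimension of (X,d) equals b. -/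
open Metric Set
open scoped ENNReal NNReal

noncomputable section

/-!
Metrize `2^ℕ` by `d_α` with `α n = 2 ^ (-(v 0 + ⋯ + v (n - 1)))`. A cylinder of length `m` has
diameter `α m` and splits into `2 ^ k` cylinders of diameter `α (m + k)`, so whether it behaves
`s`-dimensionally is decided by the sums of `1 - s * v i` over `m ≤ i < m + k`. The Hausdorff
dimension sees only the initial sums (`m = 0`), and those only along a subsequence of `k`, while the
Assouad dimension sees all of them. Hence weights tending to `1 / a` off a sparse union of ever
longer runs, and to `1 / b` along these runs, separate the two dimensions. Truncating the weights
includes the values `0` and `∞`.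
-/

open Filter Topology MeasureTheory

section HausdorffDimension

variable {X : Type*} [EMetricSpace X]

theorem dimH_univ_le_of_frequently_card_mul_rpow_le {ι : Type*} {l : Filter ι} {κ : ι → Type*}
    [∀ i, Fintype (κ i)] {t : ∀ i, κ i → Set X} {r : ι → ℝ≥0∞} {s C : ℝ≥0}
    (hr : Tendsto r l (𝓝 0)) (ht : ∀ i j, ediam (t i j) ≤ r i) (hcover : ∀ i, ⋃ j, t i j = univ)
    (h : ∃ᶠ i in l, Fintype.card (κ i) * r i ^ (s : ℝ) ≤ C) :
    dimH (univ : Set X) ≤ s := by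
  borelize X
  refine dimH_le_of_hausdorffMeasure_ne_top (ne_top_of_le_ne_top (ENNReal.coe_ne_top (r := C)) ?_)
  refine (Measure.hausdorffMeasure_le_liminf_sum s univ r hr t (.of_forall ht)
    (.of_forall fun i => (hcover i).ge)).trans (liminf_le_of_frequently_le' ?_)
  refine h.mono fun i hi => le_trans ?_ hi
  calc ∑ j, ediam (t i j) ^ (s : ℝ)
      ≤ ∑ _j : κ i, r i ^ (s : ℝ) :=
        Finset.sum_le_sum fun j _ => ENNReal.rpow_le_rpow (ht i j) s.coe_nonneg
    _ = Fintype.card (κ i) * r i ^ (s : ℝ) := by simp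

theorem le_dimH_univ_of_holderWith_of_Icc_subset_range {f : X → ℝ} {C s : ℝ≥0}
    (hf : HolderWith C s f) (hs : 0 < s) (hrange : Icc 0 1 ⊆ range f) :
    s ≤ dimH (univ : Set X) := by
  have dimH_Icc : dimH (Icc (0 : ℝ) 1) = 1 := by
    rw [Real.dimH_of_nonempty_interior (by simp), Module.finrank_self, Nat.cast_one]
  have one_le : 1 ≤ dimH (univ : Set X) / s :=
    dimH_Icc ▸ (dimH_mono hrange).trans (hf.dimH_range_le hs)
  simpa using ENNReal.mul_le_of_le_div one_le

end HausdorffDimension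

section AssouadDimension

/-- The covering condition behind the Assouad dimension: each closed ball of radius `r` is covered
by at most `K * ε ^ (-s)` closed balls of radius `ε * r`. Such spaces are called
`(K, s)`-homogeneous; the range `ε < 2` is the one chosen in `assouadDim`. -/
def IsHomogeneous (X : Type*) [MetricSpace X] (K s : ℝ) : Prop :=
  ∀ ε : ℝ, 0 < ε → ε < 2 → ∀ r : ℝ, 0 < r → ∀ x : X,
    ∃ c : Finset X, (c.card : ℝ) ≤ K * ε ^ (-s) ∧
      Metric.closedBall x r ⊆ ⋃ y ∈ c, Metric.closedBall y (ε * r)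

variable {X : Type*} [MetricSpace X] {K s : ℝ}

theorem IsHomogeneous.assouadDim_le (h : IsHomogeneous X K s) (hs : 0 < s) (hK : 0 < K) :
    assouadDim X ≤ ENNReal.ofReal s :=
  sInf_le ⟨s, hs, rfl, K, hK, h⟩

theorem le_assouadDim_of_forall_isHomogeneous {b : ℝ≥0∞}
    (h : ∀ K s : ℝ, 0 < s → IsHomogeneous X K s → b ≤ ENNReal.ofReal s) : b ≤ assouadDim X := by
  refine le_sInf ?_
  rintro _ ⟨s, hs, rfl, K, -, hX⟩
  exact h K s hs hX

theorem IsHomogeneous.card_le_of_pairwise_lt_dist (h : IsHomogeneous X K s) {ι : Type*} [Fintype ι]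
    {f : ι → X} {x : X} {ε r : ℝ} (hε : 0 < ε) (hε2 : ε < 2) (hr : 0 < r)
    (hball : ∀ i, f i ∈ Metric.closedBall x r)
    (hsep : Pairwise fun i j => 2 * (ε * r) < dist (f i) (f j)) :
    (Fintype.card ι : ℝ) ≤ K * ε ^ (-s) := by
  obtain ⟨c, hc, hcover⟩ := h ε hε hε2 r hr x
  have exists_center : ∀ i, ∃ y ∈ c, dist (f i) y ≤ ε * r := fun i => by
    simpa using hcover (hball i)
  choose g hgc hg using exists_center
  have g_injective : Function.Injective g := by
    intro i j hij
    by_contra hne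
    have := dist_triangle_right (f i) (f j) (g i)
    linarith [hsep hne, hg i, hij ▸ hg j]
  have card_le : Fintype.card ι ≤ c.card :=
    Finset.card_le_card_of_injOn g (fun i _ => hgc i) g_injective.injOn
  exact (Nat.cast_le.2 card_le).trans hc

end AssouadDimension

section Splice

variable {A : Type*} {k : ℕ}

/-- The sequence `x` with the word `w` written over its entries `x m, …, x (m + k - 1)`; such
sequences represent the cylinders of length `m + k` inside the cylinder of length `m` at `x`. -/
def splice (x : ℕ → A) (m : ℕ) (w : Fin k → A) : ℕ → A :=
  fun i => if h : m ≤ i ∧ i - m < k then w ⟨i - m, h.2⟩ else x i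

theorem splice_mem_cylinder (x : ℕ → A) (m : ℕ) (w : Fin k → A) :
    splice x m w ∈ PiNat.cylinder x m :=
  fun _ hi => dif_neg fun h => hi.not_ge h.1

theorem splice_apply_add (x : ℕ → A) (m : ℕ) (w : Fin k → A) (j : Fin k) :
    splice x m w (m + j) = w j := by
  simp [splice]

theorem mem_cylinder_splice {x y : ℕ → A} {m : ℕ} (hy : y ∈ PiNat.cylinder x m) (k : ℕ) :
    y ∈ PiNat.cylinder (splice x m fun j : Fin k => y (m + j)) (m + k) := by
  intro i hi
  rcases lt_or_ge i m with him | him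
  · rw [splice_mem_cylinder x m _ i him, hy i him]
  · obtain ⟨j, rfl⟩ := Nat.exists_eq_add_of_le him
    exact (splice_apply_add x m (fun j : Fin k => y (m + j)) ⟨j, Nat.lt_of_add_lt_add_left hi⟩).symm

theorem exists_finset_cylinder_subset_iUnion_cylinder [Fintype A] (x : ℕ → A) (m k : ℕ) :
    ∃ c : Finset (ℕ → A), c.card ≤ Fintype.card A ^ k ∧
      PiNat.cylinder x m ⊆ ⋃ y ∈ c, PiNat.cylinder y (m + k) := by
  classical
  refine ⟨Finset.univ.image fun w : Fin k → A => splice x m w, ?_, fun y hy => ?_⟩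
  · simpa using Finset.card_image_le (s := Finset.univ) (f := fun w : Fin k → A => splice x m w)
  · exact mem_iUnion₂.2 ⟨_, Finset.mem_image_of_mem _ (Finset.mem_univ _), mem_cylinder_splice hy k⟩

end Splice

theorem mem_cylinder_iff_le_seqV {x y : ℕ → Bool} (hxy : x ≠ y) {n : ℕ} :
    y ∈ PiNat.cylinder x n ↔ n ≤ seqV x y := by
  have hne : {n | x n ≠ y n}.Nonempty := Function.ne_iff.1 hxy
  refine ⟨fun hy => le_csInf hne fun i hi => ?_, fun hn i hi => ?_⟩
  · exact not_lt.1 fun hin => hi (hy i hin).symm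
  · by_contra hyx
    exact (hi.trans_le hn).not_ge (Nat.sInf_le (Ne.symm hyx))

namespace IsShrinking

variable {α : ℕ → ℝ}

theorem exists_le_forall_lt (hα : IsShrinking α) {r : ℝ} (hr : 0 < r) :
    ∃ n, α n ≤ r ∧ ∀ i < n, r < α i := by
  have exists_le : ∃ n, α n ≤ r := (hα.2.2.eventually_le_const hr).exists
  exact ⟨Nat.find exists_le, Nat.find_spec exists_le, fun i hi => not_le.1 (Nat.find_min _ hi)⟩

theorem two_pow_sub_le (hα : IsShrinking α) {s C ε r : ℝ} {m n : ℕ} (hs : 0 < s) (hC : 0 ≤ C)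
    (h : ∀ m k, (2 : ℝ) ^ k * α (m + k) ^ s ≤ C * α m ^ s) (hε : 0 < ε) (hε2 : ε < 2) (hr : 0 < r)
    (hm : α m ≤ r) (hn : ∀ i < n, ε * r < α i) :
    (2 : ℝ) ^ (n - m) ≤ (2 ^ s + 2 * C) * ε ^ (-s) := by
  have hεs : 0 < ε ^ s := Real.rpow_pos_of_pos hε s
  have hrs : 0 < r ^ s := Real.rpow_pos_of_pos hr s
  rw [Real.rpow_neg hε.le, ← div_eq_mul_inv, le_div_iff₀ hεs]
  rcases hnm : n - m with _ | k
  · have : ε ^ s ≤ 2 ^ s := Real.rpow_le_rpow hε.le hε2.le hs.le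
    linarith
  · have hmk : ε * r < α (m + k) := hn _ (by lia)
    have key : 2 ^ k * ε ^ s * r ^ s ≤ C * r ^ s := calc
      2 ^ k * ε ^ s * r ^ s = 2 ^ k * (ε * r) ^ s := by rw [Real.mul_rpow hε.le hr.le, mul_assoc]
      _ ≤ 2 ^ k * α (m + k) ^ s := by gcongr
      _ ≤ C * α m ^ s := h m k
      _ ≤ C * r ^ s := by gcongr; exact (hα.1 m).le
    have := le_of_mul_le_mul_right key hrs
    have : (0 : ℝ) < 2 ^ s := by positivity
    rw [pow_succ]
    linarith

end IsShrinking

/-- The sequentially metrized Cantor space `(2^ℕ, d_α)` as a type of its own, so that `d_α` does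
not compete with the product structure on `ℕ → Bool`. -/
def SeqSpace (α : ℕ → ℝ) (_ : IsShrinking α) : Type := ℕ → Bool

instance (α : ℕ → ℝ) (hα : IsShrinking α) : MetricSpace (SeqSpace α hα) :=
  seqMetricSpace α hα

namespace SeqSpace

section Metric

variable {α : ℕ → ℝ} {hα : IsShrinking α}

theorem dist_eq_of_ne {x y : SeqSpace α hα} (hxy : x ≠ y) : dist x y = α (seqV x y) :=
  seqDist_of_ne α hxy

theorem dist_le_of_mem_cylinder {x y : SeqSpace α hα} {n : ℕ} (h : y ∈ PiNat.cylinder x n) :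
    dist x y ≤ α n := by
  rcases eq_or_ne x y with rfl | hxy
  · exact (dist_self x).trans_le (hα.1 n).le
  · rw [dist_eq_of_ne hxy]
    exact hα.2.1 _ _ ((mem_cylinder_iff_le_seqV hxy).1 h)

theorem mem_cylinder_succ_of_dist_lt {x y : SeqSpace α hα} {n : ℕ} (h : dist x y < α n) :
    y ∈ PiNat.cylinder x (n + 1) := by
  rcases eq_or_ne x y with rfl | hxy
  · exact PiNat.self_mem_cylinder _ _
  · rw [dist_eq_of_ne hxy] at h
    exact (mem_cylinder_iff_le_seqV hxy).2 (not_le.1 fun hle => h.not_ge (hα.2.1 _ _ hle))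

theorem mem_closedBall_of_mem_cylinder {x y : SeqSpace α hα} {n : ℕ} {r : ℝ}
    (hy : y ∈ PiNat.cylinder x n) (h : α n ≤ r) : y ∈ Metric.closedBall x r :=
  Metric.mem_closedBall'.2 ((dist_le_of_mem_cylinder hy).trans h)

theorem closedBall_subset_cylinder (x : SeqSpace α hα) {n : ℕ} {r : ℝ} (h : ∀ i < n, r < α i) :
    Metric.closedBall x r ⊆ PiNat.cylinder x n := fun y hy i hi => by
  have hlt : dist x y < α i := (Metric.mem_closedBall'.1 hy).trans_lt (h i hi)
  exact mem_cylinder_succ_of_dist_lt hlt i i.lt_succ_self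

theorem ediam_cylinder_le (x : SeqSpace α hα) (n : ℕ) :
    ediam (X := SeqSpace α hα) (PiNat.cylinder x n) ≤ ENNReal.ofReal (α n) := by
  refine Metric.ediam_le_of_forall_dist_le (α := SeqSpace α hα) fun y hy z hz => ?_
  exact dist_le_of_mem_cylinder (hα := hα) fun i hi => (hz i hi).trans (hy i hi).symm

theorem isCantorSpace : IsCantorSpace (SeqSpace α hα) := by
  let e : (ℕ → Bool) ≃ SeqSpace α hα := Equiv.refl _
  have he : Continuous e := by
    refine continuous_iff_continuousAt.2 fun x => Metric.continuousAt_iff'.2 fun ε hε => ?_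
    obtain ⟨n, hn⟩ := (hα.2.2.eventually_lt_const hε).exists
    have cylinder_mem_nhds : PiNat.cylinder x n ∈ 𝓝 x :=
      (PiNat.isOpen_cylinder (fun _ => Bool) x n).mem_nhds (PiNat.self_mem_cylinder x n)
    filter_upwards [cylinder_mem_nhds] with y hy
    rw [dist_comm]
    exact (dist_le_of_mem_cylinder (x := e x) hy).trans_lt hn
  exact ⟨he.homeoOfEquivCompactToT2.symm.trans cantorSetHomeomorphNatToBool.symm⟩

theorem hausdorffDim_le_of_frequently {s C : ℝ≥0}
    (h : ∃ᶠ n in atTop, (2 : ℝ) ^ n * α n ^ (s : ℝ) ≤ C) :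
    hausdorffDim (SeqSpace α hα) ≤ s := by
  let base : SeqSpace α hα := fun _ => false
  refine dimH_univ_le_of_frequently_card_mul_rpow_le (X := SeqSpace α hα) (C := C)
    (r := fun n => ENNReal.ofReal (α n))
    (t := fun n (w : Fin n → Bool) => PiNat.cylinder (splice base 0 w) n)
    ?_ (fun n w => ediam_cylinder_le _ n) (fun n => ?_) (h.mono fun n hn => ?_)
  · simpa using ENNReal.tendsto_ofReal hα.2.2
  · refine eq_univ_of_forall fun x => mem_iUnion.2 ⟨fun j => x (0 + j), ?_⟩
    have hx : x ∈ PiNat.cylinder base 0 := fun i hi => absurd hi i.not_lt_zero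
    have hx_splice := mem_cylinder_splice hx n
    rwa [zero_add] at hx_splice
  · calc (Fintype.card (Fin n → Bool) : ℝ≥0∞) * ENNReal.ofReal (α n) ^ (s : ℝ)
        = ENNReal.ofReal (2 ^ n * α n ^ (s : ℝ)) := by
          rw [ENNReal.ofReal_mul (by positivity), ENNReal.ofReal_rpow_of_pos (hα.1 n),
            ENNReal.ofReal_pow zero_le_two]
          simp
      _ ≤ C := ENNReal.ofReal_le_of_le_toReal hn

/-- Binary expansion; it maps `SeqSpace α hα` onto `[0, 1]`, and cylinders to dyadic intervals. -/
def binaryValue (x : SeqSpace α hα) : ℝ :=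
  Real.ofDigits fun i => finTwoEquiv.symm (x i)

theorem Icc_subset_range_binaryValue : Icc 0 1 ⊆ range (binaryValue (hα := hα)) := by
  intro z hz
  obtain ⟨d, -, rfl⟩ := Real.ofDigits_SurjOn one_lt_two hz
  exact ⟨fun i => finTwoEquiv (d i), by simp [binaryValue]⟩

theorem holderWith_binaryValue {s C : ℝ≥0} (h : ∀ n, ((2 : ℝ) ^ n)⁻¹ ≤ C * α n ^ (s : ℝ)) :
    HolderWith C s (binaryValue (hα := hα)) := by
  intro x y
  rcases eq_or_ne x y with rfl | hxy
  · simp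
  have agree : ∀ i < seqV x y, x i = y i := fun i hi =>
    ((mem_cylinder_iff_le_seqV hxy).2 le_rfl i hi).symm
  have hdist : |binaryValue x - binaryValue y| ≤ C * dist x y ^ (s : ℝ) := by
    rw [dist_eq_of_ne hxy]
    refine (Real.abs_ofDigits_sub_ofDigits_le fun i hi => ?_).trans (h _)
    rw [agree i hi]
  rw [edist_dist, edist_dist, ENNReal.ofReal_rpow_of_nonneg dist_nonneg s.coe_nonneg,
    ← ENNReal.ofReal_coe_nnreal, ← ENNReal.ofReal_mul C.coe_nonneg]
  exact ENNReal.ofReal_le_ofReal hdist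

theorem le_hausdorffDim_of_forall {s C : ℝ≥0} (hs : 0 < s)
    (h : ∀ n, ((2 : ℝ) ^ n)⁻¹ ≤ C * α n ^ (s : ℝ)) : s ≤ hausdorffDim (SeqSpace α hα) :=
  le_dimH_univ_of_holderWith_of_Icc_subset_range (holderWith_binaryValue h) hs
    Icc_subset_range_binaryValue

theorem isHomogeneous_of_forall {s C : ℝ} (hs : 0 < s) (hC : 0 ≤ C)
    (h : ∀ m k, (2 : ℝ) ^ k * α (m + k) ^ s ≤ C * α m ^ s) :
    IsHomogeneous (SeqSpace α hα) (2 ^ s + 2 * C) s := by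
  intro ε hε hε2 r hr x
  obtain ⟨m, hm, hm_min⟩ := hα.exists_le_forall_lt hr
  obtain ⟨n, hn, hn_min⟩ := hα.exists_le_forall_lt (mul_pos hε hr)
  obtain ⟨c, hcard, hcover⟩ := exists_finset_cylinder_subset_iUnion_cylinder x m (n - m)
  refine ⟨c, ?_, fun y hy => ?_⟩
  · refine (Nat.cast_le.2 hcard).trans ?_
    rw [Fintype.card_bool, Nat.cast_pow, Nat.cast_ofNat]
    exact hα.two_pow_sub_le hs hC h hε hε2 hr hm hn_min
  · obtain ⟨z, hzc, hyz⟩ := mem_iUnion₂.1 (hcover (closedBall_subset_cylinder x hm_min hy))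
    have hz : α (m + (n - m)) ≤ ε * r := (hα.2.1 n _ (by lia)).trans hn
    exact mem_iUnion₂.2 ⟨z, hzc, mem_closedBall_of_mem_cylinder hyz hz⟩

theorem two_pow_mul_rpow_le_of_isHomogeneous {K s : ℝ} (h : IsHomogeneous (SeqSpace α hα) K s)
    (m k : ℕ) : (2 : ℝ) ^ k * α (m + k) ^ s ≤ K * 4 ^ s * α m ^ s := by
  have hm := hα.1 m
  have hmk := hα.1 (m + k)
  let base : SeqSpace α hα := fun _ => false
  have separated : Pairwise fun w w' : Fin k → Bool =>
      α (m + k) ≤ dist (α := SeqSpace α hα) (splice base m w) (splice base m w') := by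
    refine fun w w' hne => not_lt.1 fun hlt => hne (funext fun j => ?_)
    have := mem_cylinder_succ_of_dist_lt hlt (m + j) (by lia)
    rwa [splice_apply_add, splice_apply_add, eq_comm] at this
  -- The cylinders lie in a ball of radius `α m`; the factor `4` makes them `2 * ε * α m`-separated.
  have hε : 2 * (α (m + k) / (4 * α m) * α m) < α (m + k) := by
    field_simp
    linarith
  have hε2 : α (m + k) / (4 * α m) < 2 := by
    rw [div_lt_iff₀ (by positivity)]
    linarith [hα.2.1 m (m + k) (m.le_add_right k)]
  have card_le := h.card_le_of_pairwise_lt_dist (by positivity) hε2 hm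
    (x := base) (f := fun w : Fin k → Bool => (splice base m w : ℕ → Bool))
    (fun w => mem_closedBall_of_mem_cylinder (splice_mem_cylinder base m w) le_rfl)
    (separated.mono fun w w' => hε.trans_le)
  rw [Fintype.card_fun, Fintype.card_bool, Fintype.card_fin, Nat.cast_pow, Nat.cast_ofNat,
    Real.rpow_neg (by positivity), Real.div_rpow hmk.le (by positivity),
    Real.mul_rpow (by norm_num) hm.le, inv_div, ← mul_div_assoc,
    le_div_iff₀ (by positivity)] at card_le
  rwa [mul_assoc]

end Metric

end SeqSpace

section Averages

theorem exists_forall_sum_range_add_le {f : ℕ → ℝ} (hf : ∀ᶠ i in atTop, f i ≤ 0) :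
    ∃ c, ∀ m k, ∑ i ∈ Finset.range k, f (m + i) ≤ c := by
  obtain ⟨n, hn⟩ := eventually_atTop.1 hf
  have pos_part_eq_zero : ∀ i ∉ Finset.range n, (f i)⁺ = 0 := fun i hi =>
    posPart_eq_zero.2 (hn i (by simpa using hi))
  have summable_pos_part : Summable fun i => (f i)⁺ :=
    summable_of_ne_finset_zero pos_part_eq_zero
  refine ⟨∑' i, (f i)⁺, fun m k => ?_⟩
  calc ∑ i ∈ Finset.range k, f (m + i)
      ≤ ∑ i ∈ Finset.range k, (f (m + i))⁺ := Finset.sum_le_sum fun i _ => le_posPart _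
    _ = ∑ i ∈ Finset.Ico m (m + k), (f i)⁺ := by
        rw [Finset.sum_Ico_eq_sum_range, Nat.add_sub_cancel_left]
    _ ≤ ∑' i, (f i)⁺ := summable_pos_part.sum_le_tsum _ fun i _ => posPart_nonneg _

/-- The set `{n | p n}` has lower density zero: along a subsequence of `n`, the proportion of
`i < n` satisfying `p` tends to zero. -/
def HasLowerDensityZero (p : ℕ → Prop) [DecidablePred p] : Prop :=
  ∀ ε : ℝ, 0 < ε → ∃ᶠ n in atTop, (Nat.count p n : ℝ) ≤ ε * n

theorem exists_forall_natCast_sub_count_le {p : ℕ → Prop} [DecidablePred p] {f : ℕ → ℝ}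
    (hf : ∀ i, 0 ≤ f i) (h : ∀ᶠ i in atTop, ¬ p i → 1 ≤ f i) :
    ∃ c, ∀ n : ℕ, (n : ℝ) - Nat.count p n ≤ c + ∑ i ∈ Finset.range n, f i := by
  have eventually_nonpos : ∀ᶠ i in atTop, 1 - (if p i then 1 else 0) - f i ≤ 0 := by
    filter_upwards [h] with i hi
    split_ifs with hpi
    · linarith [hf i]
    · linarith [hi hpi]
  obtain ⟨c, hc⟩ := exists_forall_sum_range_add_le eventually_nonpos
  refine ⟨c, fun n => ?_⟩
  have count_eq : (Nat.count p n : ℝ) = ∑ i ∈ Finset.range n, if p i then 1 else 0 := by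
    rw [Nat.count_eq_card_filter_range, Finset.sum_boole]
  have sum_le := hc 0 n
  simp only [zero_add, Finset.sum_sub_distrib, ← count_eq, Finset.sum_const, Finset.card_range,
    nsmul_eq_mul, mul_one] at sum_le
  linarith

theorem HasLowerDensityZero.frequently_le_mul_sum {p : ℕ → Prop} [DecidablePred p]
    (hp : HasLowerDensityZero p) {v : ℕ → ℝ} (hv : ∀ i, 0 ≤ v i) {s t : ℝ} (hs : 0 ≤ s)
    (hst : s < t) (h : ∀ᶠ i in atTop, ¬ p i → 1 ≤ s * v i) :
    ∃ᶠ n : ℕ in atTop, (n : ℝ) ≤ t * ∑ i ∈ Finset.range n, v i := by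
  have ht : 0 < t := hs.trans_lt hst
  obtain ⟨c, hc⟩ := exists_forall_natCast_sub_count_le (fun i => mul_nonneg hs (hv i)) h
  obtain ⟨ε, hε, hε1, hsε⟩ : ∃ ε > 0, 0 < 1 - 2 * ε ∧ s ≤ (1 - 2 * ε) * t := by
    refine ⟨(t - s) / (4 * t), div_pos (sub_pos.2 hst) (by positivity), ?_, ?_⟩
    · field_simp
      linarith
    · field_simp
      linarith
  have eventually_small : ∀ᶠ n : ℕ in atTop, c ≤ ε * n :=
    (tendsto_natCast_atTop_atTop.const_mul_atTop hε).eventually_ge_atTop _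
  refine ((hp ε hε).and_eventually eventually_small).mono ?_
  rintro n ⟨hcount, hsmall⟩
  have sum_nonneg : 0 ≤ ∑ i ∈ Finset.range n, v i := Finset.sum_nonneg fun i _ => hv i
  refine le_of_mul_le_mul_left ?_ hε1
  calc (1 - 2 * ε) * n
      ≤ n - Nat.count p n - c := by linarith
    _ ≤ ∑ i ∈ Finset.range n, s * v i := by linarith [hc n]
    _ = s * ∑ i ∈ Finset.range n, v i := (Finset.mul_sum ..).symm
    _ ≤ (1 - 2 * ε) * t * ∑ i ∈ Finset.range n, v i := by gcongr
    _ = (1 - 2 * ε) * (t * ∑ i ∈ Finset.range n, v i) := mul_assoc _ _ _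

end Averages

section WeightScale

/-- The scale sequence `2 ^ (-(v 0 + ⋯ + v (n - 1)))` with weights `v i`. In `(2^ℕ, d_α)` it makes
the `i`-th digit contribute local dimension `1 / v i`. -/
def weightScale (v : ℕ → ℝ≥0) (n : ℕ) : ℝ :=
  2 ^ (-∑ i ∈ Finset.range n, (v i : ℝ))

variable {v : ℕ → ℝ≥0}

theorem isShrinking_weightScale (hv : ¬ Summable v) : IsShrinking (weightScale v) := by
  refine ⟨fun n => by unfold weightScale; positivity, fun m n hmn => ?_, ?_⟩
  · refine Real.rpow_le_rpow_of_exponent_le one_le_two (neg_le_neg ?_)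
    exact Finset.sum_le_sum_of_subset_of_nonneg (Finset.range_mono hmn) fun i _ _ =>
      (v i).coe_nonneg
  · have sum_tendsto : Tendsto (fun n => ∑ i ∈ Finset.range n, (v i : ℝ)) atTop atTop := by
      exact_mod_cast NNReal.tendsto_coe_atTop.2 (NNReal.not_summable_iff_tendsto_nat_atTop.1 hv)
    exact (tendsto_rpow_atBot_of_base_gt_one 2 one_lt_two).comp
      (tendsto_neg_atTop_atBot.comp sum_tendsto)

theorem weightScale_zero : weightScale v 0 = 1 := by
  simp [weightScale]

theorem two_pow_mul_weightScale_add_rpow (m k : ℕ) (s : ℝ) :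
    2 ^ k * weightScale v (m + k) ^ s =
      2 ^ (∑ i ∈ Finset.range k, (1 - s * v (m + i))) * weightScale v m ^ s := by
  simp only [weightScale]
  rw [← Real.rpow_natCast, ← Real.rpow_mul zero_le_two, ← Real.rpow_mul zero_le_two,
    ← Real.rpow_add two_pos, ← Real.rpow_add two_pos, Finset.sum_range_add,
    Finset.sum_sub_distrib, ← Finset.mul_sum]
  congr 1
  simp only [Finset.sum_const, Finset.card_range, nsmul_eq_mul, mul_one]
  ring

theorem two_pow_mul_weightScale_rpow (n : ℕ) (s : ℝ) :
    2 ^ n * weightScale v n ^ s = 2 ^ (∑ i ∈ Finset.range n, (1 - s * v i)) := by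
  simpa [weightScale_zero] using two_pow_mul_weightScale_add_rpow (v := v) 0 n s

end WeightScale

theorem le_of_forall_nnreal_gt {a b : ℝ≥0∞} (h : ∀ r : ℝ≥0, b < r → a ≤ r) : a ≤ b := by
  refine le_of_forall_gt_imp_ge_of_dense fun c hbc => ?_
  obtain ⟨r, hbr, hrc⟩ := ENNReal.lt_iff_exists_nnreal_btwn.1 hbc
  exact (h r hbr).trans hrc.le

namespace SeqSpace

variable {v : ℕ → ℝ≥0} {hα : IsShrinking (weightScale v)} {s : ℝ≥0}

theorem le_hausdorffDim (h : ∀ᶠ i in atTop, s * v i ≤ 1) :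
    s ≤ hausdorffDim (SeqSpace (weightScale v) hα) := by
  rcases eq_zero_or_pos s with rfl | hs
  · simp
  obtain ⟨c, hc⟩ := exists_forall_sum_range_add_le (f := fun i => s * v i - 1)
    (h.mono fun i hi => sub_nonpos.2 (by exact_mod_cast hi))
  refine le_hausdorffDim_of_forall (C := (2 : ℝ≥0) ^ c) hs fun n => ?_
  rw [inv_le_iff_one_le_mul₀ (by positivity), mul_assoc, mul_comm (weightScale v n ^ _),
    two_pow_mul_weightScale_rpow]
  push_cast
  rw [← Real.rpow_add two_pos]
  refine Real.one_le_rpow one_le_two ?_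
  have := hc 0 n
  simp only [zero_add, Finset.sum_sub_distrib] at this ⊢
  linarith

theorem hausdorffDim_le {p : ℕ → Prop} [DecidablePred p] (hp : HasLowerDensityZero p)
    (h : ∀ᶠ i in atTop, ¬ p i → 1 ≤ s * v i) :
    hausdorffDim (SeqSpace (weightScale v) hα) ≤ s := by
  refine le_of_forall_nnreal_gt fun t hst => hausdorffDim_le_of_frequently (C := 1) ?_
  have frequently_le := hp.frequently_le_mul_sum (fun i => (v i).coe_nonneg) s.coe_nonneg
    (by exact_mod_cast hst : (s : ℝ) < t) (h.mono fun i hi hpi => by exact_mod_cast hi hpi)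
  refine frequently_le.mono fun n hn => ?_
  rw [two_pow_mul_weightScale_rpow]
  refine Real.rpow_le_one_of_one_le_of_nonpos one_le_two ?_
  simpa [Finset.sum_sub_distrib, ← Finset.mul_sum] using hn

theorem assouadDim_le (h : ∀ᶠ i in atTop, 1 ≤ s * v i) :
    assouadDim (SeqSpace (weightScale v) hα) ≤ s := by
  obtain ⟨i, hi⟩ := h.exists
  have hs : 0 < s := pos_of_mul_pos_left (zero_lt_one.trans_le hi) zero_le
  obtain ⟨c, hc⟩ := exists_forall_sum_range_add_le (f := fun i => 1 - s * v i)
    (h.mono fun i hi => sub_nonpos.2 (by exact_mod_cast hi))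
  have homogeneous : IsHomogeneous (SeqSpace (weightScale v) hα) (2 ^ (s : ℝ) + 2 * 2 ^ c) s := by
    refine isHomogeneous_of_forall (by exact_mod_cast hs) (by positivity) fun m k => ?_
    rw [two_pow_mul_weightScale_add_rpow]
    have := Real.rpow_nonneg (hα.1 m).le s
    gcongr
    · exact one_le_two
    · exact hc m k
  simpa using homogeneous.assouadDim_le (by exact_mod_cast hs) (by positivity)

theorem le_assouadDim (h : ∀ k, ∃ m, ∀ i < k, s * v (m + i) ≤ 1) :
    s ≤ assouadDim (SeqSpace (weightScale v) hα) := by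
  refine le_assouadDim_of_forall_isHomogeneous fun K t ht hX => ?_
  by_contra! hlt
  have hts : t < s := by
    simpa [ENNReal.ofReal_lt_coe_iff ht.le] using hlt
  have growth_pos : 0 < 1 - t / s := sub_pos.2 ((div_lt_one (ht.trans hts)).2 hts)
  obtain ⟨k, hk⟩ := pow_unbounded_of_one_lt (K * 4 ^ t) (Real.one_lt_rpow one_lt_two growth_pos)
  obtain ⟨m, hm⟩ := h k
  have sum_ge : (1 - t / s) * k ≤ ∑ i ∈ Finset.range k, (1 - t * v (m + i)) := by
    have hterm : ∀ i ∈ Finset.range k, 1 - t / s ≤ 1 - t * v (m + i) := fun i hi => by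
      have : (s : ℝ) * v (m + i) ≤ 1 := by exact_mod_cast hm i (Finset.mem_range.1 hi)
      have : t * v (m + i) ≤ t / s := by
        rw [le_div_iff₀ (ht.trans hts)]
        nlinarith
      linarith
    simpa [mul_comm] using Finset.card_nsmul_le_sum _ _ _ hterm
  have power_le := two_pow_mul_rpow_le_of_isHomogeneous hX m k
  rw [two_pow_mul_weightScale_add_rpow,
    mul_le_mul_iff_left₀ (Real.rpow_pos_of_pos (hα.1 m) t)] at power_le
  rw [← Real.rpow_mul_natCast zero_le_two] at hk
  exact (hk.trans_le (Real.rpow_le_rpow_of_exponent_le one_le_two sum_ge)).not_ge power_le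

end SeqSpace

section BlockWeight

/-- The truncation of `a⁻¹` to the interval `[1 / (i + 1), i + 1]`. It provides finite, divergent
weights that converge to `a⁻¹` also for `a = 0` and `a = ∞`. -/
def truncInv (a : ℝ≥0∞) (i : ℕ) : ℝ≥0 :=
  ((a⁻¹ ⊓ (i + 1)) ⊔ (i + 1)⁻¹).toNNReal

theorem coe_truncInv (a : ℝ≥0∞) (i : ℕ) :
    (truncInv a i : ℝ≥0∞) = (a⁻¹ ⊓ (i + 1)) ⊔ (i + 1)⁻¹ := by
  refine ENNReal.coe_toNNReal (sup_lt_iff.2 ⟨inf_lt_of_right_lt ?_, ?_⟩).ne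
  · simp
  · simp

theorem truncInv_antitone (i : ℕ) : Antitone fun a => truncInv a i := fun a b hab => by
  rw [← ENNReal.coe_le_coe, coe_truncInv, coe_truncInv]
  exact sup_le_sup_right (inf_le_inf_right _ (ENNReal.inv_le_inv.2 hab)) _

theorem inv_natCast_add_one_le_truncInv (a : ℝ≥0∞) (i : ℕ) : ((i : ℝ≥0) + 1)⁻¹ ≤ truncInv a i := by
  rw [← ENNReal.coe_le_coe, coe_truncInv, ENNReal.coe_inv (by positivity)]
  push_cast
  exact le_sup_right

theorem tendsto_truncInv (a : ℝ≥0∞) :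
    Tendsto (fun i => (truncInv a i : ℝ≥0∞)) atTop (𝓝 a⁻¹) := by
  have upper : Tendsto (fun i : ℕ => ((i : ℝ≥0∞) + 1)) atTop (𝓝 ∞) := by
    exact_mod_cast ENNReal.tendsto_nat_nhds_top.comp (tendsto_add_atTop_nat 1)
  have lower : Tendsto (fun i : ℕ => ((i : ℝ≥0∞) + 1)⁻¹) atTop (𝓝 0) := by
    simpa using tendsto_inv_iff.2 upper
  simpa [coe_truncInv] using (tendsto_const_nhds.inf_nhds upper).sup_nhds lower

theorem eventually_one_le_mul_truncInv {a : ℝ≥0∞} {s : ℝ≥0} (h : a < s) :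
    ∀ᶠ i in atTop, 1 ≤ s * truncInv a i := by
  have inv_lt : (s : ℝ≥0∞)⁻¹ < a⁻¹ := ENNReal.inv_lt_inv.2 h
  filter_upwards [(tendsto_truncInv a).eventually_const_lt inv_lt] with i hi
  have hs : (s : ℝ≥0∞) ≠ 0 := h.ne_bot
  rw [← ENNReal.coe_le_coe, ENNReal.coe_mul, ENNReal.coe_one]
  exact (ENNReal.inv_le_iff_le_mul (fun _ => hs) fun hs_top => absurd hs_top ENNReal.coe_ne_top).1
    hi.le

theorem eventually_mul_truncInv_le_one {a : ℝ≥0∞} {s : ℝ≥0} (h : s < a) :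
    ∀ᶠ i in atTop, s * truncInv a i ≤ 1 := by
  have lt_inv : a⁻¹ < (s : ℝ≥0∞)⁻¹ := ENNReal.inv_lt_inv.2 h
  filter_upwards [(tendsto_truncInv a).eventually_lt_const lt_inv] with i hi
  rw [← ENNReal.coe_le_coe, ENNReal.coe_mul, ENNReal.coe_one]
  exact (mul_le_mul_right hi.le _).trans (ENNReal.mul_inv_le_one _)

/-- Membership in one of the runs `[2 ^ j, 2 ^ j + j)`: they are arbitrarily long, but sparse.
The subtraction truncates only at `i = 0`, which is in no run. -/
def InLongRun (i : ℕ) : Prop :=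
  i - 2 ^ Nat.log 2 i < Nat.log 2 i

instance : DecidablePred InLongRun := fun _ => Nat.decLt _ _

theorem inLongRun_two_pow_add_iff {j i : ℕ} (hi : i < 2 ^ j) : InLongRun (2 ^ j + i) ↔ i < j := by
  have log_eq : Nat.log 2 (2 ^ j + i) = j :=
    Nat.log_eq_of_pow_le_of_lt_pow (by lia) (by rw [pow_succ]; lia)
  rw [InLongRun, log_eq, Nat.add_sub_cancel_left]

theorem count_inLongRun_two_pow_le (k : ℕ) : Nat.count InLongRun (2 ^ k) ≤ k ^ 2 := by
  induction k with
  | zero => decide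
  | succ k ih =>
    have run_subset :
        {i ∈ Finset.range (2 ^ k) | InLongRun (2 ^ k + i)} ⊆ Finset.range k := fun i hi => by
      obtain ⟨hi, hrun⟩ := Finset.mem_filter.1 hi
      exact Finset.mem_range.2 ((inLongRun_two_pow_add_iff (Finset.mem_range.1 hi)).1 hrun)
    have new_run : Nat.count (fun i => InLongRun (2 ^ k + i)) (2 ^ k) ≤ k := by
      simpa [Nat.count_eq_card_filter_range] using Finset.card_le_card run_subset
    rw [pow_succ, mul_two, Nat.count_add]
    nlinarith

theorem hasLowerDensityZero_inLongRun : HasLowerDensityZero InLongRun := by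
  intro ε hε
  have tendsto_zero : Tendsto (fun k : ℕ => (k : ℝ) ^ 2 / 2 ^ k) atTop (𝓝 0) :=
    tendsto_pow_const_div_const_pow_of_one_lt 2 one_lt_two
  refine (tendsto_pow_atTop_atTop_of_one_lt one_lt_two).frequently (Eventually.frequently ?_)
  filter_upwards [tendsto_zero.eventually_le_const hε] with k hk
  rw [div_le_iff₀ (by positivity)] at hk
  calc (Nat.count InLongRun (2 ^ k) : ℝ) ≤ (k : ℝ) ^ 2 := by
        exact_mod_cast count_inLongRun_two_pow_le k
    _ ≤ ε * (2 ^ k : ℕ) := by exact_mod_cast hk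

/-- Weights close to `b⁻¹` along the long runs and to `a⁻¹` elsewhere. -/
def blockWeight (a b : ℝ≥0∞) (i : ℕ) : ℝ≥0 :=
  truncInv (if InLongRun i then b else a) i

variable {a b : ℝ≥0∞}

theorem not_summable_blockWeight : ¬ Summable (blockWeight a b) := by
  intro h
  have summable_inv : Summable fun i : ℕ => ((i : ℝ≥0) + 1)⁻¹ :=
    NNReal.summable_of_le (fun i => inv_natCast_add_one_le_truncInv _ i) h
  refine Real.not_summable_natCast_inv ((summable_nat_add_iff 1).1 ?_)
  simpa using NNReal.summable_coe.2 summable_inv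

theorem blockWeight_of_inLongRun {i : ℕ} (hi : InLongRun i) : blockWeight a b i = truncInv b i := by
  rw [blockWeight, if_pos hi]

theorem blockWeight_of_not_inLongRun {i : ℕ} (hi : ¬ InLongRun i) :
    blockWeight a b i = truncInv a i := by
  rw [blockWeight, if_neg hi]

theorem blockWeight_le_truncInv (hab : a ≤ b) (i : ℕ) : blockWeight a b i ≤ truncInv a i := by
  refine truncInv_antitone i ?_
  split_ifs
  exacts [hab, le_rfl]

theorem truncInv_le_blockWeight (hab : a ≤ b) (i : ℕ) : truncInv b i ≤ blockWeight a b i := by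
  refine truncInv_antitone i ?_
  split_ifs
  exacts [le_rfl, hab]

/-- The sequentially metrized Cantor space with weights `blockWeight a b`. -/
abbrev BlockSpace (a b : ℝ≥0∞) : Type :=
  SeqSpace (weightScale (blockWeight a b)) (isShrinking_weightScale not_summable_blockWeight)

theorem hausdorffDim_blockSpace (hab : a ≤ b) : hausdorffDim (BlockSpace a b) = a := by
  refine le_antisymm (le_of_forall_nnreal_gt fun s hs => ?_)
    (ENNReal.le_of_forall_nnreal_lt fun s hs => ?_)
  · refine SeqSpace.hausdorffDim_le hasLowerDensityZero_inLongRun ?_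
    filter_upwards [eventually_one_le_mul_truncInv hs] with i hi hrun
    rwa [blockWeight_of_not_inLongRun hrun]
  · refine SeqSpace.le_hausdorffDim ?_
    filter_upwards [eventually_mul_truncInv_le_one hs] with i hi
    exact (mul_le_mul_right (blockWeight_le_truncInv hab i) s).trans hi

theorem assouadDim_blockSpace (hab : a ≤ b) : assouadDim (BlockSpace a b) = b := by
  refine le_antisymm (le_of_forall_nnreal_gt fun s hs => ?_)
    (ENNReal.le_of_forall_nnreal_lt fun s hs => ?_)
  · refine SeqSpace.assouadDim_le ?_
    filter_upwards [eventually_one_le_mul_truncInv hs] with i hi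
    exact hi.trans (mul_le_mul_right (truncInv_le_blockWeight hab i) s)
  · refine SeqSpace.le_assouadDim fun k => ?_
    obtain ⟨n, hn⟩ := eventually_atTop.1 (eventually_mul_truncInv_le_one hs)
    refine ⟨2 ^ (n + k), fun i hi => ?_⟩
    have hnk : n + k < 2 ^ (n + k) := Nat.lt_two_pow_self
    rw [blockWeight_of_inLongRun ((inLongRun_two_pow_add_iff (by lia)).2 (by lia))]
    exact hn _ (by lia)

end BlockWeight

theorem statement_2 (a b : ℝ≥0∞) (hab : a ≤ b) :
    ∃ (X : Type) (m : MetricSpace X),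
      @IsCantorSpace X (metricTopology m) ∧
      @hausdorffDim X m = a ∧ @assouadDim X m = b := by
  exact ⟨BlockSpace a b, inferInstance, SeqSpace.isCantorSpace, hausdorffDim_blockSpace hab,
    assouadDim_blockSpace hab⟩

end
end
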